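/- Let Ω ⊂ ℝⁿ be a domain satisfying condition (A_α), let p ∈ (n,∞), α = (p−n)/(p−1), and let η ≥ 41 be a constant. A function f : ∂_αΩ → ℝ is the trace tr F of some continuous F ∈ L¹_p(Ω) if and only if f is continuous with respect to the metric d̄_{α,clΩ} and there exists a constant λ > 0 such that for every finite family {Q_i : i = 1,…,m} of pairwise disjoint cubes in Ω and every choice of points x_i, y_i ∈ (ηQ_i) ∩ ∂_αΩ which are Q_i-visible in Ω, one has Σ_{i=1}^m |f(x_i) − f(y_i)|^p/(diam Q_i)^{p−n} ≤ λ. Moreover, the infimum of ‖F‖_{L¹_p(Ω)} over all continuous F ∈ L¹_p(Ω) with tr F = f is equivalent to the infimum of λ^{1/p} over all admissible λ, with constants of equivalence depending only on n, p and η. -/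

import Mathlib

/-!
# Traces of Sobolev functions to the subhyperbolic boundary

Let `p > n` and `α = (p - n) / (p - 1)`. The proof rests on Morrey's inequality `morrey`, which
bounds the oscillation of `F` on a cube of radius `r` inside `Ω` by
`C * r ^ (1 - n / p) * ‖∇F‖_{L_p(cube)}`. It is obtained by differentiating the mollification of
`F` with respect to its scale, and testing the weak gradient against a radial field.

*Traces satisfy the variational condition* (`varCond_of_rep`). If `x` is visible from
`Q(c, r)` and lies in `Q(c, η * r)`, then the points `ray θ x c k = x + θ ^ k • (c - x)` are the
centres of a chain of cubes of radii `θ ^ k * r / 2` in `Ω` that shrinks to `x`. Telescoping Morrey's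
inequality along the chain and applying Hölder's inequality with geometric weights bounds
`|F c - f x| ^ p / r ^ (p - n)` by a geometrically weighted sum of the integrals of `‖∇F‖ ^ p`
over these cubes (`chain_estimate`). For fixed `k`, the `k`-th cubes of the chains issuing from
disjoint cubes have bounded overlap (`chain_overlap`), so the total over all chains is at most
`C * ‖∇F‖_p ^ p`.

*Traces are continuous for `dBar`* (`contWrtDBar_of_rep`). A curve in `Ω` is covered by Whitney
cubes. The image of the curve under `F` is connected, so `|F a - F b|` is at most the sum of the
oscillations of `F` on the cubes meeting the curve. As `α * (1 - 1 / p) = 1 - n / p`, Hölder's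
inequality and bounded overlap show that `F` is Hölder continuous of exponent `1 - 1 / p` with
respect to `dTil` (`modulus`). To pass to the boundary, `exists_bridge` produces, for boundary
points with `dBar Ω α x y < δ`, sequences accessing `x` and `y` that stay within `dSub`-distance
`δ` of each other. For `α < 1` they are limits along an ultrafilter of points on nearly optimal
curves: a curve of bounded subhyperbolic length cannot stay near `∂Ω`, and this gives the
compactness needed (`access_limit`). For `α = 1` the dimension is one and `Ω` is an interval.

*The variational condition is sufficient* (`exists_extension`). Choose a Whitney family of centres
`c` and, for each, a nearest boundary point `a c`. This point is visible from a small cube about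
`c`, as it is from the cubes of the neighbours of `c` (`qVisible_nearest`). The extension is the
average of the values `f (a c)` against a smooth partition of unity
(`exists_whitney_extension`). Its gradient near `c` is at most a constant times the largest jump
`|f (a e) - f (a c)|` over neighbours `e`, divided by `bdist Ω c`. The cubes `Q(c, bdist Ω c / 20)`
are disjoint and their dilations by `η ≥ 41` contain `a e` and `a c`, so the variational condition
bounds the integral of `‖∇F‖ ^ p`. If a sequence accesses `x`, the points `a c` belonging to nearby
centres converge to `x` for `dBar` (`dBar_nearest_tendsto`), so continuity of `f` identifies the
trace. When `∂Ω` is empty there is nothing to extend and `F = 0` serves.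
-/

open MeasureTheory Set Filter ENNReal NNReal

noncomputable section

/-- `ℝⁿ` equipped with the uniform norm `‖x‖ = max_i |x i|`. -/
abbrev Eu (n : ℕ) : Type := Fin n → ℝ

variable {n : ℕ}

/-- The closed cube `Q(x,r)` with center `x` and `diam Q = 2r`
(the closed ball of radius `r` in the uniform norm). -/
def cube (x : Eu n) (r : ℝ) : Set (Eu n) := Metric.closedBall x r

/-- `dist(z, ∂Ω)`, the distance from `z` to the boundary of `Ω`. -/
def bdist (Ω : Set (Eu n)) (z : Eu n) : ℝ := Metric.infDist z (frontier Ω)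

/-- The distance between two sets. -/
def setDistS (A B : Set (Eu n)) : ℝ := sInf {d : ℝ | ∃ a ∈ A, ∃ b ∈ B, d = dist a b}

/-- The line integral `∫_{[x,y]} ρ(z) ds(z)` of `ρ` over the segment `[x,y]`
with respect to arc length. -/
def segInt (ρ : Eu n → ℝ) (x y : Eu n) : ℝ :=
  ∫ t in (0:ℝ)..1, ρ (x + t • (y - x)) * ‖y - x‖

/-- The set of subhyperbolic lengths `∫_γ dist(z,∂Ω)^{α-1} ds(z)` of rectifiable curves in `Ω`
joining `x` to `y`; rectifiable curves are encoded by their arc-length parametrizations,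
i.e. `1`-Lipschitz maps `γ : [0,L] → Ω`. -/
def subLenSet (Ω : Set (Eu n)) (α : ℝ) (x y : Eu n) : Set ℝ :=
  {d : ℝ | ∃ (L : ℝ) (γ : ℝ → Eu n), 0 ≤ L ∧
    LipschitzOnWith 1 γ (Icc 0 L) ∧ γ 0 = x ∧ γ L = y ∧
    (∀ s ∈ Icc (0:ℝ) L, γ s ∈ Ω) ∧
    IntervalIntegrable (fun s => bdist Ω (γ s) ^ (α - 1)) volume 0 L ∧
    d = ∫ s in (0:ℝ)..L, bdist Ω (γ s) ^ (α - 1)}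

/-- The subhyperbolic metric `d_{α,Ω}(x,y)`. -/
def dSub (Ω : Set (Eu n)) (α : ℝ) (x y : Eu n) : ℝ := sInf (subLenSet Ω α x y)

/-- The metric `d̃_{α,Ω}(x,y) = d_{α,Ω}(x,y) + ‖x-y‖^α`. -/
def dTil (Ω : Set (Eu n)) (α : ℝ) (x y : Eu n) : ℝ := dSub Ω α x y + ‖x - y‖ ^ α

/-- The half-open segment `(x,a]`. -/
def segOC (x a : Eu n) : Set (Eu n) := {z | ∃ t ∈ Set.Ioc (0:ℝ) 1, z = x + t • (a - x)}

/-- `x` is `Q`-visible in `Ω`: for each `y ∈ Q` the half-open segment `(x,y]` lies in `Ω`. -/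
def QVisible (Ω Q : Set (Eu n)) (x : Eu n) : Prop :=
  ∀ y ∈ Q, ∀ t ∈ Set.Ioc (0:ℝ) 1, x + t • (y - x) ∈ Ω

/-- `O_ε(∂Ω)`, the ε-neighborhood of `∂Ω` in `Ω`. -/
def Oeps (Ω : Set (Eu n)) (ε : ℝ) : Set (Eu n) := {x ∈ Ω | bdist Ω x < ε}

/-- `g` is the (first-order distributional) weak gradient of `F` on the open set `Ω`. -/
def HasWeakGradOn (F : Eu n → ℝ) (g : Eu n → Eu n) (Ω : Set (Eu n)) : Prop :=
  LocallyIntegrableOn F Ω volume ∧ LocallyIntegrableOn g Ω volume ∧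
  ∀ φ : Eu n → ℝ, ContDiff ℝ (⊤ : ℕ∞) φ → HasCompactSupport φ → tsupport φ ⊆ Ω →
    ∀ i : Fin n, ∫ x in Ω, F x * fderiv ℝ φ x (Pi.single i 1) =
      - ∫ x in Ω, g x i * φ x

/-- `F` is the continuous representative of an element of the homogeneous Sobolev space
`L¹_p(Ω)`, with weak gradient `g` and `‖∇F‖ ∈ L_p(Ω)`. -/
def ContL1pRep (Ω : Set (Eu n)) (p : ℝ) (F : Eu n → ℝ) (g : Eu n → Eu n) : Prop :=
  ContinuousOn F Ω ∧ HasWeakGradOn F g Ω ∧ IntegrableOn (fun z => ‖g z‖ ^ p) Ω volume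

/-- `F` is the continuous representative of an element of `W¹_p(Ω) = L_p(Ω) ∩ L¹_p(Ω)`. -/
def ContW1pRep (Ω : Set (Eu n)) (p : ℝ) (F : Eu n → ℝ) (g : Eu n → Eu n) : Prop :=
  ContL1pRep Ω p F g ∧ IntegrableOn (fun z => |F z| ^ p) Ω volume

/-- The norm `‖F‖_{W¹_p(Ω)} = ‖F‖_{L_p(Ω)} + ‖∇F‖_{L_p(Ω)}`. -/
def W1pNorm (Ω : Set (Eu n)) (p : ℝ) (F : Eu n → ℝ) (g : Eu n → Eu n) : ℝ :=
  (∫ z in Ω, |F z| ^ p) ^ (1/p) + (∫ z in Ω, ‖g z‖ ^ p) ^ (1/p)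

/-- `u` is a Cauchy sequence with respect to the metric `d̃_{α,Ω}`. -/
def DCauchy (Ω : Set (Eu n)) (α : ℝ) (u : ℕ → Eu n) : Prop :=
  ∀ ε > (0:ℝ), ∃ N : ℕ, ∀ i ≥ N, ∀ j ≥ N, dTil Ω α (u i) (u j) < ε

/-- `u` is a sequence in `Ω` converging to `x` in norm which is Cauchy w.r.t. `d̃_{α,Ω}`. -/
def AccessSeq (Ω : Set (Eu n)) (α : ℝ) (x : Eu n) (u : ℕ → Eu n) : Prop :=
  (∀ i, u i ∈ Ω) ∧ Tendsto u atTop (nhds x) ∧ DCauchy Ω α u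

/-- `x` is an α-accessible point of `∂Ω`.  (For a domain satisfying condition `(A_α)` the
α-boundary `∂_αΩ` is identified with the set of α-accessible points of `∂Ω`.) -/
def Accessible (Ω : Set (Eu n)) (α : ℝ) (x : Eu n) : Prop :=
  x ∈ frontier Ω ∧ ∃ u, AccessSeq Ω α x u

/-- Condition `(A_α)`: for every α-accessible point `x ∈ ∂Ω`, any two sequences in `Ω`
converging to `x` in norm and Cauchy w.r.t. `d̃_{α,Ω}` satisfy `d̃_{α,Ω}(x_i,y_i) → 0`. -/
def CondA (Ω : Set (Eu n)) (α : ℝ) : Prop :=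
  ∀ x, Accessible Ω α x → ∀ u v, AccessSeq Ω α x u → AccessSeq Ω α x v →
    Tendsto (fun i => dTil Ω α (u i) (v i)) atTop (nhds 0)

/-- The metric `d̄_{α,clΩ}(x,y) = liminf { d_{α,Ω}(x̃,ỹ) : x̃,ỹ ∈ Ω, x̃ → x, ỹ → y in norm }`. -/
def dBar (Ω : Set (Eu n)) (α : ℝ) (x y : Eu n) : ℝ :=
  Filter.liminf (fun q : Eu n × Eu n => dSub Ω α q.1 q.2)
    (((nhds x) ⊓ Filter.principal Ω) ×ˢ ((nhds y) ⊓ Filter.principal Ω))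

/-- `f` is the trace of `F` on the α-boundary `∂_αΩ` (identified with the α-accessible
points of `∂Ω`):  `f x = lim_i F(x_i)` along every sequence `(x_i)` in `Ω` converging
to `x` in norm and Cauchy with respect to `d̃_{α,Ω}`. -/
def TraceEq (Ω : Set (Eu n)) (α : ℝ) (F : Eu n → ℝ) (f : Eu n → ℝ) : Prop :=
  ∀ x, Accessible Ω α x → ∀ u, AccessSeq Ω α x u →
    Tendsto (fun i => F (u i)) atTop (nhds (f x))

/-- `f` is continuous on `∂_αΩ` with respect to the metric `d̄_{α,clΩ}`. -/
def ContWrtDBar (Ω : Set (Eu n)) (α : ℝ) (f : Eu n → ℝ) : Prop :=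
  ∀ x, Accessible Ω α x → ∀ ε > (0:ℝ), ∃ δ > (0:ℝ), ∀ y, Accessible Ω α y →
    dBar Ω α x y < δ → |f y - f x| < ε

/-- The variational condition: for every finite family of pairwise disjoint cubes
`Q_i ⊆ S` and every choice of `Q_i`-visible points `x_i, y_i ∈ (ηQ_i) ∩ ∂_αΩ` one has
`Σ_i |f(x_i) - f(y_i)|^p / (diam Q_i)^{p-n} ≤ lam`. -/
def VarCondOn (Ω S : Set (Eu n)) (α p η lam : ℝ) (f : Eu n → ℝ) : Prop :=
  ∀ (m : ℕ) (c : Fin m → Eu n) (r : Fin m → ℝ),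
    (∀ i, 0 < r i) → (∀ i, cube (c i) (r i) ⊆ S) →
    (∀ i j, i ≠ j → Disjoint (cube (c i) (r i)) (cube (c j) (r j))) →
    ∀ x y : Fin m → Eu n,
      (∀ i, Accessible Ω α (x i) ∧ x i ∈ cube (c i) (η * r i) ∧
        QVisible Ω (cube (c i) (r i)) (x i)) →
      (∀ i, Accessible Ω α (y i) ∧ y i ∈ cube (c i) (η * r i) ∧
        QVisible Ω (cube (c i) (r i)) (y i)) →
      ∑ i, |f (x i) - f (y i)| ^ p / (2 * r i) ^ (p - (n:ℝ)) ≤ lam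

/-! ### The distance to the boundary and the subhyperbolic metric -/

lemma bdist_nonneg (Ω : Set (Eu n)) (x : Eu n) : 0 ≤ bdist Ω x := Metric.infDist_nonneg

lemma bdist_le_add (Ω : Set (Eu n)) (x y : Eu n) : bdist Ω x ≤ bdist Ω y + dist x y :=
  Metric.infDist_le_infDist_add_dist

lemma bdist_continuous (Ω : Set (Eu n)) : Continuous (bdist Ω) := Metric.continuous_infDist_pt _

lemma bdist_le_dist {Ω : Set (Eu n)} {w : Eu n} (hw : w ∈ frontier Ω) (z : Eu n) :
    bdist Ω z ≤ dist z w := Metric.infDist_le_dist_of_mem hw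

lemma not_mem_of_frontier {Ω : Set (Eu n)} (hΩ : IsOpen Ω) {w : Eu n} (hw : w ∈ frontier Ω) :
    w ∉ Ω := by
  rw [hΩ.frontier_eq] at hw
  exact hw.2

lemma bdist_pos {Ω : Set (Eu n)} (hΩ : IsOpen Ω) (hf : (frontier Ω).Nonempty) {x : Eu n}
    (hx : x ∈ Ω) : 0 < bdist Ω x := by
  apply (isClosed_frontier.notMem_iff_infDist_pos hf).1
  intro h
  exact not_mem_of_frontier hΩ h hx

lemma ball_bdist_subset {Ω : Set (Eu n)} (hΩ : IsOpen Ω) {x : Eu n}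
    (hx : x ∈ Ω) : Metric.ball x (bdist Ω x) ⊆ Ω := by
  rcases (Metric.ball x (bdist Ω x)).eq_empty_or_nonempty with h | h
  · rw [h]; exact empty_subset _
  have hpos : 0 < bdist Ω x := Metric.nonempty_ball.1 h
  have hc : IsPreconnected (Metric.ball x (bdist Ω x)) :=
    (convex_ball x (bdist Ω x)).isPreconnected
  refine hc.subset_left_of_subset_union hΩ (isClosed_closure (s := Ω)).isOpen_compl ?_ ?_ ?_
  · exact disjoint_left.2 fun a ha h => h (subset_closure ha)
  · intro z hz
    by_contra hcon
    simp only [mem_union, mem_compl_iff, not_or, not_not] at hcon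
    have hzf : z ∈ frontier Ω := by
      rw [hΩ.frontier_eq]; exact ⟨hcon.2, hcon.1⟩
    have := bdist_le_dist hzf x
    rw [Metric.mem_ball, dist_comm] at hz
    linarith
  · exact ⟨x, Metric.mem_ball_self hpos, hx⟩

lemma le_bdist {Ω : Set (Eu n)} (hΩ : IsOpen Ω) (hf : (frontier Ω).Nonempty) {x : Eu n} {r : ℝ}
    (h : Metric.closedBall x r ⊆ Ω) : r ≤ bdist Ω x := by
  refine (Metric.le_infDist hf).2 fun w hw => ?_
  by_contra hcon
  push Not at hcon
  refine not_mem_of_frontier hΩ hw (h ?_)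
  rw [Metric.mem_closedBall, dist_comm]; exact hcon.le

lemma exists_nearest {Ω : Set (Eu n)} (hf : (frontier Ω).Nonempty) (x : Eu n) :
    ∃ w ∈ frontier Ω, bdist Ω x = dist x w :=
  isClosed_frontier.exists_infDist_eq_dist hf x

/-- Admissible curves: `γ` is `1`-Lipschitz on `[0, L]` with values in `Ω`. -/
def AdmCurve (Ω : Set (Eu n)) (L : ℝ) (γ : ℝ → Eu n) : Prop :=
  0 ≤ L ∧ LipschitzOnWith 1 γ (Icc 0 L) ∧ ∀ s ∈ Icc (0:ℝ) L, γ s ∈ Ω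

lemma AdmCurve.dist_le {Ω : Set (Eu n)} {L : ℝ} {γ : ℝ → Eu n} (h : AdmCurve Ω L γ)
    {s t : ℝ} (hs : s ∈ Icc (0:ℝ) L) (ht : t ∈ Icc (0:ℝ) L) : dist (γ s) (γ t) ≤ |s - t| := by
  have := h.2.1.dist_le_mul s hs t ht
  simpa [Real.dist_eq] using this

lemma AdmCurve.continuousOn {Ω : Set (Eu n)} (hΩ : IsOpen Ω) (hf : (frontier Ω).Nonempty)
    (α : ℝ) {L : ℝ} {γ : ℝ → Eu n} (h : AdmCurve Ω L γ) :
    ContinuousOn (fun s => bdist Ω (γ s) ^ (α - 1)) (Icc 0 L) := by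
  refine ContinuousOn.rpow_const ?_ fun s hs => Or.inl (bdist_pos hΩ hf (h.2.2 s hs)).ne'
  exact (bdist_continuous Ω).comp_continuousOn h.2.1.continuousOn

lemma AdmCurve.integrable {Ω : Set (Eu n)} (hΩ : IsOpen Ω) (hf : (frontier Ω).Nonempty)
    (α : ℝ) {L : ℝ} {γ : ℝ → Eu n} (h : AdmCurve Ω L γ) {s t : ℝ} (hs : 0 ≤ s) (hst : s ≤ t)
    (ht : t ≤ L) :
    IntervalIntegrable (fun s => bdist Ω (γ s) ^ (α - 1)) volume s t := by
  refine ContinuousOn.intervalIntegrable ?_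
  rw [uIcc_of_le hst]
  exact (h.continuousOn hΩ hf α).mono (Icc_subset_Icc hs ht)

lemma AdmCurve.mem {Ω : Set (Eu n)} (hΩ : IsOpen Ω) (hf : (frontier Ω).Nonempty)
    (α : ℝ) {L : ℝ} {γ : ℝ → Eu n} (h : AdmCurve Ω L γ) :
    (∫ s in (0:ℝ)..L, bdist Ω (γ s) ^ (α - 1)) ∈ subLenSet Ω α (γ 0) (γ L) :=
  ⟨L, γ, h.1, h.2.1, rfl, rfl, h.2.2, h.integrable hΩ hf α le_rfl h.1 le_rfl, rfl⟩

lemma subLenSet_nonneg {Ω : Set (Eu n)} {α : ℝ} {x y : Eu n} {d : ℝ}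
    (hd : d ∈ subLenSet Ω α x y) : 0 ≤ d := by
  obtain ⟨L, γ, hL, -, -, -, -, -, rfl⟩ := hd
  exact intervalIntegral.integral_nonneg hL fun u _ => Real.rpow_nonneg (bdist_nonneg _ _) _

lemma dSub_nonneg (Ω : Set (Eu n)) (α : ℝ) (x y : Eu n) : 0 ≤ dSub Ω α x y :=
  Real.sInf_nonneg fun _ hd => subLenSet_nonneg hd

lemma dSub_le {Ω : Set (Eu n)} {α : ℝ} {x y : Eu n} {d : ℝ}
    (hd : d ∈ subLenSet Ω α x y) : dSub Ω α x y ≤ d :=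
  csInf_le ⟨0, fun _ h => subLenSet_nonneg h⟩ hd

lemma AdmCurve.sub {Ω : Set (Eu n)} {L : ℝ} {γ : ℝ → Eu n} (h : AdmCurve Ω L γ) {s t : ℝ}
    (hs : 0 ≤ s) (hst : s ≤ t) (ht : t ≤ L) : AdmCurve Ω (t - s) (fun u => γ (s + u)) := by
  have hm : ∀ u ∈ Icc (0:ℝ) (t - s), s + u ∈ Icc (0:ℝ) L := fun u hu =>
    ⟨by linarith [hu.1], by linarith [hu.2]⟩
  refine ⟨by linarith, ?_, fun u hu => h.2.2 _ (hm u hu)⟩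
  refine LipschitzOnWith.of_dist_le_mul fun u hu v hv => ?_
  have := h.dist_le (hm u hu) (hm v hv)
  simpa [Real.dist_eq] using this

lemma AdmCurve.dSub_le_integral {Ω : Set (Eu n)} (hΩ : IsOpen Ω) (hf : (frontier Ω).Nonempty)
    (α : ℝ) {L : ℝ} {γ : ℝ → Eu n} (h : AdmCurve Ω L γ) {s t : ℝ} (hs : 0 ≤ s) (hst : s ≤ t)
    (ht : t ≤ L) :
    dSub Ω α (γ s) (γ t) ≤ ∫ u in s..t, bdist Ω (γ u) ^ (α - 1) := by
  have h1 := dSub_le ((h.sub hs hst ht).mem hΩ hf α)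
  simp only [add_zero, add_sub_cancel] at h1
  have h2 := intervalIntegral.integral_comp_add_left
    (fun u => bdist Ω (γ u) ^ (α - 1)) (a := 0) (b := t - s) s
  simp only [add_zero, add_sub_cancel] at h2
  rw [h2] at h1
  exact h1

lemma subLenSet_iff {Ω : Set (Eu n)} {α : ℝ} {x y : Eu n} {d : ℝ} :
    d ∈ subLenSet Ω α x y → ∃ L γ, AdmCurve Ω L γ ∧ γ 0 = x ∧ γ L = y ∧
      d = ∫ s in (0:ℝ)..L, bdist Ω (γ s) ^ (α - 1) := by
  rintro ⟨L, γ, hL, hl, h0, h1, hm, -, hd⟩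
  exact ⟨L, γ, ⟨hL, hl, hm⟩, h0, h1, hd⟩

lemma subLenSet_symm {Ω : Set (Eu n)} (hΩ : IsOpen Ω) (hf : (frontier Ω).Nonempty) {α : ℝ}
    {x y : Eu n} {d : ℝ} (hd : d ∈ subLenSet Ω α x y) : d ∈ subLenSet Ω α y x := by
  obtain ⟨L, γ, h, h0, h1, rfl⟩ := subLenSet_iff hd
  have hm : ∀ u ∈ Icc (0:ℝ) L, L - u ∈ Icc (0:ℝ) L := fun u hu =>
    ⟨by linarith [hu.2], by linarith [hu.1]⟩
  have hr : AdmCurve Ω L (fun u => γ (L - u)) := by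
    refine ⟨h.1, ?_, fun u hu => h.2.2 _ (hm u hu)⟩
    refine LipschitzOnWith.of_dist_le_mul fun u hu v hv => ?_
    have := h.dist_le (hm u hu) (hm v hv)
    rw [show L - u - (L - v) = v - u by ring] at this
    rw [Real.dist_eq, abs_sub_comm]
    simpa using this
  have h2 := hr.mem hΩ hf α
  have h3 := intervalIntegral.integral_comp_sub_left
    (fun u => bdist Ω (γ u) ^ (α - 1)) (a := 0) (b := L) L
  simp only [sub_zero, sub_self] at h2
  rw [sub_self, sub_zero] at h3
  rw [h3, h0, h1] at h2
  exact h2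

lemma subLenSet_trans {Ω : Set (Eu n)} (hΩ : IsOpen Ω) (hf : (frontier Ω).Nonempty) {α : ℝ}
    {x y z : Eu n} {d e : ℝ} (hd : d ∈ subLenSet Ω α x y) (he : e ∈ subLenSet Ω α y z) :
    d + e ∈ subLenSet Ω α x z := by
  obtain ⟨L, γ, h, h0, h1, rfl⟩ := subLenSet_iff hd
  obtain ⟨M, σ, k, k0, k1, rfl⟩ := subLenSet_iff he
  have hL := h.1
  have hM := k.1
  set τ : ℝ → Eu n := fun u => if u ≤ L then γ u else σ (u - L) with hτ
  have τ1 : ∀ u, u ≤ L → τ u = γ u := fun u hu => if_pos hu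
  have τ2 : ∀ u, L ≤ u → τ u = σ (u - L) := by
    intro u hu
    rcases hu.eq_or_lt with rfl | hu
    · rw [τ1 _ le_rfl, h1, sub_self, k0]
    · exact if_neg (not_le.2 hu)
  have hadm : AdmCurve Ω (L + M) τ := by
    have key : ∀ u ∈ Icc (0:ℝ) (L + M), ∀ v ∈ Icc (0:ℝ) (L + M), u ≤ v →
        dist (τ u) (τ v) ≤ v - u := by
      intro u hu v hv huv
      rcases le_total v L with hvL | hvL
      · rw [τ1 _ hvL, τ1 _ (huv.trans hvL)]
        have := h.dist_le ⟨hu.1, huv.trans hvL⟩ ⟨hv.1, hvL⟩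
        rwa [abs_sub_comm, abs_of_nonneg (by linarith)] at this
      rcases le_total u L with huL | huL
      · rw [τ1 _ huL, τ2 _ hvL]
        have a := h.dist_le ⟨hu.1, huL⟩ ⟨hL, le_rfl⟩
        have b := k.dist_le ⟨le_rfl, hM⟩ (t := v - L) ⟨by linarith, by linarith [hv.2]⟩
        rw [abs_sub_comm, abs_of_nonneg (by linarith)] at a b
        have := dist_triangle (γ u) (γ L) (σ (v - L))
        rw [k0, ← h1] at b
        linarith
      · rw [τ2 _ huL, τ2 _ hvL]
        have b := k.dist_le (s := u - L) (t := v - L) ⟨by linarith, by linarith [hu.2]⟩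
          ⟨by linarith, by linarith [hv.2]⟩
        rw [abs_sub_comm, abs_of_nonneg (by linarith)] at b
        linarith
    refine ⟨by linarith, LipschitzOnWith.of_dist_le_mul fun u hu v hv => ?_, fun u hu => ?_⟩
    · rw [Real.dist_eq]
      rcases le_total u v with huv | huv
      · rw [abs_sub_comm, abs_of_nonneg (by linarith)]
        simpa using key u hu v hv huv
      · rw [dist_comm, abs_of_nonneg (by linarith)]
        simpa using key v hv u hu huv
    · rcases le_total u L with huL | huL
      · rw [τ1 _ huL]; exact h.2.2 _ ⟨hu.1, huL⟩
      · rw [τ2 _ huL]; exact k.2.2 _ ⟨by linarith, by linarith [hu.2]⟩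
  have hm := hadm.mem hΩ hf α
  rw [τ1 0 hL, h0, τ2 (L + M) (by linarith), add_sub_cancel_left, k1,
    ← intervalIntegral.integral_add_adjacent_intervals
      (hadm.integrable hΩ hf α le_rfl hL (by linarith))
      (hadm.integrable hΩ hf α hL (by linarith : L ≤ L + M) le_rfl)] at hm
  have e1 : ∫ s in (0:ℝ)..L, bdist Ω (τ s) ^ (α - 1) = ∫ s in (0:ℝ)..L, bdist Ω (γ s) ^ (α - 1) := by
    refine intervalIntegral.integral_congr fun u hu => ?_
    rw [uIcc_of_le hL] at hu
    simp only [τ1 u hu.2]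
  have e2 : ∫ s in L..(L + M), bdist Ω (τ s) ^ (α - 1) =
      ∫ s in (0:ℝ)..M, bdist Ω (σ s) ^ (α - 1) := by
    have h3 := intervalIntegral.integral_comp_sub_right
      (fun u => bdist Ω (σ u) ^ (α - 1)) (a := L) (b := L + M) L
    simp only [sub_self, add_sub_cancel_left] at h3
    rw [← h3]
    refine intervalIntegral.integral_congr fun u hu => ?_
    rw [uIcc_of_le (by linarith)] at hu
    simp only [τ2 u hu.1]
  rwa [e1, e2] at hm

/-- A segment on which the distance to the boundary is at least `ρ` has subhyperbolic length at
most `ρ ^ (α - 1)` times its length. -/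
lemma segment_subLen {Ω : Set (Eu n)} (hΩ : IsOpen Ω) (hf : (frontier Ω).Nonempty) {α : ℝ}
    (hα : α ≤ 1) {a b : Eu n} {ρ : ℝ} (hρ : 0 < ρ)
    (h : ∀ z ∈ segment ℝ a b, z ∈ Ω ∧ ρ ≤ bdist Ω z) :
    ∃ d ∈ subLenSet Ω α a b, d ≤ ρ ^ (α - 1) * dist a b := by
  rcases eq_or_ne a b with rfl | hab
  · have hadm : AdmCurve Ω 0 (fun _ => a) :=
      ⟨le_rfl, (LipschitzWith.const a).weaken zero_le_one |>.lipschitzOnWith,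
        fun s _ => (h a (left_mem_segment ℝ a a)).1⟩
    exact ⟨_, hadm.mem hΩ hf α, by simp⟩
  set L := dist a b with hLdef
  have hL : 0 < L := dist_pos.2 hab
  set γ : ℝ → Eu n := fun u => AffineMap.lineMap a b (u / L) with hγ
  have hseg : ∀ u ∈ Icc (0:ℝ) L, γ u ∈ segment ℝ a b := by
    intro u hu
    rw [segment_eq_image_lineMap]
    exact ⟨u / L, ⟨div_nonneg hu.1 hL.le, (div_le_one hL).2 hu.2⟩, rfl⟩
  have hadm : AdmCurve Ω L γ := by
    refine ⟨hL.le, LipschitzOnWith.of_dist_le_mul fun u hu v hv => ?_,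
      fun u hu => (h _ (hseg u hu)).1⟩
    simp only [hγ, dist_lineMap_lineMap, ← hLdef, Real.dist_eq, NNReal.coe_one, one_mul]
    rw [show u / L - v / L = (u - v) / L by ring, abs_div, abs_of_pos hL, div_mul_cancel₀ _ hL.ne']
  have hm := hadm.mem hΩ hf α
  have e0 : γ 0 = a := by simp [hγ]
  have e1 : γ L = b := by simp [hγ, div_self hL.ne']
  rw [e0, e1] at hm
  refine ⟨_, hm, ?_⟩
  have := intervalIntegral.integral_mono_on hL.le (hadm.integrable hΩ hf α le_rfl hL.le le_rfl)
    (intervalIntegrable_const (c := ρ ^ (α - 1))) (fun u hu =>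
      Real.rpow_le_rpow_of_nonpos hρ (h _ (hseg u hu)).2 (by linarith))
  simpa [mul_comm] using this

lemma dSub_segment_le {Ω : Set (Eu n)} (hΩ : IsOpen Ω) (hf : (frontier Ω).Nonempty) {α : ℝ}
    (hα : α ≤ 1) {a b : Eu n} {ρ : ℝ} (hρ : 0 < ρ)
    (h : ∀ z ∈ segment ℝ a b, z ∈ Ω ∧ ρ ≤ bdist Ω z) :
    dSub Ω α a b ≤ ρ ^ (α - 1) * dist a b := by
  obtain ⟨d, hd, hle⟩ := segment_subLen hΩ hf hα hρ h
  exact (dSub_le hd).trans hle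

lemma segment_near {Ω : Set (Eu n)} (hΩ : IsOpen Ω) {a b : Eu n} (ha : a ∈ Ω)
    (h : dist a b ≤ bdist Ω a / 2) (hpos : 0 < bdist Ω a) :
    ∀ z ∈ segment ℝ a b, z ∈ Ω ∧ bdist Ω a / 2 ≤ bdist Ω z := by
  intro z hz
  have hz1 : dist a z ≤ bdist Ω a / 2 := by
    have : segment ℝ a b ⊆ Metric.closedBall a (bdist Ω a / 2) :=
      (convex_closedBall _ _).segment_subset (Metric.mem_closedBall_self (by linarith))
        (by rw [Metric.mem_closedBall, dist_comm]; exact h)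
    have := this hz
    rwa [Metric.mem_closedBall, dist_comm] at this
  refine ⟨ball_bdist_subset hΩ ha ?_, ?_⟩
  · rw [Metric.mem_ball, dist_comm]; linarith
  · have := bdist_le_add Ω a z
    linarith

lemma subLenSet_nonempty {Ω : Set (Eu n)} (hΩ : IsOpen Ω) (hc : IsConnected Ω)
    (hf : (frontier Ω).Nonempty) {α : ℝ} (hα : α ≤ 1) {x y : Eu n} (hx : x ∈ Ω) (hy : y ∈ Ω) :
    (subLenSet Ω α x y).Nonempty := by
  refine hc.isPreconnected.induction₂ (fun x y => (subLenSet Ω α x y).Nonempty) ?_ ?_ ?_ hx hy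
  · intro a ha
    have hpos := bdist_pos hΩ hf ha
    refine mem_nhdsWithin_of_mem_nhds ?_
    filter_upwards [Metric.closedBall_mem_nhds a (half_pos hpos)] with b hb
    rw [Metric.mem_closedBall, dist_comm] at hb
    obtain ⟨d, hd, -⟩ := segment_subLen hΩ hf hα (half_pos hpos) (segment_near hΩ ha hb hpos)
    exact ⟨d, hd⟩
  · rintro a b c - - - ⟨d, hd⟩ ⟨e, he⟩
    exact ⟨_, subLenSet_trans hΩ hf hd he⟩
  · rintro a b - - ⟨d, hd⟩
    exact ⟨d, subLenSet_symm hΩ hf hd⟩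

lemma dSub_comm {Ω : Set (Eu n)} (hΩ : IsOpen Ω) (hf : (frontier Ω).Nonempty) (α : ℝ)
    (x y : Eu n) : dSub Ω α x y = dSub Ω α y x := by
  unfold dSub
  congr 1
  ext d
  exact ⟨subLenSet_symm hΩ hf, subLenSet_symm hΩ hf⟩

lemma dSub_triangle {Ω : Set (Eu n)} (hΩ : IsOpen Ω) (hc : IsConnected Ω)
    (hf : (frontier Ω).Nonempty) {α : ℝ} (hα : α ≤ 1) {x y z : Eu n} (hx : x ∈ Ω) (hy : y ∈ Ω)
    (hz : z ∈ Ω) : dSub Ω α x z ≤ dSub Ω α x y + dSub Ω α y z := by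
  refine le_of_forall_pos_le_add fun ε hε => ?_
  obtain ⟨d, hd, hd'⟩ := Real.lt_sInf_add_pos
    (subLenSet_nonempty hΩ hc hf hα hx hy) (half_pos hε)
  obtain ⟨e, he, he'⟩ := Real.lt_sInf_add_pos
    (subLenSet_nonempty hΩ hc hf hα hy hz) (half_pos hε)
  have := dSub_le (subLenSet_trans hΩ hf hd he)
  unfold dSub at *
  linarith

lemma dSub_self {Ω : Set (Eu n)} (hΩ : IsOpen Ω) (hf : (frontier Ω).Nonempty) {α : ℝ}
    (hα : α ≤ 1) {x : Eu n} (hx : x ∈ Ω) : dSub Ω α x x = 0 := by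
  have hpos := bdist_pos hΩ hf hx
  have := dSub_segment_le hΩ hf hα (half_pos hpos)
    (segment_near hΩ hx (b := x) (by rw [dist_self]; linarith) hpos)
  rw [dist_self, mul_zero] at this
  exact le_antisymm this (dSub_nonneg _ _ _ _)

lemma dSub_near_le {Ω : Set (Eu n)} (hΩ : IsOpen Ω) (hf : (frontier Ω).Nonempty) {α : ℝ}
    (hα : α ≤ 1) {a b : Eu n} (ha : a ∈ Ω) (h : dist a b ≤ bdist Ω a / 2) :
    dSub Ω α a b ≤ (bdist Ω a / 2) ^ (α - 1) * dist a b :=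
  dSub_segment_le hΩ hf hα (half_pos (bdist_pos hΩ hf ha))
    (segment_near hΩ ha h (bdist_pos hΩ hf ha))

/-- The subhyperbolic metric is continuous for the norm topology at points of `Ω`. -/
lemma dSub_tendsto_zero {Ω : Set (Eu n)} (hΩ : IsOpen Ω) (hf : (frontier Ω).Nonempty) {α : ℝ}
    (hα : α ≤ 1) {a : Eu n} (ha : a ∈ Ω) :
    Tendsto (fun b => dSub Ω α a b) (nhds a) (nhds 0) := by
  have h1 : Tendsto (fun b => (bdist Ω a / 2) ^ (α - 1) * dist a b) (nhds a) (nhds 0) := by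
    have : Continuous fun b => (bdist Ω a / 2) ^ (α - 1) * dist a b := by fun_prop
    have := this.tendsto a
    simpa using this
  refine squeeze_zero' (Eventually.of_forall fun b => dSub_nonneg _ _ _ _) ?_ h1
  filter_upwards [Metric.closedBall_mem_nhds a (half_pos (bdist_pos hΩ hf ha))] with b hb
  rw [Metric.mem_closedBall, dist_comm] at hb
  exact dSub_near_le hΩ hf hα ha hb

/-! ### Morrey's inequality on cubes -/

/-- `ψ` is a smooth probability density supported in the closed unit cube and bounded by `M`. -/
structure IsMollifier (ψ : Eu n → ℝ) (M : ℝ) : Prop where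
  smooth : ContDiff ℝ (⊤ : ℕ∞) ψ
  nonneg : ∀ x, 0 ≤ ψ x
  le : ∀ x, ψ x ≤ M
  zero : ∀ x, 1 < ‖x‖ → ψ x = 0
  int : ∫ x, ψ x = 1

lemma exists_mollifier (n : ℕ) : ∃ (ψ : Eu n → ℝ) (M : ℝ), IsMollifier ψ M := by
  let f : ContDiffBump (0 : Eu n) := ⟨1/2, 1, by norm_num, by norm_num⟩
  obtain ⟨M, hM⟩ := f.continuous_normed (μ := volume).bounded_above_of_compact_support
    f.hasCompactSupport_normed
  refine ⟨f.normed volume, M, f.contDiff_normed, f.nonneg_normed, fun x => ?_, fun x hx => ?_,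
    f.integral_normed⟩
  · exact (le_abs_self _).trans (hM x)
  · by_contra h
    have : x ∈ Function.support (f.normed volume) := h
    rw [f.support_normed_eq, Metric.mem_ball, dist_zero_right] at this
    exact absurd this (not_lt.2 hx.le)

lemma IsMollifier.M_nonneg {ψ : Eu n → ℝ} {M : ℝ} (h : IsMollifier ψ M) : 0 ≤ M :=
  (h.nonneg 0).trans (h.le 0)

/-- The density `ψ` rescaled to the cube of center `y + e / s` and radius `1 / s`. -/
def rescale (ψ : Eu n → ℝ) (y e : Eu n) (s : ℝ) (z : Eu n) : ℝ := s ^ n * ψ (s • (z - y) - e)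

lemma rescale_contDiff {ψ : Eu n → ℝ} {M : ℝ} (h : IsMollifier ψ M) (y e : Eu n) (s : ℝ) :
    ContDiff ℝ (⊤ : ℕ∞) (rescale ψ y e s) := by
  have := h.smooth
  unfold rescale
  fun_prop

lemma rescale_eq_zero {ψ : Eu n → ℝ} {M : ℝ} (h : IsMollifier ψ M) (y e : Eu n) {s : ℝ}
    (hs : 0 < s) {z : Eu n} (hz : z ∉ Metric.closedBall (y + s⁻¹ • e) s⁻¹) :
    rescale ψ y e s z = 0 := by
  unfold rescale
  rw [h.zero, mul_zero]
  rw [Metric.mem_closedBall, not_le, dist_eq_norm] at hz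
  have : s • (z - y) - e = s • (z - (y + s⁻¹ • e)) := by
    rw [← sub_sub, smul_sub s (z - y), smul_smul, mul_inv_cancel₀ hs.ne', one_smul]
  rw [this, norm_smul, Real.norm_of_nonneg hs.le]
  have := mul_lt_mul_of_pos_left hz hs
  rwa [mul_inv_cancel₀ hs.ne'] at this

lemma rescale_integral {ψ : Eu n → ℝ} {M : ℝ} (h : IsMollifier ψ M) (y e : Eu n) {s : ℝ}
    (hs : 0 < s) : ∫ z, rescale ψ y e s z = 1 := by
  unfold rescale
  rw [integral_const_mul]
  have h1 : ∫ z, ψ (s • (z - y) - e) = ∫ z, ψ (s • z - e) :=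
    integral_sub_right_eq_self (fun z => ψ (s • z - e)) y
  have h2 : ∫ z, ψ (s • z - e) = |(s ^ n)⁻¹| • ∫ z, ψ (z - e) := by
    have := Measure.integral_comp_smul (volume : Measure (Eu n)) (fun z => ψ (z - e)) s
    rwa [Module.finrank_fin_fun] at this
  have h3 : ∫ z, ψ (z - e) = ∫ z, ψ z := integral_sub_right_eq_self ψ e
  rw [h1, h2, h3, h.int, abs_of_pos (by positivity), smul_eq_mul, mul_one,
    mul_inv_cancel₀ (by positivity)]

/-- The center and radius in `rescale` describe a subcube of the original cube. -/
lemma subcube_subset {c y : Eu n} {r s : ℝ} (hr : 0 < r) (hs : r⁻¹ ≤ s)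
    (hy : y ∈ Metric.closedBall c r) :
    Metric.closedBall (y + s⁻¹ • (r⁻¹ • (c - y))) s⁻¹ ⊆ Metric.closedBall c r := by
  have hs0 : 0 < s := (inv_pos.2 hr).trans_le hs
  refine Metric.closedBall_subset_closedBall' ?_
  have h1 : s⁻¹ ≤ r := by rw [inv_le_comm₀ hs0 hr]; exact hs
  have h2 : y + s⁻¹ • (r⁻¹ • (c - y)) - c = (1 - s⁻¹ * r⁻¹) • (y - c) := by
    rw [smul_smul]; module
  have h3 : s⁻¹ * r⁻¹ ≤ 1 := by
    rw [← div_eq_mul_inv, div_le_one hr]; exact h1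
  rw [dist_eq_norm, h2, norm_smul, Real.norm_of_nonneg (by linarith)]
  rw [Metric.mem_closedBall, dist_eq_norm] at hy
  have : (1 - s⁻¹ * r⁻¹) * ‖y - c‖ ≤ (1 - s⁻¹ * r⁻¹) * r :=
    mul_le_mul_of_nonneg_left hy (by linarith)
  have e : s⁻¹ * r⁻¹ * r = s⁻¹ := by field_simp
  linarith [sub_mul 1 (s⁻¹ * r⁻¹) r]

/-- The derivative of `rescale` in the scale variable. -/
def rescaleDeriv (ψ : Eu n → ℝ) (y e : Eu n) (s : ℝ) (z : Eu n) : ℝ :=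
  n * s ^ (n - 1) * ψ (s • (z - y) - e) + s ^ n * fderiv ℝ ψ (s • (z - y) - e) (z - y)

lemma rescale_hasDerivAt {ψ : Eu n → ℝ} {M : ℝ} (h : IsMollifier ψ M) (y e : Eu n) (s : ℝ)
    (z : Eu n) : HasDerivAt (fun s => rescale ψ y e s z) (rescaleDeriv ψ y e s z) s := by
  unfold rescale rescaleDeriv
  have h1 : HasDerivAt (fun s : ℝ => s • (z - y) - e) (z - y) s := by
    simpa using ((hasDerivAt_id s).smul_const (z - y)).sub_const e
  have h2 : HasFDerivAt ψ (fderiv ℝ ψ (s • (z - y) - e)) (s • (z - y) - e) :=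
    (h.smooth.differentiable (by simp)).differentiableAt.hasFDerivAt
  exact (hasDerivAt_pow n s).mul (h2.comp_hasDerivAt s h1)

lemma rescaleDeriv_continuous {ψ : Eu n → ℝ} {M : ℝ} (h : IsMollifier ψ M) (y e : Eu n) :
    Continuous fun q : ℝ × Eu n => rescaleDeriv ψ y e q.1 q.2 := by
  have h1 := h.smooth.continuous
  have h2 : Continuous (fderiv ℝ ψ) := h.smooth.continuous_fderiv (by simp)
  unfold rescaleDeriv
  refine Continuous.add (by fun_prop) (Continuous.mul (by fun_prop) ?_)
  exact (h2.comp (by fun_prop)).clm_apply (by fun_prop)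

/-- The vector field `(z - y) * rescale ψ y e s z`, whose divergence is
`s * rescaleDeriv ψ y e s`. -/
def radialField (ψ : Eu n → ℝ) (y e : Eu n) (s : ℝ) (i : Fin n) (z : Eu n) : ℝ :=
  (z i - y i) * rescale ψ y e s z

lemma radialField_contDiff {ψ : Eu n → ℝ} {M : ℝ} (h : IsMollifier ψ M) (y e : Eu n) (s : ℝ)
    (i : Fin n) : ContDiff ℝ (⊤ : ℕ∞) (radialField ψ y e s i) := by
  have := rescale_contDiff h y e s
  unfold radialField
  fun_prop

/-- The identity that turns the scale derivative of the mollification into a divergence. -/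
lemma radialField_div {ψ : Eu n → ℝ} {M : ℝ} (h : IsMollifier ψ M) (y e : Eu n) {s : ℝ}
    (hs : s ≠ 0) (z : Eu n) :
    ∑ i, fderiv ℝ (radialField ψ y e s i) z (Pi.single i 1) = s * rescaleDeriv ψ y e s z := by
  have h2 : HasFDerivAt ψ (fderiv ℝ ψ (s • (z - y) - e)) (s • (z - y) - e) :=
    (h.smooth.differentiable (by simp)).differentiableAt.hasFDerivAt
  have h1 : HasFDerivAt (fun z : Eu n => s • (z - y) - e) (s • ContinuousLinearMap.id ℝ (Eu n)) z :=
    (((hasFDerivAt_id z).sub_const y).const_smul s).sub_const e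
  have h3 := (h2.comp z h1).const_mul (s ^ n)
  have h4 : ∀ i, fderiv ℝ (radialField ψ y e s i) z (Pi.single i 1) =
      rescale ψ y e s z + s ^ (n + 1) *
        ((z i - y i) * fderiv ℝ ψ (s • (z - y) - e) (Pi.single i 1)) := by
    intro i
    have h5 : HasFDerivAt (fun z : Eu n => z i - y i)
        (ContinuousLinearMap.proj (R := ℝ) (φ := fun _ : Fin n => ℝ) i) z :=
      (hasFDerivAt_apply i z).sub_const _
    have h6 := h5.mul h3
    have h7 : fderiv ℝ (radialField ψ y e s i) z = _ := h6.fderiv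
    rw [h7]
    simp [rescale]
    ring
  simp only [h4, Finset.sum_add_distrib, ← Finset.mul_sum, Finset.sum_const, Finset.card_univ,
    Fintype.card_fin, nsmul_eq_mul]
  have h8 : ∑ i, (z i - y i) * fderiv ℝ ψ (s • (z - y) - e) (Pi.single i 1) =
      fderiv ℝ ψ (s • (z - y) - e) (z - y) := by
    have h9 := congrArg (fderiv ℝ ψ (s • (z - y) - e)) (pi_eq_sum_univ' (z - y))
    rw [map_sum] at h9
    rw [h9]
    simp only [map_smul, smul_eq_mul, Pi.sub_apply]
  rw [h8, rescale, rescaleDeriv]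
  rcases n with _ | n
  · simp
  · simp only [add_tsub_cancel_right]; ring

/-- Hölder's inequality on a set of finite measure. -/
lemma integral_norm_le_holder {p : ℝ} (hp : 1 < p) {S : Set (Eu n)} {g : Eu n → Eu n} (hS : volume S ≠ ∞)
    (hg : AEStronglyMeasurable g (volume.restrict S))
    (hi : IntegrableOn (fun z => ‖g z‖ ^ p) S) :
    IntegrableOn g S ∧
    ∫ z in S, ‖g z‖ ≤ (∫ z in S, ‖g z‖ ^ p) ^ (1 / p) * (volume.real S) ^ (1 - 1 / p) := by
  have hp0 : 0 < p := by linarith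
  have : IsFiniteMeasure (volume.restrict S) := ⟨by simpa using hS.lt_top⟩
  have hm : MemLp (fun z => ‖g z‖) (ENNReal.ofReal p) (volume.restrict S) := by
    rw [← integrable_norm_rpow_iff hg.norm (by simpa using hp0) ENNReal.ofReal_ne_top]
    simpa [ENNReal.toReal_ofReal hp0.le, IntegrableOn] using hi
  have h1 := (Real.HolderConjugate.conjExponent hp)
  have hm2 : MemLp (fun _ : Eu n => (1:ℝ)) (ENNReal.ofReal p.conjExponent) (volume.restrict S) :=
    memLp_const 1
  have h2 := integral_mul_le_Lp_mul_Lq_of_nonneg h1 (μ := volume.restrict S)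
    (f := fun z => ‖g z‖) (g := fun _ => 1)
    (Eventually.of_forall fun z => norm_nonneg _) (Eventually.of_forall fun z => zero_le_one)
    hm hm2
  constructor
  · have := hm.integrable (by
      rw [← ENNReal.ofReal_one]; exact ENNReal.ofReal_le_ofReal hp.le)
    exact (integrable_norm_iff hg).1 this
  · have h3 : 1 / p.conjExponent = 1 - 1 / p := by
      have := h1.inv_add_inv_eq_one
      rw [one_div, one_div]; linarith
    rw [h3] at h2
    simpa [Measure.real] using h2

/-- The mollified value `∫ F * rescale ψ y e s` moves at speed `O(s ^ (n / p - 2))` in the scale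
variable; this is the integrated form of the weak gradient identity against `radialField`. -/
lemma mollified_hasDerivAt {ψ : Eu n → ℝ} {M : ℝ} (h : IsMollifier ψ M) {Ω : Set (Eu n)}
    (hΩ : IsOpen Ω) {p : ℝ} (hp : 1 < p) {F : Eu n → ℝ} {g : Eu n → Eu n}
    (hF : ContL1pRep Ω p F g) {c y : Eu n} {r s : ℝ} (hr : 0 < r) (hs : r⁻¹ ≤ s)
    (hP : Metric.closedBall c r ⊆ Ω) (hy : y ∈ Metric.closedBall c r) :
    ∃ D : ℝ, HasDerivAt (fun s => ∫ z in Metric.closedBall c r,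
        F z * rescale ψ y (r⁻¹ • (c - y)) s z) D s ∧
      |D| ≤ (n * 2 * M * 2 ^ n) * (∫ z in Metric.closedBall c r, ‖g z‖ ^ p) ^ (1 / p) *
        s ^ ((n:ℝ) / p - 2) := by
  obtain ⟨hFc, ⟨hFl, hgl, hw⟩, hgp⟩ := hF
  set P := Metric.closedBall c r with hPdef
  set e := r⁻¹ • (c - y) with he
  have hs0 : 0 < s := (inv_pos.2 hr).trans_le hs
  have hPc : IsCompact P := isCompact_closedBall c r
  have hPm : MeasurableSet P := Metric.isClosed_closedBall.measurableSet
  have hFP : ContinuousOn F P := hFc.mono hP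
  have hint : ∀ {φ : Eu n → ℝ}, Continuous φ → IntegrableOn (fun z => F z * φ z) P := fun hφ =>
    (hFP.mul hφ.continuousOn).integrableOn_compact hPc
  -- differentiation under the integral sign
  have hder : HasDerivAt (fun s => ∫ z in P, F z * rescale ψ y e s z)
      (∫ z in P, F z * rescaleDeriv ψ y e s z) s := by
    obtain ⟨CF, hCF⟩ := hPc.exists_bound_of_continuousOn hFP
    obtain ⟨CD, hCD⟩ := ((isCompact_closedBall s 1).prod hPc).exists_bound_of_continuousOn
      (rescaleDeriv_continuous h y e).continuousOn
    refine (hasDerivAt_integral_of_dominated_loc_of_deriv_le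
      (F := fun s z => F z * rescale ψ y e s z)
      (F' := fun s z => F z * rescaleDeriv ψ y e s z) (bound := fun _ => |CF| * |CD|)
      (Metric.closedBall_mem_nhds s zero_lt_one)
      (Eventually.of_forall fun t => (hint (rescale_contDiff h y e t).continuous).1)
      (hint (rescale_contDiff h y e s).continuous) ?_ ?_ ?_ ?_).2
    · exact (hint ((rescaleDeriv_continuous h y e).comp
        (Continuous.prodMk_right s))).1
    · refine (ae_restrict_iff' hPm).2 (Eventually.of_forall fun z hz t ht => ?_)
      rw [norm_mul]
      exact mul_le_mul ((hCF z hz).trans (le_abs_self _))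
        ((hCD (t, z) ⟨ht, hz⟩).trans (le_abs_self _)) (norm_nonneg _) (abs_nonneg _)
    · exact integrableOn_const hPc.measure_lt_top.ne
    · exact Eventually.of_forall fun z t _ => (rescale_hasDerivAt h y e t z).const_mul _
  refine ⟨_, hder, ?_⟩
  set B := Metric.closedBall (y + s⁻¹ • e) s⁻¹ with hB
  have hBP : B ⊆ P := subcube_subset hr hs hy
  have hBm : MeasurableSet B := Metric.isClosed_closedBall.measurableSet
  have hΦ0 : ∀ i, ∀ z ∉ B, radialField ψ y e s i z = 0 := by
    intro i z hz
    rw [radialField, rescale_eq_zero h y e hs0 hz, mul_zero]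
  have hΦt : ∀ i, tsupport (radialField ψ y e s i) ⊆ B := by
    intro i
    refine closure_minimal (fun z hz => ?_) Metric.isClosed_closedBall
    by_contra hcon
    exact hz (hΦ0 i z hcon)
  have hfd0 : ∀ i, ∀ z ∉ P, fderiv ℝ (radialField ψ y e s i) z (Pi.single i 1) = 0 := by
    intro i z hz
    have : z ∉ tsupport (fderiv ℝ (radialField ψ y e s i)) := fun hcon =>
      hz (hBP (hΦt i (tsupport_fderiv_subset ℝ hcon)))
    rw [image_eq_zero_of_notMem_tsupport this]; simp
  have hweak : ∀ i, ∫ z in P, F z * fderiv ℝ (radialField ψ y e s i) z (Pi.single i 1) =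
      - ∫ z in B, g z i * radialField ψ y e s i z := by
    intro i
    have hcs : HasCompactSupport (radialField ψ y e s i) :=
      (isCompact_closedBall _ _).of_isClosed_subset (isClosed_tsupport _) (hΦt i)
    have h1 := hw _ (radialField_contDiff h y e s i) hcs
      ((hΦt i).trans (hBP.trans hP)) i
    rw [setIntegral_eq_of_subset_of_forall_sdiff_eq_zero hΩ.measurableSet hP
      (fun z hz => by rw [hfd0 i z hz.2, mul_zero]),
      setIntegral_eq_of_subset_of_forall_sdiff_eq_zero hΩ.measurableSet (hBP.trans hP)
      (fun z hz => by rw [hΦ0 i z hz.2, mul_zero])] at h1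
    exact h1
  have hsum : s * ∫ z in P, F z * rescaleDeriv ψ y e s z =
      - ∑ i, ∫ z in B, g z i * radialField ψ y e s i z := by
    rw [← integral_const_mul, ← Finset.sum_neg_distrib]
    simp only [← hweak]
    rw [← integral_finsetSum]
    · refine integral_congr_ae (Eventually.of_forall fun z => ?_)
      simp only
      rw [← Finset.mul_sum, radialField_div h y e hs0.ne' z]
      ring
    · intro i _
      exact hint (((radialField_contDiff h y e s i).continuous_fderiv (by simp)).clm_apply
        continuous_const)
  have hgB : IntegrableOn (fun z => ‖g z‖ ^ p) B := hgp.mono_set (hBP.trans hP)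
  have hgm : AEStronglyMeasurable g (volume.restrict B) :=
    hgl.aestronglyMeasurable.mono_set (hBP.trans hP)
  have hvol : volume.real B = (2 * s⁻¹) ^ n := by
    rw [Measure.real, hB, Real.volume_pi_closedBall _ (by positivity), ENNReal.toReal_ofReal (by positivity)]
    simp
  obtain ⟨hgi, hhol⟩ := integral_norm_le_holder hp
    (isCompact_closedBall (y + s⁻¹ • e) s⁻¹).measure_lt_top.ne hgm hgB
  set G := (∫ z in P, ‖g z‖ ^ p) ^ (1 / p) with hG
  have hG0 : 0 ≤ G := by positivity
  have hp0 : 0 < p := by linarith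
  have hGB : (∫ z in B, ‖g z‖ ^ p) ^ (1 / p) ≤ G := by
    refine Real.rpow_le_rpow (by positivity) ?_ (by positivity)
    exact setIntegral_mono_set (hgp.mono_set hP) (Eventually.of_forall fun z => by positivity)
      (Eventually.of_forall hBP)
  have hM := h.M_nonneg
  have hΦb : ∀ i, ∀ z ∈ B, |radialField ψ y e s i z| ≤ 2 * s⁻¹ * (s ^ n * M) := by
    intro i z hz
    rw [radialField, abs_mul]
    refine mul_le_mul ?_ ?_ (abs_nonneg _) (by positivity)
    · have h1 : |z i - y i| ≤ ‖z - y‖ := norm_le_pi_norm (z - y) i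
      have h2 : ‖z - y‖ ≤ ‖z - (y + s⁻¹ • e)‖ + ‖s⁻¹ • e‖ := by
        have : z - y = (z - (y + s⁻¹ • e)) + s⁻¹ • e := by abel
        rw [this]; simpa using norm_add_le (z - (y + s⁻¹ • e)) (s⁻¹ • e)
      have h3 : ‖e‖ ≤ 1 := by
        rw [he, norm_smul, norm_inv, Real.norm_of_nonneg hr.le, inv_mul_le_iff₀ hr, mul_one]
        rw [hPdef, Metric.mem_closedBall, dist_comm, dist_eq_norm] at hy
        exact hy
      have h4 : ‖s⁻¹ • e‖ ≤ s⁻¹ := by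
        rw [norm_smul, norm_inv, Real.norm_of_nonneg hs0.le]
        exact mul_le_of_le_one_right (by positivity) h3
      rw [hB, Metric.mem_closedBall, dist_eq_norm] at hz
      linarith
    · rw [rescale, abs_of_nonneg (mul_nonneg (by positivity) (h.nonneg _))]
      exact mul_le_mul_of_nonneg_left (h.le _) (by positivity)
  have hterm : ∀ i, |∫ z in B, g z i * radialField ψ y e s i z| ≤
      2 * s⁻¹ * (s ^ n * M) * ∫ z in B, ‖g z‖ := by
    intro i
    rw [← integral_const_mul, ← Real.norm_eq_abs]
    refine norm_integral_le_of_norm_le (hgi.norm.const_mul _) ?_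
    refine (ae_restrict_iff' hBm).2 (Eventually.of_forall fun z hz => ?_)
    rw [norm_mul, mul_comm]
    exact mul_le_mul (hΦb i z hz) (norm_le_pi_norm (g z) i) (norm_nonneg _) (by positivity)
  have habs : s * |∫ z in P, F z * rescaleDeriv ψ y e s z| ≤
      n * (2 * s⁻¹ * (s ^ n * M) * ∫ z in B, ‖g z‖) := by
    rw [← abs_of_pos hs0, ← abs_mul, abs_of_pos hs0, hsum, abs_neg]
    refine (Finset.abs_sum_le_sum_abs _ _).trans ((Finset.sum_le_sum fun i _ => hterm i).trans ?_)
    simp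
  have hpow : s ^ n * (volume.real B) ^ (1 - 1 / p) ≤ 2 ^ n * s ^ ((n:ℝ) / p) := by
    have hp1 : 1 / p ≤ 1 := by rw [div_le_one hp0]; exact hp.le
    rw [hvol, mul_pow, Real.mul_rpow (by positivity) (by positivity)]
    have h1 : ((2:ℝ) ^ n) ^ (1 - 1 / p) ≤ 2 ^ n := by
      have : (1:ℝ) ≤ 2 ^ n := one_le_pow₀ (by norm_num)
      calc ((2:ℝ) ^ n) ^ (1 - 1 / p) ≤ ((2:ℝ) ^ n) ^ (1:ℝ) :=
            Real.rpow_le_rpow_of_exponent_le this (by have : 0 < 1 / p := by positivity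
                                                      linarith)
        _ = 2 ^ n := Real.rpow_one _
    have h2 : s ^ n * (s⁻¹ ^ n) ^ (1 - 1 / p) = s ^ ((n:ℝ) / p) := by
      rw [inv_pow, ← Real.rpow_natCast, ← Real.rpow_neg hs0.le, ← Real.rpow_mul hs0.le,
        ← Real.rpow_add hs0]
      congr 1; ring
    calc s ^ n * (((2:ℝ) ^ n) ^ (1 - 1 / p) * (s⁻¹ ^ n) ^ (1 - 1 / p))
        = ((2:ℝ) ^ n) ^ (1 - 1 / p) * (s ^ n * (s⁻¹ ^ n) ^ (1 - 1 / p)) := by ring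
      _ ≤ _ := by rw [h2]; exact mul_le_mul_of_nonneg_right h1 (by positivity)
  have hfin : s * |∫ z in P, F z * rescaleDeriv ψ y e s z| ≤
      s * ((n * 2 * M * 2 ^ n) * G * s ^ ((n:ℝ) / p - 2)) := by
    refine habs.trans ?_
    have h1 : s ^ n * ∫ z in B, ‖g z‖ ≤ G * (2 ^ n * s ^ ((n:ℝ) / p)) := by
      calc s ^ n * ∫ z in B, ‖g z‖ ≤ s ^ n * (G * (volume.real B) ^ (1 - 1 / p)) :=
            mul_le_mul_of_nonneg_left (hhol.trans (mul_le_mul_of_nonneg_right hGB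
              (Real.rpow_nonneg measureReal_nonneg _))) (by positivity)
        _ = G * (s ^ n * (volume.real B) ^ (1 - 1 / p)) := by ring
        _ ≤ _ := mul_le_mul_of_nonneg_left hpow hG0
    have h2 : s ^ ((n:ℝ) / p - 2) = s ^ ((n:ℝ) / p) * (s⁻¹ * s⁻¹) := by
      rw [Real.rpow_sub hs0]; norm_num; field_simp
    rw [h2]
    calc n * (2 * s⁻¹ * (s ^ n * M) * ∫ z in B, ‖g z‖)
        = (n * 2 * M * s⁻¹) * (s ^ n * ∫ z in B, ‖g z‖) := by ring
      _ ≤ (n * 2 * M * s⁻¹) * (G * (2 ^ n * s ^ ((n:ℝ) / p))) :=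
          mul_le_mul_of_nonneg_left h1 (by positivity)
      _ = _ := by field_simp
  exact le_of_mul_le_mul_left hfin hs0

/-- As the scale tends to infinity the mollified values converge to the point value. -/
lemma mollified_tendsto {ψ : Eu n → ℝ} {M : ℝ} (h : IsMollifier ψ M)
    {F : Eu n → ℝ} {c y : Eu n} {r : ℝ} (hr : 0 < r)
    (hFP : ContinuousOn F (Metric.closedBall c r)) (hy : y ∈ Metric.closedBall c r) :
    Tendsto (fun s => ∫ z in Metric.closedBall c r, F z * rescale ψ y (r⁻¹ • (c - y)) s z)
      atTop (nhds (F y)) := by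
  set P := Metric.closedBall c r with hPdef
  set e := r⁻¹ • (c - y) with he
  have hPc : IsCompact P := isCompact_closedBall c r
  rw [Metric.tendsto_atTop]
  intro ε hε
  obtain ⟨δ, hδ, hδε⟩ := Metric.continuousOn_iff.1 hFP y hy (ε / 2) (half_pos hε)
  refine ⟨max r⁻¹ (3 / δ), fun s hs => ?_⟩
  have hs1 : r⁻¹ ≤ s := (le_max_left _ _).trans hs
  have hs2 : 3 / δ ≤ s := (le_max_right _ _).trans hs
  have hs0 : 0 < s := (inv_pos.2 hr).trans_le hs1
  have hsub := subcube_subset hr hs1 hy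
  have hR : Continuous (rescale ψ y e s) := (rescale_contDiff h y e s).continuous
  have hone : ∫ z in P, rescale ψ y e s z = 1 := by
    rw [setIntegral_eq_integral_of_forall_compl_eq_zero, rescale_integral h y e hs0]
    exact fun z hz => rescale_eq_zero h y e hs0 fun hcon => hz (hsub hcon)
  have hR0 : ∀ z, 0 ≤ rescale ψ y e s z := fun z => mul_nonneg (by positivity) (h.nonneg _)
  have hi1 : IntegrableOn (fun z => F z * rescale ψ y e s z) P :=
    (hFP.mul hR.continuousOn).integrableOn_compact hPc
  have hi2 : IntegrableOn (rescale ψ y e s) P := hR.continuousOn.integrableOn_compact hPc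
  have hFy : F y = ∫ z in P, F y * rescale ψ y e s z := by
    rw [integral_const_mul, hone, mul_one]
  rw [dist_eq_norm]
  conv_lhs => rw [hFy]
  rw [← integral_sub hi1 (hi2.const_mul _)]
  have hle : ‖∫ z in P, (F z * rescale ψ y e s z - F y * rescale ψ y e s z)‖ ≤
      ∫ z in P, ε / 2 * rescale ψ y e s z := by
    refine norm_integral_le_of_norm_le (hi2.const_mul _) ?_
    refine (ae_restrict_iff' Metric.isClosed_closedBall.measurableSet).2
      (Eventually.of_forall fun z hz => ?_)
    rw [← sub_mul, norm_mul, Real.norm_of_nonneg (hR0 z)]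
    by_cases hzB : z ∈ Metric.closedBall (y + s⁻¹ • e) s⁻¹
    · refine mul_le_mul_of_nonneg_right ?_ (hR0 z)
      refine (hδε z hz ?_).le
      have h3 : ‖e‖ ≤ 1 := by
        rw [he, norm_smul, norm_inv, Real.norm_of_nonneg hr.le, inv_mul_le_iff₀ hr, mul_one]
        rw [hPdef, Metric.mem_closedBall, dist_comm, dist_eq_norm] at hy
        exact hy
      have h4 : dist (y + s⁻¹ • e) y ≤ s⁻¹ := by
        rw [dist_eq_norm, add_sub_cancel_left, norm_smul, norm_inv, Real.norm_of_nonneg hs0.le]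
        exact mul_le_of_le_one_right (by positivity) h3
      have h5 := dist_triangle z (y + s⁻¹ • e) y
      rw [Metric.mem_closedBall] at hzB
      have h6 : s⁻¹ ≤ δ / 3 := by
        rw [inv_le_comm₀ hs0 (by positivity), inv_div]; exact hs2
      linarith
    · rw [rescale_eq_zero h y e hs0 hzB]; simp
  rw [integral_const_mul, hone, mul_one] at hle
  linarith

/-- **Morrey's inequality** for continuous functions with a weak gradient in `L_p`, `p > n`. -/
lemma morrey (n : ℕ) (p : ℝ) (hp1 : 1 < p) (hp : (n:ℝ) < p) :
    ∃ C : ℝ, 0 < C ∧ ∀ (Ω : Set (Eu n)), IsOpen Ω → ∀ F g, ContL1pRep Ω p F g →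
      ∀ (c : Eu n) (r : ℝ), 0 < r → Metric.closedBall c r ⊆ Ω →
      ∀ y ∈ Metric.closedBall c r, ∀ z ∈ Metric.closedBall c r,
        |F y - F z| ≤ C * r ^ (1 - n / p) *
          (∫ z in Metric.closedBall c r, ‖g z‖ ^ p) ^ (1 / p) := by
  obtain ⟨ψ, M, h⟩ := exists_mollifier n
  have hM := h.M_nonneg
  have hp0 : 0 < p := by linarith
  have hnp : (n:ℝ) / p < 1 := by rw [div_lt_one hp0]; exact hp
  set K := n * 2 * M * 2 ^ n / (1 - n / p) with hK
  have hK0 : 0 ≤ K := div_nonneg (by positivity) (by linarith)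
  refine ⟨2 * K + 1, by linarith, fun Ω hΩ F g hF c r hr hP => ?_⟩
  set G := (∫ z in Metric.closedBall c r, ‖g z‖ ^ p) ^ (1 / p) with hG
  have hG0 : 0 ≤ G := by positivity
  -- `A s` mollifies `F` over the cube that is the image of `Q(c, r)` under the homothety of centre
  -- `y` and ratio `(r * s)⁻¹`. At `s = r⁻¹` this is `Q(c, r)` itself, whatever `y` is, so the values
  -- at all `y` are compared with one average.
  have key : ∀ y ∈ Metric.closedBall c r,
      |F y - ∫ z in Metric.closedBall c r, F z * rescale ψ c 0 r⁻¹ z| ≤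
        K * r ^ (1 - n / p) * G := by
    intro y hy
    set A : ℝ → ℝ := fun s => ∫ z in Metric.closedBall c r,
        F z * rescale ψ y (r⁻¹ • (c - y)) s z with hA
    have hA1 : A r⁻¹ = ∫ z in Metric.closedBall c r, F z * rescale ψ c 0 r⁻¹ z := by
      simp only [hA, rescale]
      congr 1
      ext z
      congr 3
      module
    rw [← hA1]
    have hder : ∀ s, r⁻¹ ≤ s → ∃ D : ℝ, HasDerivAt A D s ∧
      |D| ≤ (n * 2 * M * 2 ^ n) * G * s ^ ((n:ℝ) / p - 2) := fun s hs =>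
        mollified_hasDerivAt h hΩ hp1 hF hr hs hP hy
    choose! D hD hDb using hder
    have hri : 0 < r⁻¹ := inv_pos.2 hr
    have hbd : ∀ s, r⁻¹ ≤ s → |A s - A r⁻¹| ≤ K * r ^ (1 - n / p) * G := by
      intro s hs
      have h1 := image_norm_le_of_norm_deriv_right_le_deriv_boundary'
        (f := fun t => A t - A r⁻¹) (f' := D) (a := r⁻¹) (b := s)
        (B := fun t => K * G * (r ^ (1 - (n:ℝ) / p) - t ^ ((n:ℝ) / p - 1)))
        (B' := fun t => K * G * (-(((n:ℝ) / p - 1) * t ^ ((n:ℝ) / p - 1 - 1))))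
        (fun t ht => ((hD t ht.1).continuousAt.sub continuousAt_const).continuousWithinAt)
        (fun t ht => ((hD t ht.1).sub_const _).hasDerivWithinAt)
        (by
          simp only [sub_self, norm_zero]
          rw [Real.inv_rpow hr.le, ← Real.rpow_neg hr.le]; simp)
        (fun t ht => by
          have : t ≠ 0 := (hri.trans_le ht.1).ne'
          exact (continuousAt_const.mul (continuousAt_const.sub
            (Real.continuousAt_rpow_const t _ (Or.inl this)))).continuousWithinAt)
        (fun t ht => by
          have : t ≠ 0 := (hri.trans_le ht.1).ne'
          exact (((Real.hasDerivAt_rpow_const (Or.inl this)).const_sub _).const_mul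
            _).hasDerivWithinAt)
        (fun t ht => by
          refine (hDb t ht.1).trans (le_of_eq ?_)
          have : 1 - (n:ℝ) / p ≠ 0 := by linarith
          rw [show (n:ℝ) / p - 1 - 1 = n / p - 2 by ring, hK]
          have e2 : n * 2 * M * 2 ^ n = n * 2 * M * 2 ^ n / (1 - n / p) * (1 - n / p) :=
            (div_mul_cancel₀ _ this).symm
          conv_lhs => rw [e2]
          ring)
        (x := s) ⟨hs, le_rfl⟩
      refine h1.trans ?_
      have h2 : 0 ≤ s ^ ((n:ℝ) / p - 1) := Real.rpow_nonneg (hri.le.trans hs) _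
      calc K * G * (r ^ (1 - (n:ℝ) / p) - s ^ ((n:ℝ) / p - 1)) ≤ K * G * r ^ (1 - (n:ℝ) / p) :=
            mul_le_mul_of_nonneg_left (by linarith) (by positivity)
        _ = _ := by ring
    have hlim : Tendsto (fun s => |A s - A r⁻¹|) atTop (nhds |F y - A r⁻¹|) :=
      ((mollified_tendsto h hr (hF.1.mono hP) hy).sub_const _).abs
    exact le_of_tendsto hlim ((eventually_ge_atTop r⁻¹).mono hbd)
  intro y hy z hz
  have h1 := key y hy
  have h2 := key z hz
  have h3 : |F y - F z| ≤ 2 * K * r ^ (1 - n / p) * G := by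
    rw [abs_le] at *
    constructor <;> nlinarith [h1.1, h1.2, h2.1, h2.2]
  have h4 : 0 ≤ r ^ (1 - n / p) * G := by positivity
  nlinarith

/-! ### Counting disjoint cubes, and chains of cubes towards a visible boundary point -/

lemma volume_real_closedBall (c : Eu n) {r : ℝ} (hr : 0 ≤ r) :
    volume.real (Metric.closedBall c r) = (2 * r) ^ n := by
  rw [Measure.real, Real.volume_pi_closedBall _ hr, ENNReal.toReal_ofReal (by positivity)]
  simp

/-- By comparison of volumes, at most `(M + 1) ^ n` disjoint cubes of radius `ρ` have their
centres within `M * ρ` of `z`. -/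
lemma count_le {ι : Type*} (s : Finset ι) (c : ι → Eu n) {z : Eu n} {ρ M : ℝ} (hρ : 0 < ρ)
    (hM : 0 ≤ M) (hc : ∀ i ∈ s, dist (c i) z ≤ M * ρ)
    (hd : (s : Set ι).PairwiseDisjoint fun i => Metric.closedBall (c i) ρ) :
    (s.card : ℝ) ≤ (M + 1) ^ n := by
  have h1 : volume.real (⋃ i ∈ s, Metric.closedBall (c i) ρ) =
      ∑ i ∈ s, volume.real (Metric.closedBall (c i) ρ) :=
    measureReal_biUnion_finset hd (fun _ _ => Metric.isClosed_closedBall.measurableSet)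
      (fun _ _ => (isCompact_closedBall _ _).measure_lt_top.ne)
  have h2 : (⋃ i ∈ s, Metric.closedBall (c i) ρ) ⊆ Metric.closedBall z ((M + 1) * ρ) := by
    refine iUnion₂_subset fun i hi => Metric.closedBall_subset_closedBall' ?_
    linarith [hc i hi]
  have h3 := measureReal_mono (μ := volume) h2 (isCompact_closedBall _ _).measure_lt_top.ne
  rw [h1, Finset.sum_congr rfl fun i _ => volume_real_closedBall (c i) hρ.le,
    volume_real_closedBall z (by positivity), Finset.sum_const, nsmul_eq_mul,
    show 2 * ((M + 1) * ρ) = (M + 1) * (2 * ρ) by ring, mul_pow (M + 1)] at h3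
  exact le_of_mul_le_mul_right h3 (by positivity)

/-- If `x` is visible from a cube, then the copies of the cube under homotheties of centre `x` and
ratio `t ∈ (0, 1]` lie in `Ω`. -/
lemma cone_subset {Ω : Set (Eu n)} {x c : Eu n} {r : ℝ} (hv : QVisible Ω (Metric.closedBall c r) x)
    {t : ℝ} (ht : t ∈ Ioc (0:ℝ) 1) : Metric.closedBall (x + t • (c - x)) (t * r) ⊆ Ω := by
  intro w hw
  have h1 := hv (x + t⁻¹ • (w - x)) ?_ t ht
  · rwa [add_sub_cancel_left, smul_smul, mul_inv_cancel₀ ht.1.ne', one_smul,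
      add_sub_cancel] at h1
  · rw [Metric.mem_closedBall, dist_eq_norm] at hw ⊢
    have h2 : x + t⁻¹ • (w - x) - c = t⁻¹ • (w - (x + t • (c - x))) := by
      have : t⁻¹ * t = 1 := inv_mul_cancel₀ ht.1.ne'
      rw [← sub_sub, smul_sub t⁻¹ (w - x), smul_smul, this]
      module
    rw [h2, norm_smul, norm_inv, Real.norm_of_nonneg ht.1.le, inv_mul_le_iff₀ ht.1]
    exact hw

/-- A sequence whose mutual subhyperbolic distances are controlled by a convergent real
sequence is Cauchy for `dTil`. -/
lemma dcauchy_of_abs {Ω : Set (Eu n)} {α : ℝ} (hα : 0 < α) {u : ℕ → Eu n} {x : Eu n}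
    (hu : Tendsto u atTop (nhds x)) {a : ℕ → ℝ} (ha : CauchySeq a)
    (h : ∀ i j, dSub Ω α (u i) (u j) ≤ |a i - a j|) : DCauchy Ω α u := by
  intro ε hε
  obtain ⟨N, hN⟩ := Metric.cauchySeq_iff.1 ha (ε / 2) (half_pos hε)
  obtain ⟨K, hK⟩ := Metric.cauchySeq_iff.1 hu.cauchySeq ((ε / 2) ^ (1 / α)) (by positivity)
  refine ⟨max N K, fun i hi j hj => ?_⟩
  have h1 := hN i (le_of_max_le_left hi) j (le_of_max_le_left hj)
  have h2 := hK i (le_of_max_le_right hi) j (le_of_max_le_right hj)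
  rw [Real.dist_eq] at h1
  rw [dist_eq_norm] at h2
  have h3 := Real.rpow_lt_rpow (norm_nonneg _) h2 hα
  rw [← Real.rpow_mul (by positivity), one_div, inv_mul_cancel₀ hα.ne', Real.rpow_one] at h3
  have := h i j
  unfold dTil
  linarith

/-- The points `x + θ ^ k (c - x)` on the segment from the visible point `x` to `c`. -/
def ray (θ : ℝ) (x c : Eu n) (k : ℕ) : Eu n := x + θ ^ k • (c - x)

lemma ray_zero (θ : ℝ) (x c : Eu n) : ray θ x c 0 = c := by simp [ray]

lemma ray_tendsto {θ : ℝ} (h0 : 0 ≤ θ) (h1 : θ < 1) (x c : Eu n) :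
    Tendsto (ray θ x c) atTop (nhds x) := by
  have := ((tendsto_pow_atTop_nhds_zero_of_lt_one h0 h1).smul_const (c - x)).const_add x
  rw [zero_smul, add_zero] at this
  exact this

lemma ray_ball_subset {Ω : Set (Eu n)} {x c : Eu n} {r θ : ℝ}
    (hv : QVisible Ω (Metric.closedBall c r) x) (h0 : 0 < θ) (h1 : θ ≤ 1) (k : ℕ) :
    Metric.closedBall (ray θ x c k) (θ ^ k * r) ⊆ Ω :=
  cone_subset hv ⟨by positivity, pow_le_one₀ h0.le h1⟩

lemma ray_mem {Ω : Set (Eu n)} {x c : Eu n} {r θ : ℝ} (hr : 0 < r)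
    (hv : QVisible Ω (Metric.closedBall c r) x) (h0 : 0 < θ) (h1 : θ ≤ 1) (k : ℕ) :
    ray θ x c k ∈ Ω :=
  ray_ball_subset hv h0 h1 k (Metric.mem_closedBall_self (by positivity))

lemma ray_dist_succ {x c : Eu n} {r η : ℝ} (hη : 1 ≤ η)
    (hx : dist x c ≤ η * r) (k : ℕ) :
    dist (ray (1 - 1 / (2 * η)) x c k) (ray (1 - 1 / (2 * η)) x c (k + 1)) ≤
      (1 - 1 / (2 * η)) ^ k * r / 2 := by
  have h2 : 1 / (2 * η) ≤ 1 / 2 := one_div_le_one_div_of_le (by norm_num) (by linarith)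
  have h3 : 0 < 1 / (2 * η) := by positivity
  set θ := 1 - 1 / (2 * η) with hθ
  have e1 : ray θ x c k - ray θ x c (k + 1) = (θ ^ k * (1 / (2 * η))) • (c - x) := by
    unfold ray
    rw [add_sub_add_left_eq_sub, ← sub_smul, pow_succ]
    congr 1
    rw [hθ]; ring
  rw [dist_eq_norm, e1, norm_smul, Real.norm_of_nonneg
    (mul_nonneg (pow_nonneg (by linarith) _) h3.le), ← dist_eq_norm, dist_comm]
  calc θ ^ k * (1 / (2 * η)) * dist x c ≤ θ ^ k * (1 / (2 * η)) * (η * r) :=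
        mul_le_mul_of_nonneg_left hx (mul_nonneg (pow_nonneg (by linarith) _) h3.le)
    _ = _ := by field_simp

lemma theta_mem {η : ℝ} (hη : 1 ≤ η) : 0 < 1 - 1 / (2 * η) ∧ 1 - 1 / (2 * η) < 1 := by
  have h2 : 1 / (2 * η) ≤ 1 / 2 := one_div_le_one_div_of_le (by norm_num) (by linarith)
  have h3 : 0 < 1 / (2 * η) := by positivity
  constructor <;> linarith

/-- The `k`-th and the next point of a ray are at subhyperbolic distance at most
`(θ ^ α) ^ k * r ^ α`, where `θ = 1 - 1 / (2 * η)`; the bound is the sum of this geometric series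
between `i` and `j`. -/
lemma ray_dSub_le {Ω : Set (Eu n)} (hΩ : IsOpen Ω) (hc : IsConnected Ω)
    (hf : (frontier Ω).Nonempty) {α : ℝ} (hα0 : 0 < α) (hα : α ≤ 1) {x c : Eu n} {r η : ℝ}
    (hr : 0 < r) (hη : 1 ≤ η) (hv : QVisible Ω (Metric.closedBall c r) x)
    (hx : dist x c ≤ η * r) (i j : ℕ) :
    dSub Ω α (ray (1 - 1 / (2 * η)) x c i) (ray (1 - 1 / (2 * η)) x c j) ≤
      |r ^ α / (1 - (1 - 1 / (2 * η)) ^ α) * (1 - ((1 - 1 / (2 * η)) ^ α) ^ i) -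
       r ^ α / (1 - (1 - 1 / (2 * η)) ^ α) * (1 - ((1 - 1 / (2 * η)) ^ α) ^ j)| := by
  obtain ⟨h0, h1⟩ := theta_mem hη
  have hd := ray_dist_succ hη hx
  set θ := 1 - 1 / (2 * η)
  set ω := θ ^ α with hω
  have hω1 : ω < 1 := Real.rpow_lt_one h0.le h1 hα0
  have hω0 : 0 < ω := Real.rpow_pos_of_pos h0 _
  set a : ℕ → ℝ := fun k => r ^ α / (1 - ω) * (1 - ω ^ k) with ha
  have hm : ∀ k, ray θ x c k ∈ Ω := ray_mem hr hv h0 h1.le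
  have hstep : ∀ k, dSub Ω α (ray θ x c k) (ray θ x c (k + 1)) ≤ a (k + 1) - a k := by
    intro k
    have hb := le_bdist hΩ hf (ray_ball_subset hv h0 h1.le k)
    have hpos : 0 < θ ^ k * r := by positivity
    have h2 := dSub_near_le hΩ hf hα (hm k) ((hd k).trans (by linarith))
    have h3 : (bdist Ω (ray θ x c k) / 2) ^ (α - 1) ≤ (θ ^ k * r / 2) ^ (α - 1) :=
      Real.rpow_le_rpow_of_nonpos (by positivity) (by linarith) (by linarith)
    have h4 : (θ ^ k * r / 2) ^ (α - 1) * (θ ^ k * r / 2) = (θ ^ k * r / 2) ^ α := by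
      rw [← Real.rpow_add_one (by positivity), sub_add_cancel]
    have h5 : (θ ^ k * r / 2) ^ α ≤ (θ ^ k * r) ^ α :=
      Real.rpow_le_rpow (by positivity) (by linarith) hα0.le
    have h6 : (θ ^ k * r) ^ α = ω ^ k * r ^ α := by
      rw [Real.mul_rpow (by positivity) hr.le, hω, ← Real.rpow_natCast, ← Real.rpow_natCast,
        ← Real.rpow_mul h0.le, ← Real.rpow_mul h0.le, mul_comm α]
    have h7 : a (k + 1) - a k = ω ^ k * r ^ α := by
      have : 1 - ω ≠ 0 := by linarith
      simp only [ha]; field_simp; ring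
    rw [h7, ← h6]
    refine h2.trans (le_trans ?_ h5)
    rw [← h4]
    exact mul_le_mul h3 (hd k) dist_nonneg (by positivity)
  have hadd : ∀ i m, dSub Ω α (ray θ x c i) (ray θ x c (i + m)) ≤ a (i + m) - a i := by
    intro i m
    induction m with
    | zero => simp [dSub_self hΩ hf hα (hm i)]
    | succ m ih =>
      have := dSub_triangle hΩ hc hf hα (hm i) (hm (i + m)) (hm (i + m + 1))
      have := hstep (i + m)
      rw [← add_assoc]
      linarith
  change _ ≤ |a i - a j|
  rcases le_total i j with hij | hij
  · obtain ⟨m, rfl⟩ := Nat.exists_eq_add_of_le hij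
    rw [abs_sub_comm]
    exact (hadd i m).trans (le_abs_self _)
  · obtain ⟨m, rfl⟩ := Nat.exists_eq_add_of_le hij
    rw [dSub_comm hΩ hf]
    exact (hadd j m).trans (le_abs_self _)

lemma ray_dSub_zero_le {Ω : Set (Eu n)} (hΩ : IsOpen Ω) (hc : IsConnected Ω)
    (hf : (frontier Ω).Nonempty) {α : ℝ} (hα0 : 0 < α) (hα : α ≤ 1) {x c : Eu n} {r η : ℝ}
    (hr : 0 < r) (hη : 1 ≤ η) (hv : QVisible Ω (Metric.closedBall c r) x)
    (hx : dist x c ≤ η * r) (j : ℕ) :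
    dSub Ω α c (ray (1 - 1 / (2 * η)) x c j) ≤ r ^ α / (1 - (1 - 1 / (2 * η)) ^ α) := by
  have h := ray_dSub_le hΩ hc hf hα0 hα hr hη hv hx 0 j
  obtain ⟨h0, h1⟩ := theta_mem hη
  rw [ray_zero] at h
  set ω := (1 - 1 / (2 * η)) ^ α with hω
  have hω1 : ω < 1 := Real.rpow_lt_one h0.le h1 hα0
  have hω0 : 0 < ω := Real.rpow_pos_of_pos h0 _
  have hK : 0 ≤ r ^ α / (1 - ω) := div_nonneg (by positivity) (by linarith)
  have hj : ω ^ j ≤ 1 := pow_le_one₀ hω0.le hω1.le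
  have hj' : 0 < ω ^ j := by positivity
  refine h.trans ?_
  rw [pow_zero, sub_self, mul_zero, zero_sub, abs_neg,
    abs_of_nonneg (mul_nonneg hK (by linarith))]
  exact mul_le_of_le_one_right hK (by linarith)

/-- A visible boundary point is accessible along the segment towards the center of the cube. -/
lemma ray_accessSeq {Ω : Set (Eu n)} (hΩ : IsOpen Ω) (hc : IsConnected Ω)
    (hf : (frontier Ω).Nonempty) {α : ℝ} (hα0 : 0 < α) (hα : α ≤ 1) {x c : Eu n} {r η : ℝ}
    (hr : 0 < r) (hη : 1 ≤ η) (hv : QVisible Ω (Metric.closedBall c r) x)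
    (hx : dist x c ≤ η * r) : AccessSeq Ω α x (ray (1 - 1 / (2 * η)) x c) := by
  have hd := ray_dSub_le hΩ hc hf hα0 hα hr hη hv hx
  obtain ⟨h0, h1⟩ := theta_mem hη
  have ht := ray_tendsto h0.le h1 x c
  refine ⟨ray_mem hr hv h0 h1.le, ht, dcauchy_of_abs hα0 ht ?_ hd⟩
  have hω1 : (1 - 1 / (2 * η)) ^ α < 1 := Real.rpow_lt_one h0.le h1 hα0
  have hω0 : 0 < (1 - 1 / (2 * η)) ^ α := Real.rpow_pos_of_pos h0 _
  exact (((tendsto_pow_atTop_nhds_zero_of_lt_one hω0.le hω1).const_sub 1).const_mul _).cauchySeq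

/-! ### The variational condition for traces -/

/-- The integrals of a nonnegative function over sets of overlap at most `N` add up to at most `N`
times the integral over the whole domain. -/
lemma sum_setIntegral_le {ι X : Type*} [MeasurableSpace X] {μ : Measure X} (s : Finset ι)
    {Ω : Set X} {h : X → ℝ} (hh : IntegrableOn h Ω μ) (h0 : ∀ z, 0 ≤ h z) (P : ι → Set X)
    (hPm : ∀ i, MeasurableSet (P i)) (hP : ∀ i ∈ s, P i ⊆ Ω) {N : ℝ}
    (hN : ∀ z, ∀ t ⊆ s, (∀ i ∈ t, z ∈ P i) → (t.card : ℝ) ≤ N) :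
    ∑ i ∈ s, ∫ z in P i, h z ∂μ ≤ N * ∫ z in Ω, h z ∂μ := by
  classical
  have h1 : ∀ i ∈ s, ∫ z in P i, h z ∂μ = ∫ z in Ω, (P i).indicator h z ∂μ := by
    intro i hi
    rw [integral_indicator (hPm i), Measure.restrict_restrict (hPm i),
      inter_eq_self_of_subset_left (hP i hi)]
  rw [Finset.sum_congr rfl h1, ← integral_finsetSum _ fun i _ => hh.indicator (hPm i),
    ← integral_const_mul]
  refine integral_mono (integrable_finsetSum _ fun i _ => hh.indicator (hPm i))
    (hh.const_mul _) fun z => ?_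
  have h2 : ∑ i ∈ s, (P i).indicator h z = ∑ i ∈ s.filter (fun i => z ∈ P i), h z := by
    rw [Finset.sum_filter]
    exact Finset.sum_congr rfl fun i _ => indicator_apply _ _ _
  simp only
  rw [h2, Finset.sum_const, nsmul_eq_mul]
  exact mul_le_mul_of_nonneg_right (hN z _ (Finset.filter_subset _ _)
    fun i hi => (Finset.mem_filter.1 hi).2) (h0 z)

lemma abs_add_rpow_le {a b p : ℝ} (hp : 0 ≤ p) : |a - b| ^ p ≤ 2 ^ p * (|a| ^ p + |b| ^ p) := by
  have h1 : |a - b| ≤ 2 * max |a| |b| := by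
    have := abs_sub a b
    have := le_max_left |a| |b|
    have := le_max_right |a| |b|
    linarith
  refine (Real.rpow_le_rpow (abs_nonneg _) h1 hp).trans ?_
  rw [Real.mul_rpow (by norm_num) (le_max_of_le_left (abs_nonneg _))]
  refine mul_le_mul_of_nonneg_left ?_ (by positivity)
  have ha := Real.rpow_nonneg (abs_nonneg a) p
  have hb := Real.rpow_nonneg (abs_nonneg b) p
  rcases le_total |a| |b| with h | h
  · rw [max_eq_right h]; linarith
  · rw [max_eq_left h]; linarith

/-- Telescoping Morrey's inequality along the chain of cubes converging to a visible point. -/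
lemma chain_estimate {p η : ℝ} (hp1 : 1 < p) (hp : (n:ℝ) < p) (hη : 1 ≤ η) {CM : ℝ} (hCM : 0 < CM)
    {Ω : Set (Eu n)} {F : Eu n → ℝ} {g : Eu n → Eu n}
    (hmor : ∀ (c : Eu n) (r : ℝ), 0 < r → Metric.closedBall c r ⊆ Ω →
      ∀ y ∈ Metric.closedBall c r, ∀ z ∈ Metric.closedBall c r,
        |F y - F z| ≤ CM * r ^ (1 - n / p) *
          (∫ z in Metric.closedBall c r, ‖g z‖ ^ p) ^ (1 / p))
    {x c : Eu n} {r : ℝ} (hr : 0 < r) (hv : QVisible Ω (Metric.closedBall c r) x)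
    (hx : dist x c ≤ η * r) (K : ℕ) :
    |F c - F (ray (1 - 1 / (2 * η)) x c K)| ^ p / r ^ (p - n) ≤
      CM ^ p * ((1 - (1 - 1 / (2 * η)) ^ (1 - n / p))⁻¹) ^ (p - 1) *
      ∑ k ∈ Finset.range K, ((1 - 1 / (2 * η)) ^ (1 - n / p)) ^ k *
        ∫ z in Metric.closedBall (ray (1 - 1 / (2 * η)) x c k) ((1 - 1 / (2 * η)) ^ k * r / 2),
          ‖g z‖ ^ p := by
  have hd := ray_dist_succ hη hx
  obtain ⟨h0, h1⟩ := theta_mem hη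
  have hp0 : 0 < p := by linarith
  have hβ : 0 < 1 - n / p := by rw [sub_pos, div_lt_one hp0]; exact hp
  set θ := 1 - 1 / (2 * η)
  set ω := θ ^ (1 - n / p) with hω
  have hω1 : ω < 1 := Real.rpow_lt_one h0.le h1 hβ
  have hω0 : 0 < ω := Real.rpow_pos_of_pos h0 _
  set I : ℕ → ℝ := fun k => ∫ z in Metric.closedBall (ray θ x c k) (θ ^ k * r / 2), ‖g z‖ ^ p
    with hI
  have hI0 : ∀ k, 0 ≤ I k := fun k => integral_nonneg fun z => by positivity
  have hstep : ∀ k, |F (ray θ x c k) - F (ray θ x c (k + 1))| ≤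
      CM * r ^ (1 - n / p) * (ω ^ k * I k ^ (1 / p)) := by
    intro k
    have hpos : 0 < θ ^ k * r := by positivity
    have h2 := hmor (ray θ x c k) (θ ^ k * r / 2) (by positivity)
      ((Metric.closedBall_subset_closedBall (by linarith)).trans (ray_ball_subset hv h0 h1.le k))
      _ (Metric.mem_closedBall_self (by positivity)) (ray θ x c (k + 1))
      (by rw [Metric.mem_closedBall, dist_comm]; exact hd k)
    refine h2.trans ?_
    have h5 : (θ ^ k * r / 2) ^ (1 - n / p) ≤ (θ ^ k * r) ^ (1 - n / p) :=
      Real.rpow_le_rpow (by positivity) (by linarith) hβ.le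
    have h6 : (θ ^ k * r) ^ (1 - n / p) = ω ^ k * r ^ (1 - n / p) := by
      rw [Real.mul_rpow (by positivity) hr.le, hω, ← Real.rpow_natCast, ← Real.rpow_natCast,
        ← Real.rpow_mul h0.le, ← Real.rpow_mul h0.le, mul_comm (k : ℝ)]
    rw [h6] at h5
    calc CM * (θ ^ k * r / 2) ^ (1 - n / p) * I k ^ (1 / p)
        ≤ CM * (ω ^ k * r ^ (1 - n / p)) * I k ^ (1 / p) := by gcongr
      _ = _ := by ring
  have hsum : |F c - F (ray θ x c K)| ≤
      CM * r ^ (1 - n / p) * ∑ k ∈ Finset.range K, ω ^ k * I k ^ (1 / p) := by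
    induction K with
    | zero => simp [ray_zero]
    | succ K ih =>
      rw [Finset.sum_range_succ, mul_add]
      have := abs_sub_le (F c) (F (ray θ x c K)) (F (ray θ x c (K + 1)))
      linarith [hstep K]
  -- Hölder with the summable weights `ω ^ k` keeps a factor `ω ^ k` in front of each integral.
  have hJ := Real.inner_le_weight_mul_Lp_of_nonneg (Finset.range K) hp1.le
    (fun k => ω ^ k) (fun k => I k ^ (1 / p)) (fun k => by positivity) (fun k => by
      have := hI0 k; positivity)
  have hII : ∀ k, (I k ^ (1 / p)) ^ p = I k := fun k => by
    rw [← Real.rpow_mul (hI0 k), one_div, inv_mul_cancel₀ hp0.ne', Real.rpow_one]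
  simp only [hII] at hJ
  set S := ∑ k ∈ Finset.range K, ω ^ k * I k with hS
  have hS0 : 0 ≤ S := Finset.sum_nonneg fun k _ => mul_nonneg (by positivity) (hI0 k)
  have hgeo : ∑ k ∈ Finset.range K, ω ^ k ≤ (1 - ω)⁻¹ := by
    rw [← tsum_geometric_of_lt_one hω0.le hω1]
    exact (summable_geometric_of_lt_one hω0.le hω1).sum_le_tsum _ fun k _ => by positivity
  have hpi : p⁻¹ < 1 := inv_lt_one_of_one_lt₀ hp1
  have hgeo2 : (∑ k ∈ Finset.range K, ω ^ k) ^ (1 - p⁻¹) ≤ ((1 - ω)⁻¹) ^ (1 - p⁻¹) :=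
    Real.rpow_le_rpow (Finset.sum_nonneg fun k _ => by positivity) hgeo (by linarith)
  have hω2 : 0 < (1 - ω)⁻¹ := inv_pos.2 (by linarith)
  have hfin : |F c - F (ray θ x c K)| ≤
      CM * r ^ (1 - n / p) * (((1 - ω)⁻¹) ^ (1 - p⁻¹) * S ^ p⁻¹) := by
    refine hsum.trans (mul_le_mul_of_nonneg_left (hJ.trans ?_) (by positivity))
    exact mul_le_mul_of_nonneg_right hgeo2 (by positivity)
  have := Real.rpow_le_rpow (abs_nonneg _) hfin hp0.le
  rw [Real.mul_rpow (by positivity) (by positivity), Real.mul_rpow (by positivity) (by positivity),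
    Real.mul_rpow (by positivity) (by positivity), ← Real.rpow_mul hr.le, ← Real.rpow_mul hω2.le,
    ← Real.rpow_mul hS0, inv_mul_cancel₀ hp0.ne', Real.rpow_one,
    show (1 - n / p) * p = p - n by field_simp,
    show (1 - p⁻¹) * p = p - 1 by field_simp] at this
  rw [div_le_iff₀ (by positivity)]
  linarith

/-- Bounded overlap of the `k`-th cubes of the chains attached to disjoint cubes. -/
lemma chain_overlap {ι : Type*} {Ω : Set (Eu n)} (hΩ : IsOpen Ω)
    (hf : (frontier Ω).Nonempty) {η : ℝ} (hη : 1 ≤ η) (s : Finset ι) (c x : ι → Eu n) (r : ι → ℝ)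
    (hr : ∀ i ∈ s, 0 < r i) (hx : ∀ i ∈ s, x i ∈ frontier Ω)
    (hd : (s : Set ι).PairwiseDisjoint fun i => Metric.closedBall (c i) (r i))
    (hxc : ∀ i ∈ s, dist (x i) (c i) ≤ η * r i)
    (hv : ∀ i ∈ s, QVisible Ω (Metric.closedBall (c i) (r i)) (x i)) (k : ℕ) (z : Eu n)
    (hz : ∀ i ∈ s, z ∈ Metric.closedBall (ray (1 - 1 / (2 * η)) (x i) (c i) k)
      ((1 - 1 / (2 * η)) ^ k * r i / 2)) :
    (s.card : ℝ) ≤ (12 * η ^ 2 + 1) ^ n := by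
  rcases s.eq_empty_or_nonempty with rfl | hne
  · simp; positivity
  obtain ⟨h0, h1⟩ := theta_mem hη
  set θ := 1 - 1 / (2 * η)
  have hθk : 0 < θ ^ k := by positivity
  have hθ1 : θ ^ k ≤ 1 := pow_le_one₀ h0.le h1.le
  -- All `θ ^ k * r i` are comparable with `bdist Ω z`, so the disjoint cubes `Q(c i, r i)` have
  -- comparable radii and centres at bounded relative distance from `z`.
  have hlow : ∀ i ∈ s, θ ^ k * r i / 2 ≤ bdist Ω z := by
    intro i hi
    refine le_bdist hΩ hf (subset_trans (Metric.closedBall_subset_closedBall' ?_)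
      (ray_ball_subset (hv i hi) h0 h1.le k))
    have := hz i hi
    rw [Metric.mem_closedBall] at this
    linarith
  have hzx : ∀ i ∈ s, dist z (x i) ≤ 2 * η * (θ ^ k * r i) := by
    intro i hi
    have h2 := hz i hi
    rw [Metric.mem_closedBall] at h2
    have h3 : dist (ray θ (x i) (c i) k) (x i) ≤ θ ^ k * (η * r i) := by
      rw [dist_eq_norm, ray, add_sub_cancel_left, norm_smul, Real.norm_of_nonneg hθk.le,
        ← dist_eq_norm, dist_comm]
      exact mul_le_mul_of_nonneg_left (hxc i hi) hθk.le
    have h4 := dist_triangle z (ray θ (x i) (c i) k) (x i)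
    have h5 : 0 < θ ^ k * r i := mul_pos hθk (hr i hi)
    nlinarith
  have hup : ∀ i ∈ s, bdist Ω z ≤ 2 * η * (θ ^ k * r i) := fun i hi =>
    (bdist_le_dist (hx i hi) z).trans (hzx i hi)
  have hδ : 0 < bdist Ω z := by
    obtain ⟨i, hi⟩ := hne
    have : 0 < θ ^ k * r i / 2 := half_pos (mul_pos hθk (hr i hi))
    linarith [hlow i hi]
  set ρ := bdist Ω z / (θ ^ k * (2 * η)) with hρ
  have hρ0 : 0 < ρ := by positivity
  have hρz : bdist Ω z = ρ * (θ ^ k * (2 * η)) := by rw [hρ]; field_simp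
  have hρ1 : ∀ i ∈ s, ρ ≤ r i := by
    intro i hi
    rw [hρ, div_le_iff₀ (by positivity)]
    linarith [hup i hi]
  have hρ2 : ∀ i ∈ s, r i ≤ 4 * η * ρ := by
    intro i hi
    have h2 := hlow i hi
    rw [hρz] at h2
    refine le_of_mul_le_mul_left ?_ hθk
    linarith
  refine count_le s c hρ0 (by positivity) (z := z) (fun i hi => ?_) fun i hi j hj hij => ?_
  · have h2 := hzx i hi
    have h3 := dist_triangle_left (c i) z (x i)
    have h4 : θ ^ k * r i ≤ r i := mul_le_of_le_one_left (hr i hi).le hθ1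
    have h5 := hxc i hi
    have h6 : 2 * η * (θ ^ k * r i) ≤ 2 * η * r i := by gcongr
    rw [dist_comm z] at h2
    calc dist (c i) z ≤ 3 * η * r i := by linarith
      _ ≤ 3 * η * (4 * η * ρ) := by gcongr; exact hρ2 i hi
      _ = _ := by ring
  · exact (hd hi hj hij).mono (Metric.closedBall_subset_closedBall (hρ1 i hi))
      (Metric.closedBall_subset_closedBall (hρ1 j hj))

/-- The trace of a function in `L¹_p(Ω)` satisfies the variational condition with a constant
comparable with `‖∇F‖_p ^ p`. -/
lemma varCond_of_rep (n : ℕ) {p η : ℝ} (hp1 : 1 < p) (hp : (n:ℝ) < p) (hη : 1 ≤ η) :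
    ∃ C : ℝ, 0 < C ∧ ∀ (Ω : Set (Eu n)), IsOpen Ω → IsConnected Ω → (frontier Ω).Nonempty →
      ∀ α : ℝ, 0 < α → α ≤ 1 → ∀ f F g, ContL1pRep Ω p F g → TraceEq Ω α F f →
        VarCondOn Ω Ω α p η (C * ∫ z in Ω, ‖g z‖ ^ p) f := by
  obtain ⟨CM, hCM, hmor⟩ := morrey n p hp1 hp
  obtain ⟨h0, h1⟩ := theta_mem hη
  have hp0 : 0 < p := by linarith
  have hβ : 0 < 1 - n / p := by rw [sub_pos, div_lt_one hp0]; exact hp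
  have hω1 : (1 - 1 / (2 * η)) ^ (1 - n / p) < 1 := Real.rpow_lt_one h0.le h1 hβ
  have hω0 : 0 < (1 - 1 / (2 * η)) ^ (1 - n / p) := Real.rpow_pos_of_pos h0 _
  set ω := (1 - 1 / (2 * η)) ^ (1 - n / p) with hω
  have hω2 : 0 < (1 - ω)⁻¹ := inv_pos.2 (by linarith)
  set A := CM ^ p * ((1 - ω)⁻¹) ^ (p - 1) with hA
  have hA0 : 0 < A := by positivity
  set N := (12 * η ^ 2 + 1) ^ n with hN
  have hN0 : 0 < N := by positivity
  refine ⟨2 ^ p * (2 * (A * (N * (1 - ω)⁻¹))), by positivity,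
    fun Ω hΩ hc hf α hα0 hα f F g hF hT m c r hr hcΩ hdis x y hx hy => ?_⟩
  set J := ∫ z in Ω, ‖g z‖ ^ p with hJ
  have hJ0 : 0 ≤ J := integral_nonneg fun z => by positivity
  have key : ∀ x : Fin m → Eu n, (∀ i, Accessible Ω α (x i) ∧ x i ∈ cube (c i) (η * r i) ∧
        QVisible Ω (cube (c i) (r i)) (x i)) →
      ∑ i, |F (c i) - f (x i)| ^ p / r i ^ (p - n) ≤ A * (N * (1 - ω)⁻¹) * J := by
    intro x hx
    have hlim : Tendsto (fun K => ∑ i, |F (c i) - F (ray (1 - 1 / (2 * η)) (x i) (c i) K)| ^ p /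
        r i ^ (p - n)) atTop (nhds (∑ i, |F (c i) - f (x i)| ^ p / r i ^ (p - n))) := by
      refine tendsto_finsetSum _ fun i _ => Tendsto.div_const ?_ _
      refine ((hT (x i) (hx i).1 _ (ray_accessSeq hΩ hc hf hα0 hα (hr i) hη (hx i).2.2
        (hx i).2.1)).const_sub (F (c i))).abs.rpow_const (Or.inr hp0.le)
    -- The chains are estimated up to a finite index, uniformly in that index.
    refine le_of_tendsto' hlim fun K => ?_
    calc ∑ i, |F (c i) - F (ray (1 - 1 / (2 * η)) (x i) (c i) K)| ^ p / r i ^ (p - n)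
        ≤ ∑ i, A * ∑ k ∈ Finset.range K, ω ^ k * ∫ z in Metric.closedBall
            (ray (1 - 1 / (2 * η)) (x i) (c i) k) ((1 - 1 / (2 * η)) ^ k * r i / 2),
            ‖g z‖ ^ p :=
          Finset.sum_le_sum fun i _ => chain_estimate hp1 hp hη hCM (hmor Ω hΩ F g hF) (hr i)
            (hx i).2.2 (hx i).2.1 K
      _ = A * ∑ k ∈ Finset.range K, ω ^ k * ∑ i, ∫ z in Metric.closedBall
            (ray (1 - 1 / (2 * η)) (x i) (c i) k) ((1 - 1 / (2 * η)) ^ k * r i / 2),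
            ‖g z‖ ^ p := by
          rw [← Finset.mul_sum, Finset.sum_comm]
          simp only [Finset.mul_sum]
      _ ≤ A * ∑ k ∈ Finset.range K, ω ^ k * (N * J) := by
          refine mul_le_mul_of_nonneg_left (Finset.sum_le_sum fun k _ =>
            mul_le_mul_of_nonneg_left ?_ (by positivity)) hA0.le
          refine sum_setIntegral_le _ hF.2.2 (fun z => by positivity) _
            (fun i => Metric.isClosed_closedBall.measurableSet) (fun i _ => ?_)
            fun z t _ ht => ?_
          · have hpos : 0 < (1 - 1 / (2 * η)) ^ k * r i := mul_pos (by positivity) (hr i)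
            exact (Metric.closedBall_subset_closedBall (by linarith)).trans
              (ray_ball_subset (hx i).2.2 h0 h1.le k)
          · exact chain_overlap hΩ hf hη t c x r (fun i _ => hr i) (fun i _ => (hx i).1.1)
              (fun i _ j _ hij => hdis i j hij) (fun i _ => (hx i).2.1) (fun i _ => (hx i).2.2)
              k z ht
      _ ≤ A * ((1 - ω)⁻¹ * (N * J)) := by
          rw [← Finset.sum_mul]
          have hgeo : ∑ k ∈ Finset.range K, ω ^ k ≤ (1 - ω)⁻¹ := by
            rw [← tsum_geometric_of_lt_one hω0.le hω1]
            exact (summable_geometric_of_lt_one hω0.le hω1).sum_le_tsum _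
              fun k _ => by positivity
          gcongr
      _ = _ := by ring
  -- Both boundary points are compared with the centre `c i`.
  have hterm : ∀ i, |f (x i) - f (y i)| ^ p / (2 * r i) ^ (p - n) ≤
      2 ^ p * (|F (c i) - f (x i)| ^ p / r i ^ (p - n) +
        |F (c i) - f (y i)| ^ p / r i ^ (p - n)) := by
    intro i
    have h2 := abs_add_rpow_le (a := F (c i) - f (y i)) (b := F (c i) - f (x i)) hp0.le
    rw [show F (c i) - f (y i) - (F (c i) - f (x i)) = f (x i) - f (y i) by ring] at h2
    have h3 : r i ^ (p - n) ≤ (2 * r i) ^ (p - n) :=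
      Real.rpow_le_rpow (hr i).le (by linarith [hr i]) (by linarith)
    have h4 : 0 < r i ^ (p - n) := Real.rpow_pos_of_pos (hr i) _
    rw [← add_div, mul_div_assoc']
    refine (div_le_div_of_nonneg_left (by positivity) h4 h3).trans ?_
    rw [add_comm (|F (c i) - f (x i)| ^ p)]
    exact div_le_div_of_nonneg_right h2 h4.le
  refine (Finset.sum_le_sum fun i _ => hterm i).trans ?_
  rw [← Finset.mul_sum, Finset.sum_add_distrib]
  have hkx := key x hx
  have hky := key y hy
  calc _ ≤ 2 ^ p * (A * (N * (1 - ω)⁻¹) * J + A * (N * (1 - ω)⁻¹) * J) := by gcongr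
    _ = _ := by ring

/-! ### A Whitney family and the modulus of continuity of Sobolev functions -/

/-- A Whitney family: the cubes `Q(c, bdist c / 20)` are disjoint and the slightly larger cubes
`Q(c, 0.11 * bdist c)` cover `Ω`. -/
structure IsWhitney (Ω S : Set (Eu n)) : Prop where
  subset : S ⊆ Ω
  disj : S.PairwiseDisjoint fun c => Metric.closedBall c (bdist Ω c / 20)
  cover : ∀ x ∈ Ω, ∃ c ∈ S, dist x c ≤ 11 / 100 * bdist Ω c

lemma exists_whitney {Ω : Set (Eu n)} (hΩ : IsOpen Ω) (hf : (frontier Ω).Nonempty) :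
    ∃ S, IsWhitney Ω S := by
  obtain ⟨S, hS⟩ := zorn_subset
    {S : Set (Eu n) | S ⊆ Ω ∧ S.PairwiseDisjoint fun c => Metric.closedBall c (bdist Ω c / 20)}
    (fun T hT hc => ⟨⋃₀ T, ⟨sUnion_subset fun s hs => (hT hs).1,
      (pairwiseDisjoint_sUnion hc.directedOn).2 fun s hs => (hT hs).2⟩,
      fun s hs => subset_sUnion_of_mem hs⟩)
  refine ⟨S, hS.prop.1, hS.prop.2, fun x hx => ?_⟩
  have hxp := bdist_pos hΩ hf hx
  by_cases hxS : x ∈ S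
  · exact ⟨x, hxS, by rw [dist_self]; positivity⟩
  obtain ⟨c, hcS, hc⟩ : ∃ c ∈ S, ¬ Disjoint (Metric.closedBall x (bdist Ω x / 20))
      (Metric.closedBall c (bdist Ω c / 20)) := by
    by_contra! hcon
    have hmem : insert x S ∈ {S : Set (Eu n) | S ⊆ Ω ∧
        S.PairwiseDisjoint fun c => Metric.closedBall c (bdist Ω c / 20)} :=
      ⟨insert_subset hx hS.prop.1, hS.prop.2.insert fun c hc _ => hcon c hc⟩
    exact hxS (hS.eq_of_subset hmem (subset_insert _ _) ▸ mem_insert x S)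
  refine ⟨c, hcS, ?_⟩
  obtain ⟨z, hz1, hz2⟩ := not_disjoint_iff.1 hc
  rw [Metric.mem_closedBall] at hz1 hz2
  have h1 := dist_triangle_left x c z
  have h2 := bdist_le_add Ω x c
  linarith

lemma IsWhitney.countable {Ω S : Set (Eu n)} (hΩ : IsOpen Ω) (hf : (frontier Ω).Nonempty)
    (h : IsWhitney Ω S) : S.Countable := by
  refine h.disj.countable_of_nonempty_interior fun c hc => ?_
  have := bdist_pos hΩ hf (h.subset hc)
  exact ⟨c, interior_mono Metric.ball_subset_closedBall
    (by rw [Metric.isOpen_ball.interior_eq]; exact Metric.mem_ball_self (by positivity))⟩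

/-- The cubes of radius `2 / 5 * bdist Ω c` about the Whitney centres have bounded overlap: those
containing `z` have sizes comparable with `bdist Ω z`, so the volume count applies. -/
lemma IsWhitney.overlap {Ω S : Set (Eu n)} (hΩ : IsOpen Ω) (hf : (frontier Ω).Nonempty)
    (h : IsWhitney Ω S) {z : Eu n} (t : Finset (Eu n)) (htS : (t : Set (Eu n)) ⊆ S)
    (ht : ∀ c ∈ t, dist z c ≤ 2 / 5 * bdist Ω c) : (t.card : ℝ) ≤ 20 ^ n := by
  rcases t.eq_empty_or_nonempty with rfl | ⟨c₀, hc₀⟩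
  · simp
  have hpos : ∀ c ∈ t, 0 < bdist Ω c := fun c hc => bdist_pos hΩ hf (h.subset (htS hc))
  have h1 : ∀ c ∈ t, bdist Ω c ≤ 5 / 3 * bdist Ω z := by
    intro c hc
    have := bdist_le_add Ω c z
    rw [dist_comm] at this
    linarith [ht c hc]
  have h2 : ∀ c ∈ t, bdist Ω z ≤ 7 / 5 * bdist Ω c := by
    intro c hc
    have := bdist_le_add Ω z c
    linarith [ht c hc]
  have hz : 0 < bdist Ω z := by linarith [h1 _ hc₀, hpos _ hc₀]
  have := count_le t id (z := z) (ρ := bdist Ω z / 28) (M := 19) (by positivity) (by norm_num)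
    (fun c hc => ?_) fun c hc d hd hcd => ?_
  · norm_num at this
    exact this
  · rw [id, dist_comm]; linarith [ht c hc, h1 c hc]
  · exact (h.disj (htS hc) (htS hd) hcd).mono
      (Metric.closedBall_subset_closedBall (by linarith [h2 c hc]))
      (Metric.closedBall_subset_closedBall (by linarith [h2 d hd]))

lemma IsWhitney.finite {Ω S : Set (Eu n)} (hΩ : IsOpen Ω) (hf : (frontier Ω).Nonempty)
    (h : IsWhitney Ω S) (z : Eu n) : {c ∈ S | dist z c ≤ 2 / 5 * bdist Ω c}.Finite := by
  by_contra hinf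
  obtain ⟨t, hts, htc⟩ := Set.Infinite.exists_subset_card_eq hinf (20 ^ n + 1)
  have := h.overlap hΩ hf (z := z) t (fun c hc => (hts hc).1) fun c hc => (hts hc).2
  rw [htc] at this
  push_cast at this
  linarith

lemma closedBall_bdist_subset {Ω : Set (Eu n)} (hΩ : IsOpen Ω) (hf : (frontier Ω).Nonempty)
    {c : Eu n} (hc : c ∈ Ω) {t : ℝ} (ht : t < 1) : Metric.closedBall c (t * bdist Ω c) ⊆ Ω := by
  have := bdist_pos hΩ hf hc
  exact (Metric.closedBall_subset_ball (by nlinarith)).trans (ball_bdist_subset hΩ hc)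

/-- If a curve of length at least `0.15 * bdist c` meets `Q(c, 0.15 * bdist c)`, then its part in
`Q(c, 0.3 * bdist c)` has subhyperbolic length at least of the order of `bdist c ^ α`. -/
lemma AdmCurve.length_near {Ω : Set (Eu n)} (hΩ : IsOpen Ω) (hf : (frontier Ω).Nonempty)
    {α : ℝ} (hα0 : 0 < α) (hα : α ≤ 1) {L : ℝ} {γ : ℝ → Eu n} (h : AdmCurve Ω L γ)
    {c : Eu n} (hc : c ∈ Ω) (hL : 15 / 100 * bdist Ω c ≤ L) {s₀ : ℝ} (hs₀ : s₀ ∈ Icc 0 L)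
    (hsc : dist (γ s₀) c ≤ 15 / 100 * bdist Ω c) :
    bdist Ω c ^ α ≤ 26 *
      ∫ s in Icc 0 L ∩ γ ⁻¹' Metric.closedBall c (3 / 10 * bdist Ω c),
        bdist Ω (γ s) ^ (α - 1) := by
  have hδ := bdist_pos hΩ hf hc
  set δ := bdist Ω c with hδd
  obtain ⟨a, ha0, haL, hab⟩ : ∃ a, 0 ≤ a ∧ a + 75 / 1000 * δ ≤ L ∧
      ∀ s ∈ Icc a (a + 75 / 1000 * δ), |s - s₀| ≤ 15 / 100 * δ := by
    rcases le_total s₀ (L / 2) with hs | hs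
    · refine ⟨s₀, hs₀.1, by linarith, fun s hs' => ?_⟩
      rw [abs_le]; constructor <;> linarith [hs'.1, hs'.2]
    · refine ⟨s₀ - 75 / 1000 * δ, by linarith, by linarith [hs₀.2], fun s hs' => ?_⟩
      rw [abs_le]; constructor <;> linarith [hs'.1, hs'.2]
  set b := a + 75 / 1000 * δ with hb
  have hmem : Icc a b ⊆ Icc 0 L ∩ γ ⁻¹' Metric.closedBall c (3 / 10 * δ) := by
    intro s hs
    have hsL : s ∈ Icc (0:ℝ) L := ⟨ha0.trans hs.1, hs.2.trans haL⟩
    refine ⟨hsL, ?_⟩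
    rw [mem_preimage, Metric.mem_closedBall]
    have h1 := dist_triangle (γ s) (γ s₀) c
    have h2 := h.dist_le hsL hs₀
    linarith [hab s hs]
  have hint : IntegrableOn (fun s => bdist Ω (γ s) ^ (α - 1)) (Icc 0 L) :=
    (h.continuousOn hΩ hf α).integrableOn_Icc
  have hmono : ∫ s in Icc a b, bdist Ω (γ s) ^ (α - 1) ≤
      ∫ s in Icc 0 L ∩ γ ⁻¹' Metric.closedBall c (3 / 10 * δ), bdist Ω (γ s) ^ (α - 1) :=
    setIntegral_mono_set (hint.mono_set inter_subset_left)
      (Eventually.of_forall fun s => Real.rpow_nonneg (bdist_nonneg _ _) _)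
      (Eventually.of_forall hmem)
  have hlow : (13 / 10 * δ) ^ (α - 1) * (75 / 1000 * δ) ≤
      ∫ s in Icc a b, bdist Ω (γ s) ^ (α - 1) := by
    have h1 : ∫ s in Icc a b, (13 / 10 * δ) ^ (α - 1) = (13 / 10 * δ) ^ (α - 1) *
        (75 / 1000 * δ) := by
      rw [setIntegral_const, smul_eq_mul, Real.volume_real_Icc_of_le (by rw [hb]; linarith), hb]
      ring
    rw [← h1]
    refine setIntegral_mono_on (integrableOn_const (by simp))
      (hint.mono_set (hmem.trans inter_subset_left)) measurableSet_Icc fun s hs => ?_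
    have h2 := (hmem hs).2
    rw [mem_preimage, Metric.mem_closedBall] at h2
    have h3 := bdist_le_add Ω (γ s) c
    exact Real.rpow_le_rpow_of_nonpos (bdist_pos hΩ hf (h.2.2 s (hmem hs).1)) (by linarith)
      (by linarith)
  have hk : δ ^ α ≤ 26 * ((13 / 10 * δ) ^ (α - 1) * (75 / 1000 * δ)) := by
    rw [Real.mul_rpow (by norm_num) hδ.le]
    have h1 : (13 / 10 : ℝ) ^ (-1 : ℝ) ≤ (13 / 10 : ℝ) ^ (α - 1) :=
      Real.rpow_le_rpow_of_exponent_le (by norm_num) (by linarith)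
    rw [Real.rpow_neg_one] at h1
    have h2 : δ ^ (α - 1) * δ = δ ^ α := by
      rw [← Real.rpow_add_one hδ.ne', sub_add_cancel]
    have h3 : 0 < δ ^ α := Real.rpow_pos_of_pos hδ _
    calc δ ^ α ≤ 26 * (75 / 1000) * (13 / 10)⁻¹ * δ ^ α := by nlinarith
      _ ≤ 26 * (75 / 1000) * (13 / 10 : ℝ) ^ (α - 1) * δ ^ α := by gcongr
      _ = _ := by rw [← h2]; ring
  linarith

/-- Hölder continuity of Sobolev functions along curves: the image of the curve is an interval,
covered by the images of the Whitney cubes meeting the curve. -/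
lemma modulus_curve {p : ℝ} (hp1 : 1 < p) (hp : (n:ℝ) < p) {CM : ℝ} (hCM : 0 < CM)
    {Ω : Set (Eu n)} (hΩ : IsOpen Ω) (hf : (frontier Ω).Nonempty) {α : ℝ}
    (hα : α = (p - n) / (p - 1)) (hα0 : 0 < α) (hα1 : α ≤ 1)
    {F : Eu n → ℝ} {g : Eu n → Eu n} (hF : ContL1pRep Ω p F g)
    (hmor : ∀ (c : Eu n) (r : ℝ), 0 < r → Metric.closedBall c r ⊆ Ω →
      ∀ y ∈ Metric.closedBall c r, ∀ z ∈ Metric.closedBall c r,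
        |F y - F z| ≤ CM * r ^ (1 - n / p) *
          (∫ z in Metric.closedBall c r, ‖g z‖ ^ p) ^ (1 / p))
    {L : ℝ} {γ : ℝ → Eu n} (h : AdmCurve Ω L γ) {D : ℝ}
    (hD1 : ∫ s in (0:ℝ)..L, bdist Ω (γ s) ^ (α - 1) ≤ D)
    (hD2 : ‖γ 0 - γ L‖ ^ α ≤ D) :
    |F (γ 0) - F (γ L)| ≤ 52 * 20 ^ n * CM * D ^ (1 - 1 / p) *
      (∫ z in Ω, ‖g z‖ ^ p) ^ (1 / p) := by
  obtain ⟨S, hS⟩ := exists_whitney hΩ hf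
  have hp0 : 0 < p := by linarith
  have hβ : 0 < 1 - n / p := by rw [sub_pos, div_lt_one hp0]; exact hp
  have hαβ : α * (1 - 1 / p) = 1 - n / p := by
    have : p - 1 ≠ 0 := by linarith
    rw [hα]; field_simp
  have hq : 0 < 1 - 1 / p := by rw [sub_pos, div_lt_one hp0]; exact hp1
  set J := ∫ z in Ω, ‖g z‖ ^ p with hJ
  have hJ0 : 0 ≤ J := integral_nonneg fun z => by positivity
  have hsubJ : ∀ B ⊆ Ω, ∫ z in B, ‖g z‖ ^ p ≤ J := fun B hB =>
    setIntegral_mono_set hF.2.2 (Eventually.of_forall fun z => by positivity)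
      (Eventually.of_forall hB)
  have hD0 : 0 ≤ D := le_trans (Real.rpow_nonneg (norm_nonneg _) _) hD2
  have hN1 : (1:ℝ) ≤ 20 ^ n := one_le_pow₀ (by norm_num)
  have hL0 := h.1
  set T := γ '' Icc 0 L with hT
  have hTc : IsCompact T := isCompact_Icc.image_of_continuousOn h.2.1.continuousOn
  have hTΩ : T ⊆ Ω := image_subset_iff.2 h.2.2
  have hm0 : (0:ℝ) ∈ Icc 0 L := ⟨le_rfl, hL0⟩
  have hmL : L ∈ Icc 0 L := ⟨hL0, le_rfl⟩
  by_cases hcase : ∃ c ∈ S, (∃ s₀ ∈ Icc 0 L, dist (γ s₀) c ≤ 15 / 100 * bdist Ω c) ∧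
      L < 15 / 100 * bdist Ω c
  · -- the curve is short and stays deep inside `Ω`, so a single cube suffices
    obtain ⟨c, hcS, ⟨s₀, hs₀, hsc⟩, hLc⟩ := hcase
    have hd := h.dist_le hm0 hmL
    rw [zero_sub, abs_neg, abs_of_nonneg hL0] at hd
    have h0 := h.dist_le hm0 hs₀
    rw [zero_sub, abs_neg, abs_of_nonneg hs₀.1] at h0
    rcases eq_or_ne (γ 0) (γ L) with he | he
    · rw [he, sub_self, abs_zero]; positivity
    have hR : 0 < dist (γ 0) (γ L) := dist_pos.2 he
    set R := dist (γ 0) (γ L) with hRd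
    have hball : Metric.closedBall (γ 0) R ⊆ Ω := by
      refine subset_trans (Metric.closedBall_subset_closedBall' (ε₂ := 9 / 10 * bdist Ω c) ?_)
        (closedBall_bdist_subset hΩ hf (hS.subset hcS) (by norm_num))
      have := dist_triangle (γ 0) (γ s₀) c
      linarith [hs₀.2]
    have h1 := hmor (γ 0) R hR hball (γ 0) (Metric.mem_closedBall_self hR.le) (γ L)
      (by rw [Metric.mem_closedBall, dist_comm])
    have h2 : R ^ (1 - n / p) ≤ D ^ (1 - 1 / p) := by
      rw [← hαβ, Real.rpow_mul hR.le]
      refine Real.rpow_le_rpow (by positivity) ?_ hq.le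
      rwa [← dist_eq_norm] at hD2
    have h3 := Real.rpow_le_rpow (by positivity) (hsubJ _ hball) (by positivity : 0 ≤ 1 / p)
    calc _ ≤ CM * R ^ (1 - n / p) *
          (∫ z in Metric.closedBall (γ 0) R, ‖g z‖ ^ p) ^ (1 / p) := h1
      _ ≤ CM * D ^ (1 - 1 / p) * J ^ (1 / p) := by gcongr
      _ = 1 * (CM * D ^ (1 - 1 / p) * J ^ (1 / p)) := (one_mul _).symm
      _ ≤ (52 * 20 ^ n) * (CM * D ^ (1 - 1 / p) * J ^ (1 / p)) :=
          mul_le_mul_of_nonneg_right (by linarith) (by positivity)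
      _ = _ := by ring
  push Not at hcase
  -- a finite cover of the curve by Whitney cubes meeting it
  obtain ⟨A, hAS, hAT, hAc⟩ : ∃ A : Finset (Eu n), (∀ c ∈ A, c ∈ S) ∧
      (∀ c ∈ A, ∃ s₀ ∈ Icc 0 L, dist (γ s₀) c ≤ 15 / 100 * bdist Ω c) ∧
      ∀ z ∈ T, ∃ c ∈ A, dist z c ≤ 15 / 100 * bdist Ω c := by
    classical
    obtain ⟨t, ht⟩ := hTc.elim_finite_subcover
      (fun c : S => Metric.ball (c : Eu n) (15 / 100 * bdist Ω c)) (fun _ => Metric.isOpen_ball)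
      (fun z hz => by
        obtain ⟨c, hc, hzc⟩ := hS.cover z (hTΩ hz)
        have := bdist_pos hΩ hf (hS.subset hc)
        exact mem_iUnion.2 ⟨⟨c, hc⟩, by rw [Metric.mem_ball]; dsimp only; linarith⟩)
    refine ⟨(t.image Subtype.val).filter
      (fun c => ∃ s₀ ∈ Icc 0 L, dist (γ s₀) c ≤ 15 / 100 * bdist Ω c), fun c hc => ?_,
      fun c hc => (Finset.mem_filter.1 hc).2, fun z hz => ?_⟩
    · obtain ⟨d, -, rfl⟩ := Finset.mem_image.1 (Finset.mem_filter.1 hc).1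
      exact d.2
    · obtain ⟨c, hc, hzc⟩ := mem_iUnion₂.1 (ht hz)
      obtain ⟨s, hs, rfl⟩ := hz
      have hle := (Metric.mem_ball.1 hzc).le
      exact ⟨c, Finset.mem_filter.2 ⟨Finset.mem_image_of_mem _ hc, s, hs, hle⟩, hle⟩
  have hδ : ∀ c ∈ A, 0 < bdist Ω c := fun c hc => bdist_pos hΩ hf (hS.subset (hAS c hc))
  set B : Eu n → Set (Eu n) := fun c => Metric.closedBall c (15 / 100 * bdist Ω c) with hB
  have hBΩ : ∀ c ∈ A, B c ⊆ Ω := fun c hc =>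
    closedBall_bdist_subset hΩ hf (hS.subset (hAS c hc)) (by norm_num)
  set I : Eu n → ℝ := fun c => ∫ z in B c, ‖g z‖ ^ p with hI
  have hI0 : ∀ c, 0 ≤ I c := fun c => integral_nonneg fun z => by positivity
  have hosc : ∀ c ∈ A, ∀ z ∈ B c, |F z - F c| ≤ CM * (bdist Ω c ^ (1 - n / p) * I c ^ (1 / p)) := by
    intro c hc z hz
    have hpos := hδ c hc
    refine (hmor c _ (by positivity) (hBΩ c hc) z hz c
      (Metric.mem_closedBall_self (by positivity))).trans ?_
    rw [mul_assoc]
    have : (15 / 100 * bdist Ω c) ^ (1 - n / p) ≤ bdist Ω c ^ (1 - n / p) :=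
      Real.rpow_le_rpow (by positivity) (by linarith) hβ.le
    have := hI0 c
    gcongr
  -- The interval between the end values is covered by the images of the cubes, so its length is at
  -- most the sum of the lengths of the intervals containing these images.
  have hsum : |F (γ 0) - F (γ L)| ≤
      2 * CM * ∑ c ∈ A, bdist Ω c ^ (1 - n / p) * I c ^ (1 / p) := by
    have h1 : uIcc (F (γ 0)) (F (γ L)) ⊆
        ⋃ c ∈ A, Metric.closedBall (F c) (CM * (bdist Ω c ^ (1 - n / p) * I c ^ (1 / p))) := by
      have h2 : ContinuousOn (F ∘ γ) (uIcc 0 L) := by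
        rw [uIcc_of_le hL0]
        exact hF.1.comp h.2.1.continuousOn h.2.2
      refine (intermediate_value_uIcc h2).trans ?_
      rw [uIcc_of_le hL0]
      rintro _ ⟨s, hs, rfl⟩
      obtain ⟨c, hc, hsc⟩ := hAc (γ s) ⟨s, hs, rfl⟩
      refine mem_iUnion₂.2 ⟨c, hc, ?_⟩
      rw [Metric.mem_closedBall, Real.dist_eq]
      exact hosc c hc _ hsc
    have h3 := measureReal_mono (μ := volume) h1
      ((A.finite_toSet.isCompact_biUnion fun c _ => isCompact_closedBall _ _).measure_lt_top.ne)
    have h4 := measureReal_biUnion_finset_le (μ := volume) A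
      fun c => Metric.closedBall (F c) (CM * (bdist Ω c ^ (1 - n / p) * I c ^ (1 / p)))
    have h5 : volume.real (uIcc (F (γ 0)) (F (γ L))) = |F (γ 0) - F (γ L)| := by
      rw [Real.volume_real_interval, abs_sub_comm]
    rw [h5] at h3
    refine h3.trans (h4.trans ?_)
    rw [Finset.mul_sum]
    refine Finset.sum_le_sum fun c hc => ?_
    have := hI0 c
    have := hδ c hc
    rw [Measure.real, Real.volume_closedBall, ENNReal.toReal_ofReal (by positivity)]
    linarith
  -- Hölder's inequality and bounded overlap
  have hhol : ∑ c ∈ A, bdist Ω c ^ (1 - n / p) * I c ^ (1 / p) ≤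
      (∑ c ∈ A, bdist Ω c ^ α) ^ (1 - 1 / p) * (∑ c ∈ A, I c) ^ (1 / p) := by
    have hpq : (1 - 1 / p)⁻¹.HolderConjugate p := by
      rw [Real.holderConjugate_iff]
      refine ⟨(one_lt_inv₀ hq).2 (by have : 0 < 1 / p := by positivity
                                     linarith), ?_⟩
      rw [inv_inv]; ring
    have h1 := Real.inner_le_Lp_mul_Lq_of_nonneg A hpq
      (f := fun c => bdist Ω c ^ (1 - n / p)) (g := fun c => I c ^ (1 / p))
      (fun c hc => Real.rpow_nonneg (bdist_nonneg _ _) _)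
      (fun c hc => Real.rpow_nonneg (hI0 c) _)
    refine h1.trans (le_of_eq ?_)
    congr 2
    · refine Finset.sum_congr rfl fun c hc => ?_
      rw [← Real.rpow_mul (bdist_nonneg _ _), ← hαβ, mul_assoc, mul_inv_cancel₀ hq.ne', mul_one]
    · rw [one_div, inv_inv]
    · refine Finset.sum_congr rfl fun c hc => ?_
      rw [← Real.rpow_mul (hI0 c), one_div, inv_mul_cancel₀ hp0.ne', Real.rpow_one]
  have hIs : ∑ c ∈ A, I c ≤ 20 ^ n * J := by
    refine sum_setIntegral_le A hF.2.2 (fun z => by positivity) B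
      (fun c => Metric.isClosed_closedBall.measurableSet) hBΩ fun z t ht htz => ?_
    refine hS.overlap hΩ hf (z := z) t (fun c hc => hAS c (ht hc)) fun c hc => ?_
    have h1 := htz c hc
    have h2 := hδ c (ht hc)
    rw [hB, Metric.mem_closedBall] at h1
    linarith
  have hδs : ∑ c ∈ A, bdist Ω c ^ α ≤ 26 * (20 ^ n * D) := by
    have h1 : ∀ c ∈ A, bdist Ω c ^ α ≤ 26 *
        ∫ s in Icc 0 L ∩ γ ⁻¹' Metric.closedBall c (3 / 10 * bdist Ω c),
          bdist Ω (γ s) ^ (α - 1) := by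
      intro c hc
      obtain ⟨s₀, hs₀, hsc⟩ := hAT c hc
      exact h.length_near hΩ hf hα0 hα1 (hS.subset (hAS c hc))
        (hcase c (hAS c hc) ⟨s₀, hs₀, hsc⟩) hs₀ hsc
    refine (Finset.sum_le_sum h1).trans ?_
    rw [← Finset.mul_sum]
    refine mul_le_mul_of_nonneg_left ?_ (by norm_num)
    rw [intervalIntegral.integral_of_le hL0, ← integral_Icc_eq_integral_Ioc] at hD1
    refine le_trans ?_ (mul_le_mul_of_nonneg_left hD1 (by positivity))
    refine sum_setIntegral_le A (h.continuousOn hΩ hf α).integrableOn_Icc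
      (fun s => Real.rpow_nonneg (bdist_nonneg _ _) _) _ (fun c => ?_)
      (fun c _ => inter_subset_left) fun s t ht hts => ?_
    · exact (h.2.1.continuousOn.preimage_isClosed_of_isClosed isClosed_Icc
        Metric.isClosed_closedBall).measurableSet
    · refine hS.overlap hΩ hf (z := γ s) t (fun c hc => hAS c (ht hc)) fun c hc => ?_
      have h1 := (hts c hc).2
      have h2 := hδ c (ht hc)
      rw [mem_preimage, Metric.mem_closedBall] at h1
      linarith
  have hfin : (∑ c ∈ A, bdist Ω c ^ α) ^ (1 - 1 / p) * (∑ c ∈ A, I c) ^ (1 / p) ≤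
      26 * 20 ^ n * (D ^ (1 - 1 / p) * J ^ (1 / p)) := by
    have e1 : (0:ℝ) ≤ ∑ c ∈ A, I c := Finset.sum_nonneg fun c _ => hI0 c
    have e2 : (0:ℝ) ≤ ∑ c ∈ A, bdist Ω c ^ α :=
      Finset.sum_nonneg fun c _ => Real.rpow_nonneg (bdist_nonneg _ _) _
    have hmul : (26 * (20:ℝ) ^ n) ^ (1 - 1 / p) * (26 * 20 ^ n) ^ (1 / p) = 26 * 20 ^ n := by
      rw [← Real.rpow_add (by positivity)]; simp
    calc _ ≤ (26 * 20 ^ n * D) ^ (1 - 1 / p) * (26 * 20 ^ n * J) ^ (1 / p) := by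
          gcongr
          · linarith
          · refine hIs.trans ?_
            have : 0 ≤ 20 ^ n * J := by positivity
            linarith
      _ = ((26 * (20:ℝ) ^ n) ^ (1 - 1 / p) * (26 * 20 ^ n) ^ (1 / p)) *
          (D ^ (1 - 1 / p) * J ^ (1 / p)) := by
          rw [Real.mul_rpow (by positivity) hD0, Real.mul_rpow (by positivity) hJ0]; ring
      _ = _ := by rw [hmul]
  calc _ ≤ 2 * CM * (26 * 20 ^ n * (D ^ (1 - 1 / p) * J ^ (1 / p))) :=
        hsum.trans (mul_le_mul_of_nonneg_left (hhol.trans hfin) (by positivity))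
    _ = _ := by ring

/-- Hölder continuity of functions in `L¹_p(Ω)` with respect to `dTil`. -/
lemma modulus (n : ℕ) {p : ℝ} (hp1 : 1 < p) (hp : (n:ℝ) < p) :
    ∃ C : ℝ, 0 < C ∧ ∀ (Ω : Set (Eu n)), IsOpen Ω → IsConnected Ω → (frontier Ω).Nonempty →
      ∀ α : ℝ, α = (p - n) / (p - 1) → 0 < α → α ≤ 1 → ∀ F g, ContL1pRep Ω p F g →
      ∀ x ∈ Ω, ∀ y ∈ Ω, |F x - F y| ≤ C * dTil Ω α x y ^ (1 - 1 / p) *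
        (∫ z in Ω, ‖g z‖ ^ p) ^ (1 / p) := by
  obtain ⟨CM, hCM, hmor⟩ := morrey n p hp1 hp
  refine ⟨52 * 20 ^ n * CM, by positivity,
    fun Ω hΩ hc hf α hα hα0 hα1 F g hF x hx y hy => ?_⟩
  have hp0 : 0 < p := by linarith
  have hq : 0 < 1 - 1 / p := by rw [sub_pos, div_lt_one hp0]; exact hp1
  have hkey : ∀ ε > (0:ℝ), |F x - F y| ≤ 52 * 20 ^ n * CM * (dTil Ω α x y + ε) ^ (1 - 1 / p) *
        (∫ z in Ω, ‖g z‖ ^ p) ^ (1 / p) := by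
    intro ε hε
    obtain ⟨d, hd, hd'⟩ := Real.lt_sInf_add_pos (subLenSet_nonempty hΩ hc hf hα1 hx hy) hε
    obtain ⟨L, γ, h, rfl, rfl, rfl⟩ := subLenSet_iff hd
    have hn : 0 ≤ ‖γ 0 - γ L‖ ^ α := by positivity
    have := dSub_nonneg Ω α (γ 0) (γ L)
    refine modulus_curve hp1 hp hCM hΩ hf hα hα0 hα1 hF (hmor Ω hΩ F g hF) h ?_ ?_
    · unfold dTil dSub; linarith
    · unfold dTil; linarith
  have hcont : Continuous fun ε : ℝ => 52 * 20 ^ n * CM * (dTil Ω α x y + ε) ^ (1 - 1 / p) *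
        (∫ z in Ω, ‖g z‖ ^ p) ^ (1 / p) :=
    (continuous_const.mul ((continuous_const.add continuous_id).rpow_const
      fun _ => Or.inr hq.le)).mul continuous_const
  have hlim := (hcont.tendsto 0).mono_left (nhdsWithin_le_nhds (s := Ioi 0))
  rw [add_zero] at hlim
  exact ge_of_tendsto hlim (eventually_nhdsWithin_of_forall hkey)

/-! ### Limits of curves of bounded subhyperbolic length, and continuity of traces -/

lemma AdmCurve.reverse {Ω : Set (Eu n)} {L : ℝ} {γ : ℝ → Eu n} (h : AdmCurve Ω L γ) :
    AdmCurve Ω L (fun u => γ (L - u)) := by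
  have hm : ∀ u ∈ Icc (0:ℝ) L, L - u ∈ Icc (0:ℝ) L := fun u hu =>
    ⟨by linarith [hu.2], by linarith [hu.1]⟩
  refine ⟨h.1, ?_, fun u hu => h.2.2 _ (hm u hu)⟩
  refine LipschitzOnWith.of_dist_le_mul fun u hu v hv => ?_
  have := h.dist_le (hm u hu) (hm v hv)
  rw [show L - u - (L - v) = v - u by ring] at this
  rw [Real.dist_eq, abs_sub_comm]
  simpa using this

lemma AdmCurve.integral_mono {Ω : Set (Eu n)} (hΩ : IsOpen Ω) (hf : (frontier Ω).Nonempty)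
    (α : ℝ) {L : ℝ} {γ : ℝ → Eu n} (h : AdmCurve Ω L γ) {s t : ℝ} (hs : 0 ≤ s) (hst : s ≤ t)
    (ht : t ≤ L) : ∫ u in (0:ℝ)..s, bdist Ω (γ u) ^ (α - 1) ≤
      ∫ u in (0:ℝ)..t, bdist Ω (γ u) ^ (α - 1) := by
  rw [← intervalIntegral.integral_add_adjacent_intervals
    (h.integrable hΩ hf α le_rfl hs (hst.trans ht)) (h.integrable hΩ hf α hs hst ht)]
  have := intervalIntegral.integral_nonneg hst (μ := volume)
    (f := fun u => bdist Ω (γ u) ^ (α - 1)) fun u _ => Real.rpow_nonneg (bdist_nonneg _ _) _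
  linarith

lemma AdmCurve.dSub_le_abs {Ω : Set (Eu n)} (hΩ : IsOpen Ω) (hf : (frontier Ω).Nonempty)
    (α : ℝ) {L : ℝ} {γ : ℝ → Eu n} (h : AdmCurve Ω L γ) {s t : ℝ} (hs : s ∈ Icc 0 L)
    (ht : t ∈ Icc 0 L) : dSub Ω α (γ s) (γ t) ≤
      |(∫ u in (0:ℝ)..s, bdist Ω (γ u) ^ (α - 1)) -
        ∫ u in (0:ℝ)..t, bdist Ω (γ u) ^ (α - 1)| := by
  wlog hst : s ≤ t generalizing s t
  · rw [dSub_comm hΩ hf, abs_sub_comm]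
    exact this ht hs (le_of_not_ge hst)
  have h1 := h.dSub_le_integral hΩ hf α hs.1 hst ht.2
  rw [abs_sub_comm]
  refine le_trans ?_ (le_abs_self _)
  rwa [intervalIntegral.integral_interval_sub_left
    (h.integrable hΩ hf α le_rfl ht.1 ht.2) (h.integrable hΩ hf α le_rfl hs.1 hs.2)]

lemma AdmCurve.dSub_le_total {Ω : Set (Eu n)} (hΩ : IsOpen Ω) (hf : (frontier Ω).Nonempty)
    (α : ℝ) {L : ℝ} {γ : ℝ → Eu n} (h : AdmCurve Ω L γ) {s t : ℝ} (hs : s ∈ Icc 0 L)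
    (ht : t ∈ Icc 0 L) : dSub Ω α (γ s) (γ t) ≤ ∫ u in (0:ℝ)..L, bdist Ω (γ u) ^ (α - 1) := by
  refine (h.dSub_le_abs hΩ hf α hs ht).trans ?_
  have e : ∀ s ∈ Icc 0 L, 0 ≤ ∫ u in (0:ℝ)..s, bdist Ω (γ u) ^ (α - 1) := fun s hs =>
    intervalIntegral.integral_nonneg hs.1 fun u _ => Real.rpow_nonneg (bdist_nonneg _ _) _
  have h1 := h.integral_mono hΩ hf α hs.1 hs.2 le_rfl
  have h2 := h.integral_mono hΩ hf α ht.1 ht.2 le_rfl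
  have h3 := e s hs
  have h4 := e t ht
  rw [abs_le]
  constructor <;> linarith

/-- On a stretch `[ℓ/2, ℓ]` of arc length, a curve of subhyperbolic length at most `δ` is
somewhere at a distance from the boundary that depends only on `ℓ` and `δ`. -/
lemma AdmCurve.exists_far {Ω : Set (Eu n)} (hΩ : IsOpen Ω) (hf : (frontier Ω).Nonempty)
    {α : ℝ} (hα : α < 1) {δ ℓ : ℝ} (hδ : 0 ≤ δ) (hℓ : 0 < ℓ) :
    ∃ c : ℝ, 0 < c ∧ ∀ (L : ℝ) (γ : ℝ → Eu n), AdmCurve Ω L γ → ℓ ≤ L →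
      ∫ u in (0:ℝ)..L, bdist Ω (γ u) ^ (α - 1) ≤ δ → ∃ s ∈ Icc (ℓ / 2) ℓ, c ≤ bdist Ω (γ s) := by
  have hb : 0 < 2 * (δ + 1) / ℓ := by positivity
  refine ⟨(2 * (δ + 1) / ℓ) ^ (α - 1)⁻¹, by positivity, fun L γ h hL hI => ?_⟩
  by_contra! hcon
  have h1 : ∀ s ∈ Icc (ℓ / 2) ℓ, 2 * (δ + 1) / ℓ ≤ bdist Ω (γ s) ^ (α - 1) := by
    intro s hs
    have hpos := bdist_pos hΩ hf (h.2.2 s ⟨by linarith [hs.1], by linarith [hs.2]⟩)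
    have := Real.rpow_le_rpow_of_nonpos hpos (hcon s hs).le (by linarith : α - 1 ≤ 0)
    rwa [Real.rpow_inv_rpow hb.le (by linarith)] at this
  have h2 := intervalIntegral.integral_mono_on (by linarith : ℓ / 2 ≤ ℓ)
    (intervalIntegrable_const (μ := volume)) (h.integrable hΩ hf α (by linarith) (by linarith) hL) h1
  rw [intervalIntegral.integral_const, smul_eq_mul] at h2
  have h3 : (ℓ - ℓ / 2) * (2 * (δ + 1) / ℓ) = δ + 1 := by field_simp; ring
  have h4 := intervalIntegral.integral_interval_sub_left
    (h.integrable hΩ hf α le_rfl hℓ.le hL)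
    (h.integrable hΩ hf α le_rfl (by linarith : 0 ≤ ℓ / 2) (by linarith))
  have h5 : 0 ≤ ∫ u in (0:ℝ)..(ℓ / 2), bdist Ω (γ u) ^ (α - 1) :=
    intervalIntegral.integral_nonneg (by linarith) fun u _ => Real.rpow_nonneg (bdist_nonneg _ _) _
  have h6 := h.integral_mono hΩ hf α hℓ.le hL le_rfl
  linarith

/-- A compactness principle: if curves of subhyperbolic length at most `δ` and arc length at
least `ℓ` start at points converging to `x ∈ ∂Ω`, then limits of suitable points of these
curves form a sequence that accesses `x`. -/
lemma access_limit {Ω : Set (Eu n)} (hΩ : IsOpen Ω) (hc : IsConnected Ω)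
    (hf : (frontier Ω).Nonempty) {α : ℝ} (hα0 : 0 < α) (hα : α < 1) {δ ℓ : ℝ} (hδ : 0 ≤ δ)
    (hℓ : 0 < ℓ) {x : Eu n} {L : ℕ → ℝ} {γ : ℕ → ℝ → Eu n} (h : ∀ k, AdmCurve Ω (L k) (γ k))
    (hL : ∀ k, ℓ ≤ L k) (hI : ∀ k, ∫ u in (0:ℝ)..(L k), bdist Ω (γ k u) ^ (α - 1) ≤ δ)
    (h0 : Tendsto (fun k => γ k 0) atTop (nhds x)) :
    ∃ (w : ℕ → Eu n) (σ : ℕ → ℕ → ℝ), AccessSeq Ω α x w ∧ (∀ i k, σ i k ∈ Icc 0 (L k)) ∧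
      ∀ i, Tendsto (fun k => γ k (σ i k)) (hyperfilter ℕ : Ultrafilter ℕ) (nhds (w i)) := by
  have hUle : ((hyperfilter ℕ : Ultrafilter ℕ) : Filter ℕ) ≤ atTop := by
    rw [← Nat.cofinite_eq_atTop]; exact hyperfilter_le_cofinite
  have hℓi : ∀ i : ℕ, 0 < ℓ / 2 ^ i := fun i => by positivity
  have hℓle : ∀ i : ℕ, ℓ / 2 ^ i ≤ ℓ := fun i => div_le_self hℓ.le (one_le_pow₀ (by norm_num))
  choose c hcpos hcfar using fun i : ℕ => AdmCurve.exists_far hΩ hf hα hδ (hℓi i)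
  choose σ hσ hσc using fun i k => hcfar i (L k) (γ k) (h k) ((hℓle i).trans (hL k)) (hI k)
  have hσ0 : ∀ i k, 0 ≤ σ i k := fun i k => by
    have := (hσ i k).1; have := hℓi i; linarith
  have hσm : ∀ i k, σ i k ∈ Icc 0 (L k) := fun i k =>
    ⟨hσ0 i k, (hσ i k).2.trans ((hℓle i).trans (hL k))⟩
  have hm0 : ∀ k, (0:ℝ) ∈ Icc 0 (L k) := fun k => ⟨le_rfl, (h k).1⟩
  have hnear : ∀ i k, dist (γ k (σ i k)) (γ k 0) ≤ ℓ / 2 ^ i := fun i k => by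
    have := (h k).dist_le (hσm i k) (hm0 k)
    rw [sub_zero, abs_of_nonneg (hσ0 i k)] at this
    exact this.trans (hσ i k).2
  -- the limit points
  have hw : ∀ i, ∃ w ∈ Ω, Tendsto (fun k => γ k (σ i k))
      (hyperfilter ℕ : Ultrafilter ℕ) (nhds w) := by
    intro i
    set K : Set (Eu n) := Metric.closedBall x (1 + ℓ) ∩ (closure Ω ∩ {z | c i ≤ bdist Ω z}) with hK
    have hKc : IsCompact K := (isCompact_closedBall _ _).inter_right
      (isClosed_closure.inter (isClosed_le continuous_const (bdist_continuous Ω)))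
    have hev : ∀ᶠ k in ((hyperfilter ℕ : Ultrafilter ℕ) : Filter ℕ), γ k (σ i k) ∈ K := by
      filter_upwards [hUle (h0 (Metric.closedBall_mem_nhds x one_pos))] with k hk
      refine ⟨?_, subset_closure ((h k).2.2 _ (hσm i k)), hσc i k⟩
      rw [Metric.mem_closedBall]
      have h1 : dist (γ k 0) x ≤ 1 := hk
      have := dist_triangle (γ k (σ i k)) (γ k 0) x
      linarith [hnear i k, hℓle i]
    obtain ⟨w, hwK, hw⟩ := hKc.ultrafilter_le_nhds'
      ((hyperfilter ℕ : Ultrafilter ℕ).map fun k => γ k (σ i k)) hev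
    refine ⟨w, ?_, hw⟩
    by_contra hwΩ
    have hwf : w ∈ frontier Ω := by
      rw [hΩ.frontier_eq]; exact ⟨hwK.2.1, hwΩ⟩
    have h1 := bdist_le_dist hwf w
    rw [dist_self] at h1
    have h2 : c i ≤ bdist Ω w := hwK.2.2
    linarith [hcpos i]
  choose w hwΩ hwt using hw
  -- the limits of the lengths
  have ha : ∀ i, ∃ a ∈ Icc 0 δ, Tendsto (fun k => ∫ u in (0:ℝ)..(σ i k), bdist Ω (γ k u) ^ (α - 1))
      (hyperfilter ℕ : Ultrafilter ℕ) (nhds a) := by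
    intro i
    have hev : ∀ᶠ k in ((hyperfilter ℕ : Ultrafilter ℕ) : Filter ℕ),
        ∫ u in (0:ℝ)..(σ i k), bdist Ω (γ k u) ^ (α - 1) ∈ Icc 0 δ := by
      refine Eventually.of_forall fun k => ⟨?_, ?_⟩
      · exact intervalIntegral.integral_nonneg (hσ0 i k)
          fun u _ => Real.rpow_nonneg (bdist_nonneg _ _) _
      · exact ((h k).integral_mono hΩ hf α (hσ0 i k) (hσm i k).2 le_rfl).trans (hI k)
    exact isCompact_Icc.ultrafilter_le_nhds' ((hyperfilter ℕ : Ultrafilter ℕ).map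
        fun k => ∫ u in (0:ℝ)..(σ i k), bdist Ω (γ k u) ^ (α - 1)) hev
  choose a ha hat using ha
  have hanti : Antitone a := antitone_nat_of_succ_le fun i =>
    le_of_tendsto_of_tendsto (hat (i + 1)) (hat i) (Eventually.of_forall fun k =>
      (h k).integral_mono hΩ hf α (hσ0 _ k) (by
        have h1 := (hσ (i + 1) k).2
        have h2 := (hσ i k).1
        rw [pow_succ, ← div_div] at h1
        linarith) (hσm i k).2)
  have hcau : CauchySeq a :=
    (tendsto_atTop_ciInf hanti ⟨0, by rintro _ ⟨i, rfl⟩; exact (ha i).1⟩).cauchySeq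
  have hwx : Tendsto w atTop (nhds x) := by
    have h1 : ∀ i, dist (w i) x ≤ ℓ * (1 / 2) ^ i := by
      intro i
      refine le_of_tendsto_of_tendsto ((hwt i).dist (h0.mono_left hUle)) tendsto_const_nhds
        (Eventually.of_forall fun k => ?_)
      rw [one_div, inv_pow, ← div_eq_mul_inv]
      exact hnear i k
    refine tendsto_iff_dist_tendsto_zero.2 (squeeze_zero (fun _ => dist_nonneg) h1 ?_)
    have := (tendsto_pow_atTop_nhds_zero_of_lt_one (by norm_num : (0:ℝ) ≤ 1 / 2)
      (by norm_num)).const_mul ℓ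
    rwa [mul_zero] at this
  refine ⟨w, σ, ⟨hwΩ, hwx, dcauchy_of_abs hα0 hwx hcau fun i j => ?_⟩, hσm, hwt⟩
  -- Up to terms vanishing in `k`, the distance from `w i` to `w j` is at most the length of `γ k`
  -- between the parameters `σ i k` and `σ j k`, which tends to `|a i - a j|`.
  have hd : ∀ i, Tendsto (fun k => dSub Ω α (w i) (γ k (σ i k)))
      (hyperfilter ℕ : Ultrafilter ℕ) (nhds 0) := fun i =>
    (dSub_tendsto_zero hΩ hf hα.le (hwΩ i)).comp (hwt i)
  have hlim := ((hd i).add (((hat i).sub (hat j)).abs)).add (hd j)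
  rw [zero_add, add_zero] at hlim
  refine ge_of_tendsto hlim (Eventually.of_forall fun k => ?_)
  have m1 := (h k).2.2 _ (hσm i k)
  have m2 := (h k).2.2 _ (hσm j k)
  have t1 := dSub_triangle hΩ hc hf hα.le (hwΩ i) m1 (hwΩ j)
  have t2 := dSub_triangle hΩ hc hf hα.le m1 m2 (hwΩ j)
  have t3 := (h k).dSub_le_abs hΩ hf α (hσm i k) (hσm j k)
  rw [dSub_comm hΩ hf α (γ k (σ j k))] at t2
  linarith

/-- A curve from `a` to `b` has arc length at least `dist a b`, and during its initial stretch of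
that length it stays within `bdist Ω a + dist a b` of the boundary; this bounds `dSub` from
below. -/
lemma le_dSub {Ω : Set (Eu n)} (hΩ : IsOpen Ω) (hc : IsConnected Ω)
    (hf : (frontier Ω).Nonempty) {α : ℝ} (hα : α ≤ 1) {a b : Eu n} (ha : a ∈ Ω) (hb : b ∈ Ω) :
    dist a b * (bdist Ω a + dist a b) ^ (α - 1) ≤ dSub Ω α a b := by
  refine le_csInf (subLenSet_nonempty hΩ hc hf hα ha hb) fun d hd => ?_
  obtain ⟨L, γ, h, rfl, rfl, rfl⟩ := subLenSet_iff hd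
  have hm0 : (0:ℝ) ∈ Icc 0 L := ⟨le_rfl, h.1⟩
  have hR := h.dist_le hm0 ⟨h.1, le_rfl⟩
  rw [zero_sub, abs_neg, abs_of_nonneg h.1] at hR
  set R := dist (γ 0) (γ L) with hRd
  have hR0 : 0 ≤ R := dist_nonneg
  have h1 : ∀ s ∈ Icc 0 R, (bdist Ω (γ 0) + R) ^ (α - 1) ≤ bdist Ω (γ s) ^ (α - 1) := by
    intro s hs
    have hsm : s ∈ Icc 0 L := ⟨hs.1, hs.2.trans hR⟩
    refine Real.rpow_le_rpow_of_nonpos (bdist_pos hΩ hf (h.2.2 s hsm)) ?_ (by linarith)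
    have h2 := bdist_le_add Ω (γ s) (γ 0)
    have h3 := h.dist_le hsm hm0
    rw [sub_zero, abs_of_nonneg hs.1] at h3
    linarith [hs.2]
  have h2 := intervalIntegral.integral_mono_on hR0
    (intervalIntegrable_const (μ := volume)) (h.integrable hΩ hf α le_rfl hR0 hR) h1
  rw [intervalIntegral.integral_const, smul_eq_mul, sub_zero] at h2
  exact h2.trans (h.integral_mono hΩ hf α hR0 hR le_rfl)

lemma AccessSeq.dSub_bounded {Ω : Set (Eu n)} {α : ℝ} {x : Eu n} {u : ℕ → Eu n}
    (hu : AccessSeq Ω α x u) : ∃ N, ∀ i ≥ N, ∀ j ≥ N, dSub Ω α (u i) (u j) ≤ 1 := by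
  obtain ⟨N, hN⟩ := hu.2.2 1 one_pos
  refine ⟨N, fun i hi j hj => ?_⟩
  have h1 := hN i hi j hj
  have h2 : 0 ≤ ‖u i - u j‖ ^ α := by positivity
  unfold dTil at h1
  linarith

/-- Accessible points at `dBar`-distance less than `δ` are limits of points of `Ω` at
subhyperbolic distance less than `δ`. -/
lemma exists_of_dBar_lt {Ω : Set (Eu n)} (hΩ : IsOpen Ω) (hc : IsConnected Ω)
    (hf : (frontier Ω).Nonempty) {α : ℝ} (hα : α ≤ 1) {x y : Eu n} (hx : Accessible Ω α x)
    (hy : Accessible Ω α y) {δ : ℝ} (hδ : dBar Ω α x y < δ) :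
    ∃ a b : ℕ → Eu n, (∀ k, a k ∈ Ω) ∧ (∀ k, b k ∈ Ω) ∧ Tendsto a atTop (nhds x) ∧
      Tendsto b atTop (nhds y) ∧ ∀ k, dSub Ω α (a k) (b k) < δ := by
  obtain ⟨-, u, hu⟩ := hx
  obtain ⟨-, v, hv⟩ := hy
  obtain ⟨N, hN⟩ := hu.dSub_bounded
  obtain ⟨M, hM⟩ := hv.dSub_bounded
  have hfr : ∃ᶠ q in ((nhds x) ⊓ 𝓟 Ω) ×ˢ ((nhds y) ⊓ 𝓟 Ω),
      dSub Ω α q.1 q.2 ≤ 1 + dSub Ω α (u N) (v M) + 1 := by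
    have ht : Tendsto (fun i => (u i, v i)) atTop (((nhds x) ⊓ 𝓟 Ω) ×ˢ ((nhds y) ⊓ 𝓟 Ω)) := by
      refine Tendsto.prodMk (tendsto_inf.2 ⟨hu.2.1, ?_⟩) (tendsto_inf.2 ⟨hv.2.1, ?_⟩)
      · exact tendsto_principal.2 (Eventually.of_forall hu.1)
      · exact tendsto_principal.2 (Eventually.of_forall hv.1)
    refine ht.frequently (Eventually.frequently ?_)
    filter_upwards [eventually_ge_atTop N, eventually_ge_atTop M] with i hi hj
    have t1 := dSub_triangle hΩ hc hf hα (hu.1 i) (hu.1 N) (hv.1 i)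
    have t2 := dSub_triangle hΩ hc hf hα (hu.1 N) (hv.1 M) (hv.1 i)
    have := hN i hi N le_rfl
    have := hM M le_rfl i hj
    linarith
  have hlt : ∃ᶠ q in ((nhds x) ⊓ 𝓟 Ω) ×ˢ ((nhds y) ⊓ 𝓟 Ω), dSub Ω α q.1 q.2 < δ :=
    frequently_lt_of_liminf_lt (IsCoboundedUnder.of_frequently_le hfr) hδ
  have key : ∀ k : ℕ, ∃ a b : Eu n, a ∈ Ω ∧ b ∈ Ω ∧ dist a x < 1 / ((k:ℝ) + 1) ∧
      dist b y < 1 / ((k:ℝ) + 1) ∧ dSub Ω α a b < δ := by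
    intro k
    have hpos : (0:ℝ) < 1 / ((k:ℝ) + 1) := by positivity
    have hev : ∀ᶠ q in ((nhds x) ⊓ 𝓟 Ω) ×ˢ ((nhds y) ⊓ 𝓟 Ω),
        q ∈ (Metric.ball x (1 / ((k:ℝ) + 1)) ∩ Ω) ×ˢ (Metric.ball y (1 / ((k:ℝ) + 1)) ∩ Ω) :=
      prod_mem_prod (inter_mem_inf (Metric.ball_mem_nhds x hpos) (mem_principal_self Ω))
        (inter_mem_inf (Metric.ball_mem_nhds y hpos) (mem_principal_self Ω))
    obtain ⟨q, hq, hq'⟩ := (hlt.and_eventually hev).exists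
    exact ⟨q.1, q.2, hq'.1.2, hq'.2.2, hq'.1.1, hq'.2.1, hq⟩
  choose a b ha hb hax hby hab using key
  refine ⟨a, b, ha, hb, ?_, ?_, hab⟩
  · exact tendsto_iff_dist_tendsto_zero.2 (squeeze_zero (fun _ => dist_nonneg)
      (fun k => (hax k).le) tendsto_one_div_add_atTop_nhds_zero_nat)
  · exact tendsto_iff_dist_tendsto_zero.2 (squeeze_zero (fun _ => dist_nonneg)
      (fun k => (hby k).le) tendsto_one_div_add_atTop_nhds_zero_nat)

lemma convex_of_dim_one {Ω : Set (Eu 1)} (hc : IsConnected Ω) : Convex ℝ Ω := by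
  have h1 : (Function.eval (0 : Fin 1) '' Ω).OrdConnected :=
    (hc.isPreconnected.image _ (continuous_apply 0).continuousOn).ordConnected
  have h2 := h1.convex (𝕜 := ℝ)
  intro a ha b hb s t hs ht hst
  obtain ⟨z, hz, he⟩ := h2 (mem_image_of_mem _ ha) (mem_image_of_mem _ hb) hs ht hst
  have : s • a + t • b = z := by
    ext i
    rw [Subsingleton.elim i 0]
    simpa using he.symm
  rwa [this]

/-- On a convex domain and for `α = 1`, the segment shows that `dSub` is at most the norm
distance. -/
lemma dSub_le_dist_of_convex {Ω : Set (Eu n)} (hΩ : IsOpen Ω)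
    (hf : (frontier Ω).Nonempty) (hcv : Convex ℝ Ω) {a b : Eu n} (ha : a ∈ Ω) (hb : b ∈ Ω) :
    dSub Ω 1 a b ≤ dist a b := by
  have hcpt : IsCompact (segment ℝ a b) := by
    rw [segment_eq_image_lineMap]
    exact isCompact_Icc.image AffineMap.lineMap_continuous
  obtain ⟨z, hz, hmin⟩ := hcpt.exists_isMinOn
    ⟨a, left_mem_segment ℝ a b⟩ (bdist_continuous Ω).continuousOn
  have h := dSub_segment_le hΩ hf le_rfl (bdist_pos hΩ hf (hcv.segment_subset ha hb hz))
    fun w hw => ⟨hcv.segment_subset ha hb hw, hmin hw⟩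
  rwa [sub_self, Real.rpow_zero, one_mul] at h

lemma accessSeq_of_convex {Ω : Set (Eu n)} (hΩ : IsOpen Ω)
    (hf : (frontier Ω).Nonempty) (hcv : Convex ℝ Ω) {x : Eu n} {u : ℕ → Eu n}
    (hu : ∀ i, u i ∈ Ω) (hx : Tendsto u atTop (nhds x)) : AccessSeq Ω 1 x u := by
  refine ⟨hu, hx, fun ε hε => ?_⟩
  obtain ⟨N, hN⟩ := Metric.cauchySeq_iff.1 hx.cauchySeq (ε / 2) (half_pos hε)
  refine ⟨N, fun i hi j hj => ?_⟩
  have h1 := hN i hi j hj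
  have h2 := dSub_le_dist_of_convex hΩ hf hcv (hu i) (hu j)
  unfold dTil
  rw [Real.rpow_one, ← dist_eq_norm]
  linarith

/-- Two distinct boundary points at `dBar`-distance less than `δ` can be accessed by sequences
that stay at subhyperbolic distance at most `δ` from each other.  When `α < 1` these sequences
are limits of points on nearly optimal curves; when `α = 1` the domain is an interval. -/
lemma exists_bridge (hn : 0 < n) {p : ℝ} (hp : (n:ℝ) < p) (hp1 : 1 < p) {Ω : Set (Eu n)}
    (hΩ : IsOpen Ω) (hc : IsConnected Ω)
    (hf : (frontier Ω).Nonempty) {α : ℝ} (hα : α = (p - n) / (p - 1)) (hα0 : 0 < α) (hα1 : α ≤ 1)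
    {x y : Eu n} (hx : Accessible Ω α x)
    (hy : Accessible Ω α y) (hxy : x ≠ y) {δ : ℝ} (hδ : dBar Ω α x y < δ) :
    ∃ w v : ℕ → Eu n, AccessSeq Ω α x w ∧ AccessSeq Ω α y v ∧ ∀ i, dSub Ω α (w i) (v i) ≤ δ := by
  obtain ⟨a, b, ha, hb, hax, hby, hab⟩ := exists_of_dBar_lt hΩ hc hf hα1 hx hy hδ
  rcases hα1.lt_or_eq with hlt | heq
  swap
  -- `α = 1` forces `n = 1`, and a connected subset of the line is convex.
  · have hn1 : n = 1 := by
      have h1 : p - 1 ≠ 0 := by linarith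
      rw [heq, eq_div_iff h1] at hα
      have : (n:ℝ) = 1 := by linarith
      exact_mod_cast this
    subst hn1
    subst heq
    have hcv := convex_of_dim_one hc
    exact ⟨a, b, accessSeq_of_convex hΩ hf hcv ha hax, accessSeq_of_convex hΩ hf hcv hb hby,
      fun i => (hab i).le⟩
  have hδ0 : 0 ≤ δ := (dSub_nonneg Ω α (a 0) (b 0)).trans (hab 0).le
  have hR : 0 < dist x y := dist_pos.2 hxy
  obtain ⟨K, hK⟩ := ((hax.dist hby).eventually_const_le (half_lt_self hR)).exists_forall_of_atTop
  have hcurve : ∀ k, ∃ (L : ℝ) (γ : ℝ → Eu n), AdmCurve Ω L γ ∧ γ 0 = a (k + K) ∧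
      γ L = b (k + K) ∧ ∫ u in (0:ℝ)..L, bdist Ω (γ u) ^ (α - 1) ≤ δ := by
    intro k
    obtain ⟨d, hd, hd'⟩ := exists_lt_of_csInf_lt
      (subLenSet_nonempty hΩ hc hf hα1 (ha (k + K)) (hb (k + K))) (hab (k + K))
    obtain ⟨L, γ, h, h0, hL, rfl⟩ := subLenSet_iff hd
    exact ⟨L, γ, h, h0, hL, hd'.le⟩
  choose L γ hγ h0 h1 hI using hcurve
  have hL : ∀ k, dist x y / 2 ≤ L k := by
    intro k
    have e1 := (hγ k).dist_le ⟨le_rfl, (hγ k).1⟩ ⟨(hγ k).1, le_rfl⟩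
    rw [zero_sub, abs_neg, abs_of_nonneg (hγ k).1, h0, h1] at e1
    exact (hK (k + K) (Nat.le_add_left _ _)).trans e1
  obtain ⟨w, σ, hw, hσ, hwt⟩ := access_limit hΩ hc hf hα0 hlt hδ0 (half_pos hR) hγ hL hI
    (x := x) (by simp_rw [h0]; exact (tendsto_add_atTop_iff_nat K).2 hax)
  -- The reversed curves start near `y`.
  obtain ⟨v, τ, hv, hτ, hvt⟩ := access_limit hΩ hc hf hα0 hlt hδ0 (half_pos hR)
    (fun k => (hγ k).reverse) hL (x := y) (fun k => by
      have e := intervalIntegral.integral_comp_sub_left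
        (fun u => bdist Ω (γ k u) ^ (α - 1)) (a := 0) (b := L k) (L k)
      rw [sub_self, sub_zero] at e
      exact e.le.trans (hI k))
    (by simp_rw [sub_zero, h1]; exact (tendsto_add_atTop_iff_nat K).2 hby)
  refine ⟨w, v, hw, hv, fun i => ?_⟩
  -- Both `w i` and `v i` are limits of points of the same curves, whose total lengths are at most
  -- `δ`.
  have hlim := (((dSub_tendsto_zero hΩ hf hα1 (hw.1 i)).comp (hwt i)).add
    (tendsto_const_nhds (x := δ))).add ((dSub_tendsto_zero hΩ hf hα1 (hv.1 i)).comp (hvt i))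
  rw [zero_add, add_zero] at hlim
  refine ge_of_tendsto hlim (Eventually.of_forall fun k => ?_)
  have hτ' : L k - τ i k ∈ Icc 0 (L k) := ⟨by linarith [(hτ i k).2], by linarith [(hτ i k).1]⟩
  have m1 := (hγ k).2.2 _ (hσ i k)
  have m2 := (hγ k).2.2 _ hτ'
  have t1 := dSub_triangle hΩ hc hf hα1 (hw.1 i) m1 (hv.1 i)
  have t2 := dSub_triangle hΩ hc hf hα1 m1 m2 (hv.1 i)
  have t3 := (hγ k).dSub_le_total hΩ hf α (hσ i k) hτ'
  rw [dSub_comm hΩ hf α (γ k (L k - τ i k))] at t2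
  have t4 := hI k
  simp only [Function.comp]
  linarith

/-- On the accessible boundary, `dBar` dominates the `α`-th power of the norm distance. -/
lemma norm_rpow_le_of_dBar_lt {Ω : Set (Eu n)} (hΩ : IsOpen Ω) (hc : IsConnected Ω)
    (hf : (frontier Ω).Nonempty) {α : ℝ} (hα1 : α ≤ 1)
    {x y : Eu n} (hx : Accessible Ω α x)
    (hy : Accessible Ω α y) (hxy : x ≠ y) {δ : ℝ} (hδ : dBar Ω α x y < δ) :
    dist x y ^ α ≤ δ := by
  obtain ⟨a, b, ha, hb, hax, hby, hab⟩ := exists_of_dBar_lt hΩ hc hf hα1 hx hy hδ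
  have hR : 0 < dist x y := dist_pos.2 hxy
  have hbx : bdist Ω x = 0 := Metric.infDist_zero_of_mem hx.1
  have hd := hax.dist hby
  have hb' := ((bdist_continuous Ω).tendsto x).comp hax
  have hlim := hd.mul ((hb'.add hd).rpow_const (p := α - 1) (Or.inl (by rw [hbx]; linarith)))
  rw [hbx, zero_add] at hlim
  nth_rewrite 1 [← Real.rpow_one (dist x y)] at hlim
  rw [← Real.rpow_add hR, add_sub_cancel] at hlim
  exact le_of_tendsto hlim (Eventually.of_forall fun k =>
    (le_dSub hΩ hc hf hα1 (ha k) (hb k)).trans (hab k).le)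

/-- The trace of a function in `L¹_p(Ω)` is continuous with respect to `dBar`. -/
lemma contWrtDBar_of_rep (hn : 0 < n) {p : ℝ} (hp : (n:ℝ) < p) (hp1 : 1 < p) {Ω : Set (Eu n)}
    (hΩ : IsOpen Ω) (hc : IsConnected Ω)
    (hf : (frontier Ω).Nonempty) {α : ℝ} (hα : α = (p - n) / (p - 1)) (hα0 : 0 < α) (hα1 : α ≤ 1)
    {f F : Eu n → ℝ} {g : Eu n → Eu n} (hF : ContL1pRep Ω p F g) (hT : TraceEq Ω α F f) :
    ContWrtDBar Ω α f := by
  obtain ⟨C, hC, hmod⟩ := modulus n hp1 hp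
  have hp0 : 0 < p := by linarith
  have hq : 0 < 1 - 1 / p := by rw [sub_pos, div_lt_one hp0]; exact hp1
  set J := (∫ z in Ω, ‖g z‖ ^ p) ^ (1 / p) with hJ
  have key : ∀ x, Accessible Ω α x → ∀ y, Accessible Ω α y → x ≠ y → ∀ δ,
      dBar Ω α x y < δ → |f y - f x| ≤ C * (δ + δ) ^ (1 - 1 / p) * J := by
    intro x hx y hy hxy δ hδ
    obtain ⟨w, v, hw, hv, hwv⟩ := exists_bridge hn hp hp1 hΩ hc hf hα hα0 hα1 hx hy hxy hδ
    have hδ0 : 0 ≤ δ := (dSub_nonneg Ω α (w 0) (v 0)).trans (hwv 0)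
    have hN : Tendsto (fun i => ‖w i - v i‖ ^ α) atTop (nhds (dist x y ^ α)) := by
      rw [dist_eq_norm]
      exact (hw.2.1.sub hv.2.1).norm.rpow_const (Or.inr hα0.le)
    have h1 := ((tendsto_const_nhds (x := δ)).add hN).rpow_const (p := 1 - 1 / p) (Or.inr hq.le)
    have h2 := (h1.const_mul C).mul_const J
    have h3 := ((hT y hy v hv).sub (hT x hx w hw)).abs
    have h4 := le_of_tendsto_of_tendsto h3 h2 (Eventually.of_forall fun i => by
      dsimp only
      rw [abs_sub_comm]
      refine (hmod Ω hΩ hc hf α hα hα0 hα1 F g hF _ (hw.1 i) _ (hv.1 i)).trans ?_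
      have e1 : dTil Ω α (w i) (v i) ≤ δ + ‖w i - v i‖ ^ α := by
        unfold dTil; linarith [hwv i]
      have e2 : 0 ≤ dTil Ω α (w i) (v i) :=
        add_nonneg (dSub_nonneg _ _ _ _) (by positivity)
      have : 0 ≤ J := by
        rw [hJ]
        exact Real.rpow_nonneg (integral_nonneg fun z => by positivity) _
      gcongr)
    refine h4.trans ?_
    have e3 := norm_rpow_le_of_dBar_lt hΩ hc hf hα1 hx hy hxy hδ
    have : 0 ≤ J := by
      rw [hJ]
      exact Real.rpow_nonneg (integral_nonneg fun z => by positivity) _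
    gcongr
  intro x hx ε hε
  have hcont : Continuous fun δ : ℝ => C * (δ + δ) ^ (1 - 1 / p) * J :=
    (continuous_const.mul ((continuous_id.add continuous_id).rpow_const
      fun _ => Or.inr hq.le)).mul continuous_const
  have hlim := (hcont.tendsto 0).mono_left (nhdsWithin_le_nhds (s := Ioi 0))
  simp only [add_zero, Real.zero_rpow hq.ne', mul_zero, zero_mul] at hlim
  obtain ⟨δ, hδ, hδ0⟩ := ((hlim.eventually_lt_const hε).and self_mem_nhdsWithin).exists
  refine ⟨δ, hδ0, fun y hy hd => ?_⟩
  rcases eq_or_ne x y with rfl | hxy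
  · rwa [sub_self, abs_zero]
  · exact (key x hx y hy hxy δ hd).trans_lt hδ

/-! ### Smooth functions and a Whitney-type extension -/

/-- A `C^∞` function on `Ω` has its classical gradient as weak gradient. -/
lemma hasWeakGradOn_of_contDiffOn {Ω : Set (Eu n)} (hΩ : IsOpen Ω) {F : Eu n → ℝ}
    (hF : ContDiffOn ℝ 1 F Ω) :
    HasWeakGradOn F (fun x i => fderiv ℝ F x (Pi.single i 1)) Ω := by
  have hfd : ContinuousOn (fderiv ℝ F) Ω := hF.continuousOn_fderiv_of_isOpen hΩ le_rfl
  have hfdi : ∀ i : Fin n, ContinuousOn (fun x => fderiv ℝ F x (Pi.single i 1)) Ω := fun i =>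
    hfd.clm_apply continuousOn_const
  refine ⟨hF.continuousOn.locallyIntegrableOn hΩ.measurableSet,
    (continuousOn_pi.2 hfdi).locallyIntegrableOn hΩ.measurableSet, fun φ hφ hφc hφΩ i => ?_⟩
  have hφ1 : Differentiable ℝ φ := hφ.differentiable (by simp)
  have hint : ∀ u v : Eu n → ℝ, ContinuousOn u Ω → Continuous v → tsupport v ⊆ tsupport φ →
      Integrable (fun x => u x * v x) volume := by
    intro u v hu hv hvφ
    have h1 : IntegrableOn (fun x => u x * v x) (tsupport φ) volume :=
      ((hu.mono hφΩ).mul hv.continuousOn).integrableOn_compact hφc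
    refine (integrableOn_iff_integrable_of_support_subset fun x hx => ?_).1 h1
    by_contra hxφ
    have : v x = 0 := image_eq_zero_of_notMem_tsupport fun h => hxφ (hvφ h)
    exact hx (by simp [this])
  have hφ'c : Continuous fun x => fderiv ℝ φ x (Pi.single i 1) :=
    (hφ.continuous_fderiv (by simp)).clm_apply continuous_const
  have hφ's : tsupport (fun x => fderiv ℝ φ x (Pi.single i 1)) ⊆ tsupport φ := by
    refine closure_minimal (fun x hx => ?_) (isClosed_tsupport φ)
    refine support_fderiv_subset ℝ (fun h => hx ?_)
    simp [h]
  have hmain := integral_mul_fderiv_eq_neg_fderiv_mul_of_integrable (μ := (volume : Measure (Eu n)))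
    (f := F) (g := φ) (v := Pi.single i 1)
    (hint _ _ (hfdi i) hφ.continuous subset_rfl) (hint _ _ hF.continuousOn hφ'c hφ's)
    (hint _ _ hF.continuousOn hφ.continuous subset_rfl)
    (fun x hx => (hF.contDiffAt (hΩ.mem_nhds (hφΩ hx))).differentiableAt (by simp))
    (fun x _ => hφ1 x)
  rw [setIntegral_eq_integral_of_forall_compl_eq_zero, hmain,
    setIntegral_eq_integral_of_forall_compl_eq_zero]
  · intro x hx
    rw [image_eq_zero_of_notMem_tsupport fun h => hx (hφΩ h), mul_zero]
  · intro x hx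
    rw [image_eq_zero_of_notMem_tsupport (f := fun x => fderiv ℝ φ x (Pi.single i 1))
      fun h => hx (hφΩ (hφ's h)), mul_zero]

/-- A fixed smooth bump function, equal to `1` on the cube of radius `11/100` and supported in
the cube of radius `1/8`. -/
def stdBump (n : ℕ) : ContDiffBump (0 : Eu n) := ⟨11 / 100, 1 / 8, by norm_num, by norm_num⟩

/-- The bump function attached to the point `c` at scale `bdist Ω c`. -/
def wbump (Ω : Set (Eu n)) (c z : Eu n) : ℝ := stdBump n ((bdist Ω c)⁻¹ • (z - c))

lemma wbump_nonneg (Ω : Set (Eu n)) (c z : Eu n) : 0 ≤ wbump Ω c z := (stdBump n).nonneg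

lemma wbump_eq_one {Ω : Set (Eu n)} {c z : Eu n} (hc : 0 < bdist Ω c)
    (h : dist z c ≤ 11 / 100 * bdist Ω c) : wbump Ω c z = 1 := by
  refine (stdBump n).one_of_mem_closedBall ?_
  rw [mem_closedBall_zero_iff, norm_smul, norm_inv, Real.norm_of_nonneg hc.le, ← dist_eq_norm,
    inv_mul_le_iff₀ hc, mul_comm]
  exact h

lemma wbump_eq_zero {Ω : Set (Eu n)} {c z : Eu n} (hc : 0 < bdist Ω c)
    (h : bdist Ω c / 8 < dist z c) : wbump Ω c z = 0 := by
  by_contra hne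
  have h1 : (bdist Ω c)⁻¹ • (z - c) ∈ Function.support (stdBump n) := hne
  rw [(stdBump n).support_eq, mem_ball_zero_iff, norm_smul, norm_inv, Real.norm_of_nonneg hc.le,
    ← dist_eq_norm, inv_mul_lt_iff₀ hc] at h1
  change dist z c < bdist Ω c * (1 / 8) at h1
  linarith

lemma wbump_contDiff (Ω : Set (Eu n)) (c : Eu n) {m : ℕ∞} : ContDiff ℝ m (wbump Ω c) :=
  (stdBump n).contDiff.comp (g := stdBump n) (f := fun z => (bdist Ω c)⁻¹ • (z - c)) (by fun_prop)

lemma fderiv_wbump_eq_zero {Ω : Set (Eu n)} {c z : Eu n} (hc : 0 < bdist Ω c)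
    (h : bdist Ω c / 8 < dist z c) : fderiv ℝ (wbump Ω c) z = 0 := by
  have h1 : wbump Ω c =ᶠ[nhds z] fun _ => 0 := by
    filter_upwards [(isOpen_lt (continuous_const (y := bdist Ω c / 8))
      (continuous_id.dist (continuous_const (y := c)))).mem_nhds h] with y hy
    exact wbump_eq_zero hc hy
  rw [h1.fderiv_eq, fderiv_fun_const, Pi.zero_apply]

lemma exists_fderiv_wbump_le (n : ℕ) : ∃ B : ℝ, 0 < B ∧ ∀ (Ω : Set (Eu n)) (c z : Eu n),
    0 < bdist Ω c → ‖fderiv ℝ (wbump Ω c) z‖ ≤ B / bdist Ω c := by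
  obtain ⟨B, hB⟩ := ((stdBump n).hasCompactSupport.fderiv (𝕜 := ℝ)).exists_bound_of_continuous
    (((stdBump n).contDiff (n := 1)).continuous_fderiv (by simp))
  refine ⟨|B| + 1, by positivity, fun Ω c z hc => ?_⟩
  have h1 : HasFDerivAt (wbump Ω c) ((fderiv ℝ (stdBump n) ((bdist Ω c)⁻¹ • (z - c))).comp
      ((bdist Ω c)⁻¹ • ContinuousLinearMap.id ℝ (Eu n))) z := by
    refine HasFDerivAt.comp z ?_ (((hasFDerivAt_id z).sub_const c).fun_const_smul _)
    exact (((stdBump n).contDiff (n := 1)).differentiable (by simp) _).hasFDerivAt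
  rw [h1.fderiv]
  refine (ContinuousLinearMap.opNorm_comp_le _ _).trans ?_
  have h2 : ‖(bdist Ω c)⁻¹ • ContinuousLinearMap.id ℝ (Eu n)‖ ≤ (bdist Ω c)⁻¹ := by
    rw [norm_smul, norm_inv, Real.norm_of_nonneg hc.le]
    exact mul_le_of_le_one_right (by positivity) ContinuousLinearMap.norm_id_le
  have h3 := (hB ((bdist Ω c)⁻¹ • (z - c))).trans ((le_abs_self B).trans (by linarith : |B| ≤ |B| + 1))
  rw [div_eq_mul_inv]
  gcongr

/-- Averaging the values `v c` by the partition of unity subordinate to a Whitney family gives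
a smooth function on `Ω` whose value and gradient at `z` are controlled by the values at the
points `c` with `z` in the cube of radius `bdist Ω c / 8` around `c`. -/
lemma exists_whitney_extension (n : ℕ) : ∃ K : ℝ, 0 < K ∧ ∀ (Ω S : Set (Eu n)), IsOpen Ω →
    (frontier Ω).Nonempty → IsWhitney Ω S → ∀ v : Eu n → ℝ, ∃ F : Eu n → ℝ,
      ContDiffOn ℝ 1 F Ω ∧
      (∀ z ∈ Ω, ∀ a ε : ℝ, (∀ c ∈ S, dist z c ≤ bdist Ω c / 8 → |v c - a| ≤ ε) →
        |F z - a| ≤ ε) ∧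
      (∀ z ∈ Ω, ∀ a M ρ : ℝ, 0 ≤ M → 0 < ρ →
        (∀ c ∈ S, dist z c ≤ bdist Ω c / 8 → |v c - a| ≤ M ∧ ρ ≤ bdist Ω c) →
        ‖fderiv ℝ F z‖ ≤ K * M / ρ) := by
  classical
  obtain ⟨B, hB, hBd⟩ := exists_fderiv_wbump_le n
  refine ⟨20 ^ n * (2 * B), by positivity, fun Ω S hΩ hf hS v => ?_⟩
  have hpos : ∀ c ∈ S, 0 < bdist Ω c := fun c hc => bdist_pos hΩ hf (hS.subset hc)
  set A : Eu n → Finset (Eu n) := fun z => (hS.finite hΩ hf z).toFinset with hA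
  have hAm : ∀ z c, c ∈ A z ↔ c ∈ S ∧ dist z c ≤ 2 / 5 * bdist Ω c := fun z c => by
    simp [hA]
  have hAcard : ∀ z, ((A z).card : ℝ) ≤ 20 ^ n := fun z =>
    hS.overlap hΩ hf (A z) (fun c hc => ((hAm z c).1 hc).1) fun c hc => ((hAm z c).1 hc).2
  -- every cube contributing near `x` is listed in `A x`
  have hnear : ∀ x z : Eu n, dist z x < bdist Ω x / 20 → ∀ c ∈ S, c ∉ A x → wbump Ω c z = 0 := by
    intro x z hz c hc hcA
    refine wbump_eq_zero (hpos c hc) ?_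
    by_contra! hle
    refine hcA ((hAm x c).2 ⟨hc, ?_⟩)
    have h1 := bdist_le_add Ω x c
    have h2 := dist_triangle x z c
    rw [dist_comm x z] at h2
    linarith [hpos c hc]
  have hsum : ∀ x z : Eu n, dist z x < bdist Ω x / 20 → z ∈ Ω → ∀ u : Eu n → ℝ,
      ∑ c ∈ A z, u c * wbump Ω c z = ∑ c ∈ A x, u c * wbump Ω c z := by
    intro x z hz hzΩ u
    have hz' : dist z z < bdist Ω z / 20 := by
      rw [dist_self]
      linarith [bdist_pos hΩ hf hzΩ]
    have e1 : ∑ c ∈ A z, u c * wbump Ω c z = ∑ c ∈ A z ∪ A x, u c * wbump Ω c z := by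
      refine Finset.sum_subset Finset.subset_union_left fun c hc hc' => ?_
      rcases Finset.mem_union.1 hc with h | h
      · exact absurd h hc'
      · rw [hnear z z hz' c ((hAm x c).1 h).1 hc', mul_zero]
    rw [e1]
    symm
    refine Finset.sum_subset Finset.subset_union_right fun c hc hc' => ?_
    rcases Finset.mem_union.1 hc with h | h
    · rw [hnear x z hz c ((hAm z c).1 h).1 hc', mul_zero]
    · exact absurd h hc'
  have hone : ∀ z ∈ Ω, 1 ≤ ∑ c ∈ A z, wbump Ω c z := by
    intro z hz
    obtain ⟨c, hc, hzc⟩ := hS.cover z hz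
    have h1 := wbump_eq_one (hpos c hc) hzc
    rw [← h1]
    refine Finset.single_le_sum (f := fun c => wbump Ω c z) (fun c _ => wbump_nonneg Ω c z)
      ((hAm z c).2 ⟨hc, ?_⟩)
    linarith [hpos c hc]
  set F : Eu n → ℝ := fun z => (∑ c ∈ A z, v c * wbump Ω c z) / ∑ c ∈ A z, wbump Ω c z with hF
  have hFloc : ∀ x ∈ Ω, F =ᶠ[nhds x] fun z =>
      (∑ c ∈ A x, v c * wbump Ω c z) / ∑ c ∈ A x, wbump Ω c z := by
    intro x hx
    filter_upwards [Metric.ball_mem_nhds x (by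
      have := bdist_pos hΩ hf hx
      positivity : 0 < bdist Ω x / 20), hΩ.mem_nhds hx] with z hz hzΩ
    have e2 := hsum x z hz hzΩ (fun _ => 1)
    simp only [one_mul] at e2
    simp only [hF]
    rw [hsum x z hz hzΩ v, e2]
  have hval : ∀ z ∈ Ω, ∀ a ε : ℝ, (∀ c ∈ S, dist z c ≤ bdist Ω c / 8 → |v c - a| ≤ ε) →
        |F z - a| ≤ ε := by
    intro z hz a ε h
    have hD := hone z hz
    have hD0 : (0:ℝ) < ∑ c ∈ A z, wbump Ω c z := by linarith
    have e : F z - a = (∑ c ∈ A z, (v c - a) * wbump Ω c z) / ∑ c ∈ A z, wbump Ω c z := by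
      simp only [hF]
      rw [eq_div_iff hD0.ne', sub_mul, div_mul_cancel₀ _ hD0.ne']
      simp only [sub_mul, Finset.sum_sub_distrib, Finset.mul_sum]
    rw [e, abs_div, abs_of_pos hD0, div_le_iff₀ hD0, Finset.mul_sum]
    refine (Finset.abs_sum_le_sum_abs _ _).trans (Finset.sum_le_sum fun c hc => ?_)
    rw [abs_mul, abs_of_nonneg (wbump_nonneg _ _ _)]
    have hcS := ((hAm z c).1 hc).1
    rcases le_or_gt (dist z c) (bdist Ω c / 8) with h1 | h1
    · exact mul_le_mul_of_nonneg_right (h c hcS h1) (wbump_nonneg _ _ _)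
    · rw [wbump_eq_zero (hpos c hcS) h1]; simp
  have hsm : ∀ x ∈ Ω, ContDiffAt ℝ 1 F x := by
    intro x hx
    refine ContDiffAt.congr_of_eventuallyEq ?_ (hFloc x hx)
    refine ContDiffAt.div ?_ ?_ ?_
    · exact ContDiffAt.sum fun c _ => contDiffAt_const.mul
        (wbump_contDiff Ω c (m := 1)).contDiffAt
    · exact ContDiffAt.sum fun c _ => (wbump_contDiff Ω c (m := 1)).contDiffAt
    · have := hone x hx
      linarith
  refine ⟨F, fun x hx => (hsm x hx).contDiffWithinAt, hval, fun z hz a M ρ hM hρ h => ?_⟩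
  have hD := hone z hz
  have hFz : |F z - a| ≤ M := hval z hz a M fun c hc hcz => (h c hc hcz).1
  have hbd : ∀ c ∈ A z, HasFDerivAt (wbump Ω c) (fderiv ℝ (wbump Ω c) z) z := fun c _ =>
    ((wbump_contDiff Ω c (m := 1)).differentiable (by simp) z).hasFDerivAt
  -- differentiate the identity `F · ∑ ψ_c = ∑ v_c ψ_c`
  have hprod : (fun y => F y * ∑ c ∈ A z, wbump Ω c y) =ᶠ[nhds z]
      fun y => ∑ c ∈ A z, v c * wbump Ω c y := by
    have hcont : Continuous fun y => ∑ c ∈ A z, wbump Ω c y :=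
      continuous_finsetSum _ fun c _ => (wbump_contDiff Ω c (m := 1)).continuous
    filter_upwards [hFloc z hz, hcont.continuousAt.eventually_ne
      (by linarith : ∑ c ∈ A z, wbump Ω c z ≠ 0)] with y hy hy'
    rw [hy, div_mul_cancel₀ _ hy']
  have hd1 := ((hsm z hz).differentiableAt (by simp)).hasFDerivAt.mul (HasFDerivAt.fun_sum hbd)
  have hd2 := HasFDerivAt.fun_sum fun c hc => (hbd c hc).const_mul (v c)
  have heq := (hd2.congr_of_eventuallyEq hprod).unique hd1
  have heq2 : (∑ c ∈ A z, wbump Ω c z) • fderiv ℝ F z =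
      ∑ c ∈ A z, (v c - F z) • fderiv ℝ (wbump Ω c) z := by
    rw [Finset.sum_congr rfl fun c _ => sub_smul (v c) (F z) (fderiv ℝ (wbump Ω c) z),
      Finset.sum_sub_distrib, heq, ← Finset.smul_sum]
    abel
  have hterm : ∀ c ∈ A z, ‖(v c - F z) • fderiv ℝ (wbump Ω c) z‖ ≤ 2 * M * (B / ρ) := by
    intro c hc
    have hcS := ((hAm z c).1 hc).1
    rcases le_or_gt (dist z c) (bdist Ω c / 8) with h1 | h1
    · obtain ⟨h2, h3⟩ := h c hcS h1
      rw [norm_smul, Real.norm_eq_abs]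
      have h4 : |v c - F z| ≤ 2 * M := by
        have := abs_sub_le (v c) a (F z)
        rw [abs_sub_comm a] at this
        linarith
      have h5 := (hBd Ω c z (hpos c hcS)).trans (div_le_div_of_nonneg_left hB.le hρ h3)
      gcongr
    · rw [fderiv_wbump_eq_zero (hpos c hcS) h1, smul_zero, norm_zero]
      positivity
  calc ‖fderiv ℝ F z‖ ≤ (∑ c ∈ A z, wbump Ω c z) * ‖fderiv ℝ F z‖ :=
        le_mul_of_one_le_left (norm_nonneg _) hD
    _ = ‖∑ c ∈ A z, (v c - F z) • fderiv ℝ (wbump Ω c) z‖ := by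
        rw [← heq2, norm_smul, Real.norm_of_nonneg (by linarith)]
    _ ≤ ∑ c ∈ A z, 2 * M * (B / ρ) := (norm_sum_le _ _).trans (Finset.sum_le_sum hterm)
    _ = (A z).card * (2 * M * (B / ρ)) := by rw [Finset.sum_const, nsmul_eq_mul]
    _ ≤ 20 ^ n * (2 * M * (B / ρ)) := by
        have := hAcard z
        gcongr
    _ = 20 ^ n * (2 * B) * M / ρ := by ring

/-! ### Extension of functions satisfying the variational condition -/

/-- A nonnegative function bounded by `b c` on each cube of a countable cover of `Ω` is integrable
as soon as the sums of `b c` times the volumes of the cubes are bounded. -/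
lemma integrable_of_local_bounds {Ω S : Set (Eu n)} (hΩ : IsOpen Ω) (hS : S.Countable)
    {ρ b : Eu n → ℝ} (hρ : ∀ c ∈ S, 0 ≤ ρ c) (hcov : ∀ x ∈ Ω, ∃ c ∈ S, dist x c ≤ ρ c)
    {h : Eu n → ℝ} (hcont : ContinuousOn h Ω) (h0 : ∀ x, 0 ≤ h x) (hb : ∀ c ∈ S, 0 ≤ b c)
    (hbd : ∀ c ∈ S, ∀ x ∈ Metric.closedBall c (ρ c), h x ≤ b c) {T : ℝ}
    (hT : ∀ A : Finset (Eu n), (∀ c ∈ A, c ∈ S) → ∑ c ∈ A, b c * (2 * ρ c) ^ n ≤ T) :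
    IntegrableOn h Ω volume ∧ ∫ z in Ω, h z ≤ T := by
  classical
  have hT0 : 0 ≤ T := by simpa using hT ∅ (by simp)
  have hcS := hS.to_subtype
  have hlin : ∫⁻ z in Ω, ENNReal.ofReal (h z) ≤ ENNReal.ofReal T := by
    calc ∫⁻ z in Ω, ENNReal.ofReal (h z)
        ≤ ∫⁻ z in ⋃ c : S, Metric.closedBall (c : Eu n) (ρ c), ENNReal.ofReal (h z) :=
          lintegral_mono_set fun z hz => by
            obtain ⟨c, hc, hzc⟩ := hcov z hz
            exact mem_iUnion.2 ⟨⟨c, hc⟩, hzc⟩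
      _ ≤ ∑' c : S, ∫⁻ z in Metric.closedBall (c : Eu n) (ρ c), ENNReal.ofReal (h z) :=
          lintegral_iUnion_le _ _
      _ ≤ ∑' c : S, ENNReal.ofReal (b c * (2 * ρ c) ^ n) := by
          refine ENNReal.tsum_le_tsum fun c => ?_
          have hvol : volume (Metric.closedBall (c : Eu n) (ρ c)) =
              ENNReal.ofReal ((2 * ρ c) ^ n) := by
            rw [← volume_real_closedBall (c : Eu n) (hρ c c.2), measureReal_def,
              ENNReal.ofReal_toReal measure_closedBall_lt_top.ne]
          rw [ENNReal.ofReal_mul (hb c c.2), ← hvol, ← setLIntegral_const]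
          exact setLIntegral_mono' Metric.isClosed_closedBall.measurableSet
            fun z hz => ENNReal.ofReal_le_ofReal (hbd c c.2 z hz)
      _ ≤ ENNReal.ofReal T := by
          rw [ENNReal.tsum_eq_iSup_sum]
          refine iSup_le fun A => ?_
          have hnn : ∀ c ∈ A, 0 ≤ b (c : S) * (2 * ρ (c : S)) ^ n := fun c _ =>
            mul_nonneg (hb c c.2) (pow_nonneg (by linarith [hρ c c.2]) n)
          rw [← ENNReal.ofReal_sum_of_nonneg hnn]
          refine ENNReal.ofReal_le_ofReal ?_
          have h1 := hT (A.map (Function.Embedding.subtype _)) fun c hc => by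
            obtain ⟨d, -, rfl⟩ := Finset.mem_map.1 hc
            exact d.2
          rwa [Finset.sum_map] at h1
  have hm : AEStronglyMeasurable h (volume.restrict Ω) :=
    hcont.aestronglyMeasurable hΩ.measurableSet
  have hint : IntegrableOn h Ω volume := by
    refine ⟨hm, ?_⟩
    rw [hasFiniteIntegral_iff_ofReal (Eventually.of_forall h0)]
    exact hlin.trans_lt ENNReal.ofReal_lt_top
  refine ⟨hint, ?_⟩
  rw [integral_eq_lintegral_of_nonneg_ae (Eventually.of_forall h0) hm]
  exact ENNReal.toReal_le_of_le_ofReal hT0 hlin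

/-- A boundary point nearest to `c` is visible from every cube inside the open cube of radius
`bdist Ω c` around `c`. -/
lemma qVisible_nearest {Ω : Set (Eu n)} (hΩ : IsOpen Ω) {a c d : Eu n} {r : ℝ} (hc : c ∈ Ω)
    (ha : bdist Ω c = dist c a) (hd : dist d c + r < bdist Ω c) :
    QVisible Ω (Metric.closedBall d r) a := by
  intro y hy t ht
  refine ball_bdist_subset hΩ hc ?_
  have h1 : dist y c < bdist Ω c := by
    have := dist_triangle y d c
    have := Metric.mem_closedBall.1 hy
    linarith
  have h2 : ‖a - c‖ = bdist Ω c := by rw [ha, dist_comm, dist_eq_norm]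
  rw [dist_eq_norm] at h1
  rw [Metric.mem_ball, dist_eq_norm,
    show a + t • (y - a) - c = (1 - t) • (a - c) + t • (y - c) by module]
  calc ‖(1 - t) • (a - c) + t • (y - c)‖ ≤ ‖(1 - t) • (a - c)‖ + ‖t • (y - c)‖ := norm_add_le _ _
    _ = (1 - t) * bdist Ω c + t * ‖y - c‖ := by
        rw [norm_smul, norm_smul, h2, Real.norm_of_nonneg (by linarith [ht.2]),
          Real.norm_of_nonneg ht.1.le]
    _ < (1 - t) * bdist Ω c + t * bdist Ω c := by
        have := mul_lt_mul_of_pos_left h1 ht.1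
        linarith
    _ = bdist Ω c := by ring

/-- Whitney neighbours have comparable distances to the boundary. -/
lemma neighbour_bounds {Ω : Set (Eu n)} {x c d : Eu n} (hc : 0 < bdist Ω c)
    (h1 : dist x c ≤ 11 / 100 * bdist Ω c) (h2 : dist x d ≤ bdist Ω d / 8) :
    bdist Ω d ≤ 127 / 100 * bdist Ω c ∧ bdist Ω c / 2 ≤ bdist Ω d ∧
      dist c d ≤ 11 / 100 * bdist Ω c + bdist Ω d / 8 := by
  have h3 := dist_triangle c x d
  rw [dist_comm c x] at h3
  have h4 := bdist_le_add Ω c d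
  have h5 := bdist_le_add Ω d c
  rw [dist_comm d c] at h5
  refine ⟨by linarith, by linarith, by linarith⟩

/-- The variational condition for families of cubes indexed by a finite set of centres. -/
lemma VarCondOn.sum_le {Ω : Set (Eu n)} {α p η lam : ℝ} {f : Eu n → ℝ}
    (h : VarCondOn Ω Ω α p η lam f) (A : Finset (Eu n)) (r : Eu n → ℝ) (x y : Eu n → Eu n)
    (hr : ∀ c ∈ A, 0 < r c) (hsub : ∀ c ∈ A, Metric.closedBall c (r c) ⊆ Ω)
    (hdisj : (A : Set (Eu n)).PairwiseDisjoint fun c => Metric.closedBall c (r c))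
    (hx : ∀ c ∈ A, Accessible Ω α (x c) ∧ dist (x c) c ≤ η * r c ∧
      QVisible Ω (Metric.closedBall c (r c)) (x c))
    (hy : ∀ c ∈ A, Accessible Ω α (y c) ∧ dist (y c) c ≤ η * r c ∧
      QVisible Ω (Metric.closedBall c (r c)) (y c)) :
    ∑ c ∈ A, |f (x c) - f (y c)| ^ p / (2 * r c) ^ (p - (n:ℝ)) ≤ lam := by
  have e := A.equivFin
  have hmem : ∀ i, (e.symm i : Eu n) ∈ A := fun i => (e.symm i).2
  have h1 := h A.card (fun i => e.symm i) (fun i => r (e.symm i)) (fun i => hr _ (hmem i))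
    (fun i => hsub _ (hmem i))
    (fun i j hij => hdisj (hmem i) (hmem j) fun he => hij (e.symm.injective (Subtype.ext he)))
    (fun i => x (e.symm i)) (fun i => y (e.symm i)) (fun i => hx _ (hmem i))
    (fun i => hy _ (hmem i))
  refine le_trans (le_of_eq ?_) h1
  rw [← Finset.sum_coe_sort A]
  exact (Equiv.sum_comp e.symm fun c : A =>
    |f (x c) - f (y c)| ^ p / (2 * r c) ^ (p - (n:ℝ))).symm

/-- Along a sequence `u` accessing `x`, the boundary points nearest to Whitney centres close to
`u k` approach `x` in `dBar`. -/
lemma dBar_nearest_tendsto {Ω : Set (Eu n)} (hΩ : IsOpen Ω) (hc : IsConnected Ω)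
    (hf : (frontier Ω).Nonempty) {α : ℝ} (hα0 : 0 < α) (hα1 : α ≤ 1) {x : Eu n}
    (hx : x ∈ frontier Ω) {u : ℕ → Eu n} (hu : AccessSeq Ω α x u) {δ : ℝ} (hδ : 0 < δ) :
    ∃ N, ∀ k ≥ N, ∀ c ∈ Ω, ∀ a ∈ frontier Ω, bdist Ω c = dist c a →
      dist (u k) c ≤ bdist Ω c / 8 → dBar Ω α x a < δ := by
  obtain ⟨hθ0, hθ1⟩ := theta_mem (η := 20) (by norm_num)
  set θ : ℝ := 1 - 1 / (2 * 20) with hθ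
  have hθα : 0 < 1 - θ ^ α := sub_pos.2 (Real.rpow_lt_one hθ0.le hθ1 hα0)
  set K : ℝ := 1 + 1 / (1 - θ ^ α) with hK
  have hK0 : 0 < K := by positivity
  -- `K (2 s)^α` is small for small `s`
  have hlim : Tendsto (fun k => K * (2 * dist (u k) x) ^ α) atTop (nhds 0) := by
    have h1 := ((tendsto_iff_dist_tendsto_zero.1 hu.2.1).const_mul 2).rpow_const
      (p := α) (Or.inr hα0.le)
    have h2 := h1.const_mul K
    rwa [mul_zero, Real.zero_rpow hα0.ne', mul_zero] at h2
  obtain ⟨N₁, hN₁⟩ := (hlim.eventually_lt_const (half_pos (half_pos hδ))).exists_forall_of_atTop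
  obtain ⟨N₂, hN₂⟩ := hu.2.2 (δ / 2) (half_pos hδ)
  refine ⟨max N₁ N₂, fun k hk c hcΩ a ha hac hkc => ?_⟩
  have hpos := bdist_pos hΩ hf hcΩ
  have hδc : bdist Ω c ≤ 2 * dist (u k) x := by
    have h1 := bdist_le_add Ω c (u k)
    rw [dist_comm c] at h1
    have h2 := bdist_le_dist hx (u k)
    linarith
  have hray : ∀ j, dSub Ω α c (ray θ a c j) ≤ (K - 1) * bdist Ω c ^ α := by
    intro j
    refine (ray_dSub_zero_le hΩ hc hf hα0 hα1 (r := bdist Ω c / 20) (η := 20) (by positivity)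
      (by norm_num) (qVisible_nearest hΩ hcΩ hac (by rw [dist_self]; linarith))
      (by rw [dist_comm, ← hac]; linarith) j).trans ?_
    rw [hK, add_sub_cancel_left, ← hθ, one_div_mul_eq_div]
    have : (bdist Ω c / 20) ^ α ≤ bdist Ω c ^ α :=
      Real.rpow_le_rpow (by positivity) (by linarith) hα0.le
    gcongr
  have hvis := qVisible_nearest (r := bdist Ω c / 20) hΩ hcΩ hac (by rw [dist_self]; linarith)
  have hacc := ray_accessSeq hΩ hc hf hα0 hα1 (r := bdist Ω c / 20) (η := 20) (by positivity)
      (by norm_num) hvis (by rw [dist_comm, ← hac]; linarith)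
  rw [← hθ] at hacc
  have hnear : dSub Ω α c (u k) ≤ bdist Ω c ^ α := by
    have hd : dist c (u k) ≤ bdist Ω c / 2 := by rw [dist_comm]; linarith
    refine (dSub_near_le hΩ hf hα1 hcΩ hd).trans ?_
    calc (bdist Ω c / 2) ^ (α - 1) * dist c (u k)
        ≤ (bdist Ω c / 2) ^ (α - 1) * (bdist Ω c / 2) := by gcongr
      _ = (bdist Ω c / 2) ^ α := by
          rw [← Real.rpow_add_one (by positivity), sub_add_cancel]
      _ ≤ bdist Ω c ^ α := Real.rpow_le_rpow (by positivity) (by linarith) hα0.le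
  have hKc : K * bdist Ω c ^ α < δ / 2 / 2 := by
    refine lt_of_le_of_lt ?_ (hN₁ k (le_of_max_le_left hk))
    have := Real.rpow_le_rpow hpos.le hδc hα0.le
    gcongr
  refine lt_of_le_of_lt (liminf_le_of_frequently_le (a := δ / 2 + δ / 2 / 2) ?_ ?_) (by linarith)
  · have ht : Tendsto (fun i => (u i, ray θ a c i)) atTop
        (((nhds x) ⊓ 𝓟 Ω) ×ˢ ((nhds a) ⊓ 𝓟 Ω)) := by
      refine Tendsto.prodMk (tendsto_inf.2 ⟨hu.2.1, ?_⟩) (tendsto_inf.2 ⟨hacc.2.1, ?_⟩)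
      · exact tendsto_principal.2 (Eventually.of_forall hu.1)
      · exact tendsto_principal.2 (Eventually.of_forall hacc.1)
    refine ht.frequently (Eventually.frequently ?_)
    filter_upwards [eventually_ge_atTop N₂] with i hi
    have t1 := dSub_triangle hΩ hc hf hα1 (hu.1 i) (hu.1 k) (hacc.1 i)
    have t2 := dSub_triangle hΩ hc hf hα1 (hu.1 k) hcΩ (hacc.1 i)
    rw [dSub_comm hΩ hf α (u k) c] at t2
    have t3 := hN₂ i hi k (le_of_max_le_right hk)
    have t4 : 0 ≤ ‖u i - u k‖ ^ α := by positivity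
    have t5 := hray i
    unfold dTil at t3
    rw [sub_one_mul] at t5
    have t6 : dSub Ω α (u i) (u k) < δ / 2 := lt_of_le_of_lt (le_add_of_nonneg_right t4) t3
    have t9 : dSub Ω α c (u k) + dSub Ω α c (ray θ a c i) < δ / 2 / 2 :=
      lt_of_le_of_lt ((add_le_add hnear t5).trans_eq (add_sub_cancel _ _)) hKc
    exact t1.trans (add_le_add t6.le (t2.trans t9.le))
  · exact isBoundedUnder_of ⟨0, fun q => dSub_nonneg Ω α q.1 q.2⟩

/-- A function on the accessible boundary that is continuous for `dBar` and satisfies the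
variational condition is the trace of its Whitney extension. -/
lemma exists_extension (n : ℕ) {p : ℝ} (hp1 : 1 < p) (hp : (n:ℝ) < p) :
    ∃ C : ℝ, 0 < C ∧ ∀ (Ω : Set (Eu n)), IsOpen Ω → IsConnected Ω → (frontier Ω).Nonempty →
      ∀ α η : ℝ, 41 ≤ η → 0 < α → α ≤ 1 → ∀ (f : Eu n → ℝ) (lam : ℝ), ContWrtDBar Ω α f →
      VarCondOn Ω Ω α p η lam f → ∃ F g, ContL1pRep Ω p F g ∧ TraceEq Ω α F f ∧
        ∫ z in Ω, ‖g z‖ ^ p ≤ C * lam := by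
  obtain ⟨K, hK, hext⟩ := exists_whitney_extension n
  have hp0 : 0 < p := by linarith
  refine ⟨(2 * K) ^ p, by positivity, fun Ω hΩ hc hf α η hη hα0 hα1 f lam hcon hvar => ?_⟩
  obtain ⟨S, hS⟩ := exists_whitney hΩ hf
  have hpos : ∀ c ∈ S, 0 < bdist Ω c := fun c hc => bdist_pos hΩ hf (hS.subset hc)
  choose a haf hac using fun c : Eu n => exists_nearest hf c
  have hacc : ∀ c ∈ S, Accessible Ω α (a c) := fun c hcS =>
    ⟨haf c, _, ray_accessSeq hΩ hc hf hα0 hα1 (r := bdist Ω c / 20) (η := 20)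
      (by have := hpos c hcS; positivity) (by norm_num)
      (qVisible_nearest hΩ (hS.subset hcS) (hac c) (by rw [dist_self]; linarith [hpos c hcS]))
      (by rw [dist_comm, ← hac]; linarith)⟩
  obtain ⟨F, hFs, hFv, hFd⟩ := hext Ω S hΩ hf hS (fun c => f (a c))
  -- for each centre, the neighbour with the largest jump
  have hj : ∀ c : Eu n, ∃ d : Eu n, c ∈ S → d ∈ S ∧
      (∃ x, dist x c ≤ 11 / 100 * bdist Ω c ∧ dist x d ≤ bdist Ω d / 8) ∧
      ∀ e ∈ S, (∃ x, dist x c ≤ 11 / 100 * bdist Ω c ∧ dist x e ≤ bdist Ω e / 8) →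
        |f (a e) - f (a c)| ≤ |f (a d) - f (a c)| := by
    intro c
    by_cases hcS : c ∈ S
    swap
    · exact ⟨c, fun h => absurd h hcS⟩
    have hcp := hpos c hcS
    set T : Set (Eu n) := {e | e ∈ S ∧
      ∃ x, dist x c ≤ 11 / 100 * bdist Ω c ∧ dist x e ≤ bdist Ω e / 8} with hT
    have hTf : T.Finite := (hS.finite hΩ hf c).subset fun e he => by
      obtain ⟨heS, x, h1, h2⟩ := he
      have := neighbour_bounds hcp h1 h2
      have h3 := bdist_le_add Ω c e
      exact ⟨heS, by linarith [this.2.2]⟩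
    have hcT : c ∈ T := ⟨hcS, c, by rw [dist_self]; positivity, by rw [dist_self]; positivity⟩
    obtain ⟨d, hd, hmax⟩ := hTf.toFinset.exists_max_image (fun e => |f (a e) - f (a c)|)
      ⟨c, hTf.mem_toFinset.2 hcT⟩
    have hdT := hTf.mem_toFinset.1 hd
    exact ⟨d, fun _ => ⟨hdT.1, hdT.2, fun e he hx => hmax e (hTf.mem_toFinset.2 ⟨he, hx⟩)⟩⟩
  choose j hj using hj
  set M : Eu n → ℝ := fun c => |f (a (j c)) - f (a c)| with hM
  have hM0 : ∀ c, 0 ≤ M c := fun c => abs_nonneg _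
  set g : Eu n → Eu n := fun x i => fderiv ℝ F x (Pi.single i 1) with hg
  have hgF : ∀ x, ‖g x‖ ≤ ‖fderiv ℝ F x‖ := by
    intro x
    rw [pi_norm_le_iff_of_nonneg (norm_nonneg _)]
    intro i
    refine ((fderiv ℝ F x).le_opNorm _).trans (le_of_eq ?_)
    rw [Pi.norm_single, norm_one, mul_one]
  have hgc : ContinuousOn g Ω := continuousOn_pi.2 fun i =>
    (hFs.continuousOn_fderiv_of_isOpen hΩ le_rfl).clm_apply continuousOn_const
  -- On the cube about `c` only values at neighbours enter, and these differ from `f (a c)` by at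
  -- most `M c`.
  have hloc : ∀ c ∈ S, ∀ x ∈ Metric.closedBall c (11 / 100 * bdist Ω c),
      ‖g x‖ ^ p ≤ (2 * K * M c / bdist Ω c) ^ p := by
    intro c hcS x hx
    have hcp := hpos c hcS
    have hxΩ := closedBall_bdist_subset hΩ hf (hS.subset hcS) (by norm_num) hx
    refine Real.rpow_le_rpow (norm_nonneg _) ((hgF x).trans ?_) hp0.le
    refine (hFd x hxΩ (f (a c)) (M c) (bdist Ω c / 2) (hM0 c) (by positivity)
      fun e he hxe => ⟨(hj c hcS).2.2 e he ⟨x, hx, hxe⟩,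
        (neighbour_bounds hcp hx hxe).2.1⟩).trans (le_of_eq ?_)
    field_simp
  have hsum : ∀ A : Finset (Eu n), (∀ c ∈ A, c ∈ S) →
      ∑ c ∈ A, (2 * K * M c / bdist Ω c) ^ p * (2 * (11 / 100 * bdist Ω c)) ^ n ≤
        (2 * K) ^ p * lam := by
    intro A hA
    have h1 := hvar.sum_le A (fun c => bdist Ω c / 20) (fun c => a (j c)) a
      (fun c hcA => by have := hpos c (hA c hcA); positivity)
      (fun c hcA => by
        have := closedBall_bdist_subset hΩ hf (hS.subset (hA c hcA)) (t := 1 / 20) (by norm_num)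
        rwa [one_div, inv_mul_eq_div] at this)
      (hS.disj.subset hA)
      (fun c hcA => by
        obtain ⟨hjS, ⟨x, hx1, hx2⟩, -⟩ := hj c (hA c hcA)
        have hcp := hpos c (hA c hcA)
        have hjp := hpos _ hjS
        obtain ⟨b1, b2, b3⟩ := neighbour_bounds hcp hx1 hx2
        refine ⟨hacc _ hjS, ?_, qVisible_nearest hΩ (hS.subset hjS) (hac _) ?_⟩
        -- The neighbour satisfies `dist (a (j c)) c ≤ bdist Ω c * 41 / 20`, so the dilation by `η` of
        -- `Q(c, bdist Ω c / 20)` contains `a (j c)`.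
        · have h1 := dist_triangle (a (j c)) (j c) c
          have h2 := hac (j c)
          rw [dist_comm] at h2
          rw [dist_comm (j c) c] at h1
          have h3 := mul_le_mul_of_nonneg_right hη (by positivity : 0 ≤ bdist Ω c / 20)
          linarith
        · have h4 := bdist_le_add Ω c (j c)
          linarith)
      (fun c hcA => by
        have hcp := hpos c (hA c hcA)
        refine ⟨hacc c (hA c hcA), ?_, qVisible_nearest hΩ (hS.subset (hA c hcA)) (hac c)
          (by rw [dist_self]; linarith)⟩
        have h3 := mul_le_mul_of_nonneg_right hη (by positivity : 0 ≤ bdist Ω c / 20)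
        rw [dist_comm, ← hac]
        linarith)
    refine le_trans ?_ (mul_le_mul_of_nonneg_left h1 (by positivity))
    rw [Finset.mul_sum]
    refine Finset.sum_le_sum fun c hcA => ?_
    have hcp := hpos c (hA c hcA)
    have e1 : (2 * K * M c / bdist Ω c) ^ p * bdist Ω c ^ n =
        (2 * K) ^ p * (M c ^ p / bdist Ω c ^ (p - (n:ℝ))) := by
      rw [Real.div_rpow (by have := hM0 c; positivity) hcp.le,
        Real.mul_rpow (by positivity) (hM0 c), Real.rpow_sub hcp, Real.rpow_natCast]
      have : bdist Ω c ^ p ≠ 0 := (Real.rpow_pos_of_pos hcp p).ne'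
      field_simp
    have e2 : (2 * (11 / 100 * bdist Ω c)) ^ n ≤ bdist Ω c ^ n :=
      pow_le_pow_left₀ (by positivity) (by linarith) n
    have e3 : (2 * (bdist Ω c / 20)) ^ (p - (n:ℝ)) ≤ bdist Ω c ^ (p - (n:ℝ)) :=
      Real.rpow_le_rpow (by positivity) (by linarith) (by linarith)
    have e4 : 0 ≤ 2 * K * M c / bdist Ω c := by have := hM0 c; positivity
    calc _ ≤ (2 * K * M c / bdist Ω c) ^ p * bdist Ω c ^ n := by gcongr
      _ = (2 * K) ^ p * (M c ^ p / bdist Ω c ^ (p - (n:ℝ))) := e1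
      _ ≤ (2 * K) ^ p * (M c ^ p / (2 * (bdist Ω c / 20)) ^ (p - (n:ℝ))) := by
          have := hM0 c
          gcongr
  obtain ⟨hint, hle⟩ := integrable_of_local_bounds hΩ (hS.countable hΩ hf)
    (ρ := fun c => 11 / 100 * bdist Ω c) (b := fun c => (2 * K * M c / bdist Ω c) ^ p)
    (h := fun x => ‖g x‖ ^ p) (fun c hcS => by have := hpos c hcS; positivity) hS.cover
    (hgc.norm.rpow_const fun _ _ => Or.inr hp0.le) (fun x => by positivity)
    (fun c hcS => by have := hM0 c; have := hpos c hcS; positivity) hloc hsum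
  refine ⟨F, g, ⟨hFs.continuousOn, hasWeakGradOn_of_contDiffOn hΩ hFs, hint⟩,
    fun x hx u hu => ?_, hle⟩
  -- Near `x` the extension averages values of `f` at points that are `dBar`-close to `x`.
  rw [Metric.tendsto_atTop]
  intro ε hε
  obtain ⟨δ, hδ, hδf⟩ := hcon x hx (ε / 2) (half_pos hε)
  obtain ⟨N, hN⟩ := dBar_nearest_tendsto hΩ hc hf hα0 hα1 hx.1 hu hδ
  refine ⟨N, fun k hk => ?_⟩
  rw [Real.dist_eq]
  refine (hFv (u k) (hu.1 k) (f x) (ε / 2) fun c hcS hkc => ?_).trans_lt (half_lt_self hε)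
  exact (hδf (a c) (hacc c hcS) (hN k hk c (hS.subset hcS) (a c) (haf c) (hac c) hkc)).le

/-! ### The trace criterion -/

/-- If `∂Ω = ∅` then no point is accessible, so only empty families enter the variational
condition. -/
lemma varCond_of_frontier_empty {Ω : Set (Eu n)} (hf : ¬ (frontier Ω).Nonempty) (α p η : ℝ)
    {lam : ℝ} (hlam : 0 ≤ lam) (f : Eu n → ℝ) : VarCondOn Ω Ω α p η lam f := by
  intro m c r _ _ _ x y hx _
  have : IsEmpty (Fin m) := ⟨fun i => hf ⟨x i, (hx i).1.1⟩⟩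
  simpa using hlam

lemma VarCondOn.mono {Ω S : Set (Eu n)} {α p η a b : ℝ} {f : Eu n → ℝ}
    (h : VarCondOn Ω S α p η a f) (hab : a ≤ b) : VarCondOn Ω S α p η b f :=
  fun m c r h1 h2 h3 x y h4 h5 => (h m c r h1 h2 h3 x y h4 h5).trans hab

lemma contL1pRep_zero (Ω : Set (Eu n)) {p : ℝ} (hp : p ≠ 0) :
    ContL1pRep Ω p (fun _ => 0) (fun _ => 0) := by
  refine ⟨continuousOn_const, ⟨?_, ?_, fun φ _ _ _ i => by simp⟩, ?_⟩
  · exact (locallyIntegrable_const (0:ℝ)).locallyIntegrableOn Ω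
  · exact (locallyIntegrable_const (0 : Eu n)).locallyIntegrableOn Ω
  · simp [Real.zero_rpow hp]

/-- Theorem 1.6, the variational criterion for `tr(L¹_p(Ω))`.
Let `Ω ⊆ ℝⁿ` be a domain satisfying condition `(A_α)`, `p ∈ (n,∞)`, `α = (p−n)/(p−1)`,
`η ≥ 41`.  A function `f : ∂_αΩ → ℝ` is the trace of a continuous `F ∈ L¹_p(Ω)` iff `f`
is continuous w.r.t. `d̄_{α,clΩ}` and satisfies the variational condition for some
`λ > 0`; moreover `inf ‖F‖_{L¹_p(Ω)} ∼ inf λ^{1/p}` with constants of equivalence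
depending only on `n`, `p` and `η`. -/
theorem statement0 (n : ℕ) (hn : 0 < n) (p η : ℝ) (hp : (n:ℝ) < p) (hη : 41 ≤ η) :
    ∃ C : ℝ, 1 ≤ C ∧
      ∀ (Ω : Set (Eu n)), IsOpen Ω → IsConnected Ω →
        ∀ α : ℝ, α = (p - n)/(p - 1) → CondA Ω α →
          ∀ f : Eu n → ℝ,
            -- the trace criterion
            ((∃ F g, ContL1pRep Ω p F g ∧ TraceEq Ω α F f) ↔
              (ContWrtDBar Ω α f ∧ ∃ lam : ℝ, 0 < lam ∧ VarCondOn Ω Ω α p η lam f)) ∧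
            -- `inf λ^{1/p} ≤ C · inf ‖F‖_{L¹_p(Ω)}`
            (∀ F g, ContL1pRep Ω p F g → TraceEq Ω α F f →
              ∃ lam : ℝ, 0 ≤ lam ∧ VarCondOn Ω Ω α p η lam f ∧
                lam ^ (1/p) ≤ C * (∫ z in Ω, ‖g z‖ ^ p) ^ (1/p)) ∧
            -- `inf ‖F‖_{L¹_p(Ω)} ≤ C · inf λ^{1/p}`
            (∀ lam : ℝ, 0 < lam → ContWrtDBar Ω α f → VarCondOn Ω Ω α p η lam f →
              ∃ F g, ContL1pRep Ω p F g ∧ TraceEq Ω α F f ∧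
                (∫ z in Ω, ‖g z‖ ^ p) ^ (1/p) ≤ C * lam ^ (1/p)) := by
  have hn1 : (1:ℝ) ≤ n := by exact_mod_cast hn
  have hp1 : 1 < p := by linarith
  have hp0 : 0 < p := by linarith
  obtain ⟨C₁, hC₁, hvar⟩ := varCond_of_rep n hp1 hp (show 1 ≤ η by linarith)
  obtain ⟨C₂, hC₂, hext⟩ := exists_extension n hp1 hp
  have hC₁' : 0 ≤ C₁ ^ (1/p) := by positivity
  have hC₂' : 0 ≤ C₂ ^ (1/p) := by positivity
  refine ⟨1 + C₁ ^ (1/p) + C₂ ^ (1/p), by linarith, fun Ω hΩ hc α hα _ f => ?_⟩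
  have hα0 : 0 < α := by rw [hα]; exact div_pos (by linarith) (by linarith)
  have hα1 : α ≤ 1 := by rw [hα, div_le_one (by linarith)]; linarith
  by_cases hf : (frontier Ω).Nonempty
  · have hJ : ∀ g : Eu n → Eu n, 0 ≤ ∫ z in Ω, ‖g z‖ ^ p := fun g =>
      integral_nonneg fun z => by positivity
    refine ⟨⟨?_, ?_⟩, ?_, ?_⟩
    · rintro ⟨F, g, hF, hT⟩
      refine ⟨contWrtDBar_of_rep hn hp hp1 hΩ hc hf hα hα0 hα1 hF hT,
        C₁ * (∫ z in Ω, ‖g z‖ ^ p) + 1, ?_,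
        (hvar Ω hΩ hc hf α hα0 hα1 f F g hF hT).mono (by linarith)⟩
      have := mul_nonneg hC₁.le (hJ g)
      linarith
    · rintro ⟨hcon, lam, -, hv⟩
      obtain ⟨F, g, hF, hT, -⟩ := hext Ω hΩ hc hf α η hη hα0 hα1 f lam hcon hv
      exact ⟨F, g, hF, hT⟩
    · intro F g hF hT
      refine ⟨_, mul_nonneg hC₁.le (hJ g), hvar Ω hΩ hc hf α hα0 hα1 f F g hF hT, ?_⟩
      rw [Real.mul_rpow hC₁.le (hJ g)]
      exact mul_le_mul_of_nonneg_right (by linarith) (Real.rpow_nonneg (hJ g) _)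
    · intro lam hlam hcon hv
      obtain ⟨F, g, hF, hT, hle⟩ := hext Ω hΩ hc hf α η hη hα0 hα1 f lam hcon hv
      refine ⟨F, g, hF, hT,
        (Real.rpow_le_rpow (hJ g) hle (by positivity)).trans ?_⟩
      rw [Real.mul_rpow hC₂.le hlam.le]
      exact mul_le_mul_of_nonneg_right (by linarith) (Real.rpow_nonneg hlam.le _)
  -- Without boundary points the trace is vacuous and the zero function extends every `f`.
  · have hnot : ∀ x, ¬ Accessible Ω α x := fun x hx => hf ⟨x, hx.1⟩
    have hT : TraceEq Ω α (fun _ => 0) f := fun x hx => absurd hx (hnot x)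
    have hF := contL1pRep_zero Ω hp0.ne'
    refine ⟨⟨fun _ => ⟨fun x hx => absurd hx (hnot x), 1, one_pos,
      varCond_of_frontier_empty hf α p η zero_le_one f⟩, fun _ => ⟨_, _, hF, hT⟩⟩, ?_, ?_⟩
    · intro F g _ _
      refine ⟨0, le_rfl, varCond_of_frontier_empty hf α p η le_rfl f, ?_⟩
      rw [Real.zero_rpow (by positivity)]
      have : 0 ≤ ∫ z in Ω, ‖g z‖ ^ p := integral_nonneg fun z => by positivity
      positivity
    · intro lam hlam _ _
      refine ⟨_, _, hF, hT, ?_⟩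
      have h0 : ∫ z in Ω, ‖(0 : Eu n)‖ ^ p = 0 := by simp [Real.zero_rpow hp0.ne']
      rw [h0, Real.zero_rpow (by positivity)]
      positivity
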